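/- arXiv:1204.5192 — 4 statements merged into one kernel-verified Lean document; each statement's English description precedes it below -/
import Mathlib

section
/- Let ℱ be a finite set of graphs containing at least one forest. Then there exists a constant c depending only on ℱ such that for every graph G, the minimum size of an ℱ-transversal of G is at most c times the maximum size of an ℱ-packing in G. -/
open SimpleGraph Set

/-- `H` is a minor of `G`: there is a model of `H` in `G` given by pairwise disjoint
branch sets, each inducing a connected subgraph, with edges of `H` realized by edges of `G`. -/
def HasMinor {V W : Type*} (G : SimpleGraph V) (H : SimpleGraph W) : Prop :=
  ∃ f : W → Set V,
    (∀ w, ((G.induce (f w)).Connected)) ∧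
    (Pairwise fun w w' => Disjoint (f w) (f w')) ∧
    ∀ ⦃w w'⦄, H.Adj w w' → ∃ a ∈ f w, ∃ b ∈ f w', G.Adj a b

/-- A path decomposition of the part of `G` inside the vertex set `A`, with bags `B 0, …, B (p-1)`. -/
def IsPathDecompOn {V : Type*} (G : SimpleGraph V) (A : Set V) (p : ℕ) (B : Fin p → Set V) : Prop :=
  (∀ i, B i ⊆ A) ∧
  (∀ v ∈ A, ∃ i, v ∈ B i) ∧
  (∀ ⦃u v⦄, G.Adj u v → u ∈ A → v ∈ A → ∃ i, u ∈ B i ∧ v ∈ B i) ∧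
  (∀ v (i j l : Fin p), i ≤ j → j ≤ l → v ∈ B i → v ∈ B l → v ∈ B j)

/-- The pathwidth of `G`: the least `t` such that `G` has a path decomposition of width `t`. -/
noncomputable def pathwidth {V : Type*} (G : SimpleGraph V) : ℕ :=
  sInf {t | ∃ p, ∃ B : Fin p → Set V, IsPathDecompOn G Set.univ p B ∧ ∀ i, (B i).ncard ≤ t + 1}

/-- A packing of `k` vertex-disjoint subgraphs of `G`, each containing `H` as a minor. -/
def IsHPacking {V W : Type*} (G : SimpleGraph V) (H : SimpleGraph W) (k : ℕ)
    (S : Fin k → Set V) : Prop :=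
  (Pairwise fun a b => Disjoint (S a) (S b)) ∧ ∀ a, HasMinor (G.induce (S a)) H

/-- `ν_H(G)`: the maximum size of an `H`-packing in `G`. -/
noncomputable def nuT {V W : Type*} (G : SimpleGraph V) (H : SimpleGraph W) : ℕ :=
  sSup {k | ∃ S : Fin k → Set V, IsHPacking G H k S}

/-- `τ_H(G)`: the minimum size of a vertex set `X` such that `G - X` has no `H`-minor. -/
noncomputable def tauT {V W : Type*} (G : SimpleGraph V) (H : SimpleGraph W) : ℕ :=
  sInf {n | ∃ X : Set V, X.ncard = n ∧ ¬ HasMinor (G.induce Xᶜ) H}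

/-- A packing of `k` vertex-disjoint subgraphs of `G`, each containing some member of the
family `F` as a minor. -/
def IsFPacking {V ι : Type*} {W : ι → Type*} (G : SimpleGraph V) (F : ∀ i, SimpleGraph (W i))
    (k : ℕ) (S : Fin k → Set V) : Prop :=
  (Pairwise fun a b => Disjoint (S a) (S b)) ∧ ∀ a, ∃ i, HasMinor (G.induce (S a)) (F i)

/-- `ν_F(G)`: the maximum size of an `F`-packing in `G`. -/
noncomputable def nuF {V ι : Type*} {W : ι → Type*} (G : SimpleGraph V)
    (F : ∀ i, SimpleGraph (W i)) : ℕ :=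
  sSup {k | ∃ S : Fin k → Set V, IsFPacking G F k S}

/-- `τ_F(G)`: the minimum size of a vertex set `X` such that `G - X` has no minor in `F`. -/
noncomputable def tauF {V ι : Type*} {W : ι → Type*} (G : SimpleGraph V)
    (F : ∀ i, SimpleGraph (W i)) : ℕ :=
  sInf {n | ∃ X : Set V, X.ncard = n ∧ ∀ i, ¬ HasMinor (G.induce Xᶜ) (F i)}

namespace EP

variable {V W : Type}

/-- Closure form of connectedness of a vertex set. -/
def Conn (G : SimpleGraph V) (S : Set V) : Prop :=
  S.Nonempty ∧ ∀ T ⊆ S, T.Nonempty → (∀ a ∈ T, ∀ b ∈ S, G.Adj a b → b ∈ T) → S ⊆ T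

theorem conn_iff (G : SimpleGraph V) (S : Set V) : (G.induce S).Connected ↔ Conn G S := by
  constructor
  · intro h
    refine ⟨Set.nonempty_coe_sort.1 h.nonempty, ?_⟩
    rintro T hTS ⟨a, ha⟩ hcl b hb
    obtain ⟨p⟩ := h.preconnected ⟨a, hTS ha⟩ ⟨b, hb⟩
    have key : ∀ (u v : S) (p : (G.induce S).Walk u v), u.1 ∈ T → v.1 ∈ T := by
      intro u v p
      induction p with
      | nil => exact id
      | @cons u v w huv p ih =>
        intro hu
        exact ih (hcl _ hu _ v.2 huv)
    exact key _ _ p ha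
  · rintro ⟨⟨a, ha⟩, h⟩
    have key : ∀ b (hb : b ∈ S), (G.induce S).Reachable ⟨a, ha⟩ ⟨b, hb⟩ := by
      have := h {b | ∃ hb : b ∈ S, (G.induce S).Reachable ⟨a, ha⟩ ⟨b, hb⟩}
        (fun b hb => hb.1) ⟨a, ha, Reachable.refl _⟩ ?_
      · intro b hb
        exact (this hb).2
      · rintro x ⟨hx, hr⟩ y hy hxy
        refine ⟨hy, hr.trans (Adj.reachable ?_)⟩
        exact hxy
    have : Nonempty S := ⟨⟨a, ha⟩⟩
    refine ⟨?_⟩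
    intro u v
    exact (key u.1 u.2).symm.trans (key v.1 v.2)

theorem conn_singleton (G : SimpleGraph V) (x : V) : Conn G {x} := by
  refine ⟨⟨x, rfl⟩, ?_⟩
  rintro T hT ⟨y, hy⟩ _
  have := hT hy
  simp only [Set.mem_singleton_iff] at this
  subst this
  simpa using hy

theorem conn_pair {G : SimpleGraph V} {x y : V} (h : G.Adj x y) : Conn G {x, y} :=
  (conn_iff G _).1 (induce_pair_connected_of_adj h)

theorem conn_union {G : SimpleGraph V} {S T : Set V} (hS : Conn G S) (hT : Conn G T)
    {x : V} (hx : x ∈ S) (hx' : x ∈ T) : Conn G (S ∪ T) :=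
  (conn_iff G _).1 (induce_union_connected ((conn_iff G _).2 hS).preconnected
    ((conn_iff G _).2 hT).preconnected ⟨x, hx, hx'⟩)

theorem conn_mono {G G' : SimpleGraph V} (hle : G ≤ G') {S : Set V} (hS : Conn G S) :
    Conn G' S :=
  ⟨hS.1, fun T hT hn hcl => hS.2 T hT hn (fun a ha b hb hab => hcl a ha b hb (hle hab))⟩

/-- A model in `G[S]` of the part of `H` induced by `D`. -/
def ModelOn (G : SimpleGraph V) (H : SimpleGraph W) (D : Set W) (S : Set V) : Prop :=
  ∃ f : W → Set V, (∀ w ∈ D, f w ⊆ S ∧ Conn G (f w)) ∧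
    (∀ w ∈ D, ∀ w' ∈ D, w ≠ w' → Disjoint (f w) (f w')) ∧
    (∀ w ∈ D, ∀ w' ∈ D, H.Adj w w' → ∃ a ∈ f w, ∃ b ∈ f w', G.Adj a b)

theorem ModelOn.mono {G : SimpleGraph V} {H : SimpleGraph W} {D D' : Set W} {S S' : Set V}
    (h : ModelOn G H D S) (hD : D' ⊆ D) (hS : S ⊆ S') : ModelOn G H D' S' := by
  obtain ⟨f, h1, h2, h3⟩ := h
  exact ⟨f, fun w hw => ⟨(h1 w (hD hw)).1.trans hS, (h1 w (hD hw)).2⟩,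
    fun w hw w' hw' => h2 w (hD hw) w' (hD hw'), fun w hw w' hw' => h3 w (hD hw) w' (hD hw')⟩

theorem conn_image (G : SimpleGraph V) (S : Set V) (T : Set S) :
    Conn (G.induce S) T ↔ Conn G (Subtype.val '' T) := by
  constructor
  · rintro ⟨hn, h⟩
    refine ⟨hn.image _, ?_⟩
    rintro T' hT' ⟨x, hx⟩ hcl
    have := h (Subtype.val ⁻¹' T') ?_ ?_ ?_
    · rintro _ ⟨y, hy, rfl⟩
      exact this hy
    · intro y hy
      obtain ⟨z, hz, hzy⟩ := hT' hy
      rwa [← Subtype.ext hzy]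
    · obtain ⟨z, hz, hzy⟩ := hT' hx
      exact ⟨z, by simpa [hzy] using hx⟩
    · intro a ha b hb hab
      exact hcl a ha b ⟨b, hb, rfl⟩ hab
  · rintro ⟨hn, h⟩
    refine ⟨by simpa using hn, ?_⟩
    rintro T' hT' hn' hcl
    have := h (Subtype.val '' T') (Set.image_mono hT') (hn'.image _) ?_
    · exact (Set.image_subset_image_iff Subtype.val_injective).1 this
    · rintro _ ⟨a, ha, rfl⟩ _ ⟨b, hb, rfl⟩ hab
      exact ⟨b, hcl a ha b hb hab, rfl⟩

theorem hasMinor_iff (G : SimpleGraph V) (H : SimpleGraph W) (S : Set V) :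
    HasMinor (G.induce S) H ↔ ModelOn G H Set.univ S := by
  constructor
  · rintro ⟨f, h1, h2, h3⟩
    refine ⟨fun w => Subtype.val '' f w, ?_, ?_, ?_⟩
    · intro w _
      exact ⟨by rintro _ ⟨x, _, rfl⟩; exact x.2, (conn_image G S _).1 ((conn_iff _ _).1 (h1 w))⟩
    · intro w _ w' _ hne
      exact (Set.disjoint_image_iff Subtype.val_injective).2 (h2 hne)
    · intro w _ w' _ hadj
      obtain ⟨a, ha, b, hb, hab⟩ := h3 hadj
      exact ⟨a, ⟨a, ha, rfl⟩, b, ⟨b, hb, rfl⟩, hab⟩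
  · rintro ⟨f, h1, h2, h3⟩
    have him : ∀ w, Subtype.val '' (Subtype.val ⁻¹' f w : Set S) = f w := by
      intro w
      rw [Subtype.image_preimage_coe]
      exact Set.inter_eq_right.2 (h1 w trivial).1
    refine ⟨fun w => Subtype.val ⁻¹' f w, ?_, ?_, ?_⟩
    · intro w
      rw [conn_iff, conn_image, him]
      exact (h1 w trivial).2
    · intro w w' hne
      exact (h2 w trivial w' trivial hne).preimage _
    · intro w w' hadj
      obtain ⟨a, ha, b, hb, hab⟩ := h3 w trivial w' trivial hadj
      exact ⟨⟨a, (h1 w trivial).1 ha⟩, ha, ⟨b, (h1 w' trivial).1 hb⟩, hb, hab⟩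

/-- A model of a connected component can be shrunk to a connected vertex set. -/
theorem ModelOn.exists_conn {G : SimpleGraph V} {H : SimpleGraph W} (c : H.ConnectedComponent)
    {S : Set V} (h : ModelOn G H c.supp S) : ∃ S' ⊆ S, Conn G S' ∧ ModelOn G H c.supp S' := by
  obtain ⟨f, h1, h2, h3⟩ := h
  refine ⟨⋃ w ∈ c.supp, f w, Set.iUnion₂_subset fun w hw => (h1 w hw).1, ⟨?_, ?_⟩, f, ?_, h2, h3⟩
  · obtain ⟨w, hw⟩ := c.nonempty_supp
    obtain ⟨x, hx⟩ := (h1 w hw).2.1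
    exact ⟨x, Set.mem_biUnion hw hx⟩
  · rintro T hT ⟨x, hx⟩ hcl
    have hstep : ∀ w ∈ c.supp, (∃ x ∈ f w, x ∈ T) → f w ⊆ T := by
      rintro w hw ⟨x, hxw, hxT⟩
      have := (h1 w hw).2.2 (f w ∩ T) Set.inter_subset_left ⟨x, hxw, hxT⟩ ?_
      · exact this.trans Set.inter_subset_right
      · rintro a ⟨_, haT⟩ b hb hab
        exact ⟨hb, hcl a haT b (Set.mem_biUnion hw hb) hab⟩
    obtain ⟨w, hw, hxw⟩ := Set.mem_iUnion₂.1 (hT hx)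
    have hwT := hstep w hw ⟨x, hxw, hx⟩
    have key : ∀ (u v : W) (p : H.Walk u v), u ∈ c.supp → f u ⊆ T → f v ⊆ T := by
      intro u v p
      induction p with
      | nil => intro _ h; exact h
      | @cons u v z huv p ih =>
        intro hu huT
        have hv : v ∈ c.supp := by
          rw [ConnectedComponent.mem_supp_iff] at hu ⊢
          rw [← hu]
          exact ConnectedComponent.sound huv.symm.reachable
        obtain ⟨a, ha, b, hb, hab⟩ := h3 u hu v hv huv
        exact ih hv (hstep v hv ⟨b, hb, hcl a (huT ha) b (Set.mem_biUnion hv hb) hab⟩)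
    refine Set.iUnion₂_subset fun v hv => ?_
    have : H.Reachable w v := by
      rw [ConnectedComponent.mem_supp_iff] at hw hv
      exact ConnectedComponent.exact (hw.trans hv.symm)
    obtain ⟨p⟩ := this
    exact key w v p hw hwT
  · intro w hw
    exact ⟨Set.subset_biUnion_of_mem hw, (h1 w hw).2⟩

/-- Models of all the components in disjoint sets give a model of the whole graph. -/
theorem ModelOn.glue {G : SimpleGraph V} {H : SimpleGraph W} (g : H.ConnectedComponent → Set V)
    (hd : ∀ c c', c ≠ c' → Disjoint (g c) (g c')) (h : ∀ c, ModelOn G H c.supp (g c)) :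
    ModelOn G H Set.univ (⋃ c, g c) := by
  choose f h1 h2 h3 using h
  have hm : ∀ w, w ∈ (H.connectedComponentMk w).supp := fun w => rfl
  refine ⟨fun w => f (H.connectedComponentMk w) w, ?_, ?_, ?_⟩
  · intro w _
    exact ⟨(h1 _ w (hm w)).1.trans (Set.subset_iUnion g _), (h1 _ w (hm w)).2⟩
  · intro w _ w' _ hne
    by_cases hc : H.connectedComponentMk w = H.connectedComponentMk w'
    · have := h2 (H.connectedComponentMk w) w (hm w) w' hc.symm hne
      show Disjoint (f (H.connectedComponentMk w) w) (f (H.connectedComponentMk w') w')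
      rw [← hc]
      exact this
    · exact (hd _ _ hc).mono (h1 _ w (hm w)).1 (h1 _ w' (hm w')).1
  · intro w _ w' _ hadj
    have hc : H.connectedComponentMk w = H.connectedComponentMk w' :=
      ConnectedComponent.sound hadj.reachable
    have := h3 (H.connectedComponentMk w) w (hm w) w' hc.symm hadj
    show ∃ a ∈ _, ∃ b ∈ f (H.connectedComponentMk w') w', _
    rw [← hc]
    exact this

/-- Every nonempty set of vertices of a finite forest has a vertex with at most one neighbour
in the set. -/
theorem exists_leaf [Finite W] (H : SimpleGraph W) (hH : H.IsAcyclic) (D : Set W)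
    (hD : D.Nonempty) :
    ∃ v ∈ D, ∀ a ∈ D, ∀ b ∈ D, H.Adj v a → H.Adj v b → a = b := by
  classical
  obtain ⟨r, hr⟩ := hD
  have hac := hH.induce D
  have := Fintype.ofFinite D
  let L : Set ℕ := {n | ∃ (v : D) (p : (H.induce D).Walk ⟨r, hr⟩ v), p.IsPath ∧ p.length = n}
  have hL : BddAbove L := by
    refine ⟨Fintype.card D, ?_⟩
    rintro n ⟨v, p, hp, rfl⟩
    exact hp.length_lt.le
  have hne : L.Nonempty := ⟨0, _, Walk.nil, Walk.IsPath.nil, rfl⟩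
  obtain ⟨v, p, hp, hlen⟩ := Nat.sSup_mem hne hL
  have hall : ∀ a (ha : a ∈ D), H.Adj v a → (⟨a, ha⟩ : D) = p.penultimate := by
    intro a ha hva
    have hva' : (H.induce D).Adj v ⟨a, ha⟩ := hva
    apply hac.eq_penultimate_of_adj_end hp hva'
    by_contra hns
    have : p.length + 1 ∈ L := ⟨_, p.concat hva', hp.concat hns hva', by simp⟩
    have := le_csSup hL this
    omega
  refine ⟨v, v.2, fun a ha b hb hva hvb => ?_⟩
  have := (hall a ha hva).trans (hall b hb hvb).symm
  simpa using this

/-- Inner vertex boundary of `A` relative to `U`. -/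
def bd (G : SimpleGraph V) (U A : Set V) : Set V := {v | v ∈ A ∧ ∃ u ∈ U, u ∉ A ∧ G.Adj v u}

theorem bd_submod [Finite V] (G : SimpleGraph V) (U A B : Set V) :
    (bd G U (A ∩ B)).ncard + (bd G U (A ∪ B)).ncard ≤ (bd G U A).ncard + (bd G U B).ncard := by
  rw [← Set.ncard_union_add_ncard_inter (bd G U (A ∩ B)),
    ← Set.ncard_union_add_ncard_inter (bd G U A)]
  apply Nat.add_le_add
  · apply Set.ncard_le_ncard _ (Set.toFinite _)
    rintro v (⟨⟨h1, h2⟩, u, hu, hn, ha⟩ | ⟨h1 | h1, u, hu, hn, ha⟩)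
    · by_cases huA : u ∈ A
      · exact Or.inr ⟨h2, u, hu, fun h => hn ⟨huA, h⟩, ha⟩
      · exact Or.inl ⟨h1, u, hu, huA, ha⟩
    · exact Or.inl ⟨h1, u, hu, fun h => hn (Or.inl h), ha⟩
    · exact Or.inr ⟨h1, u, hu, fun h => hn (Or.inr h), ha⟩
  · apply Set.ncard_le_ncard _ (Set.toFinite _)
    rintro v ⟨⟨⟨h1, h2⟩, _⟩, ⟨_, u, hu, hn, ha⟩⟩
    exact ⟨⟨h1, u, hu, fun h => hn (Or.inl h), ha⟩, ⟨h2, u, hu, fun h => hn (Or.inr h), ha⟩⟩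

theorem bd_insert_subset (G : SimpleGraph V) (U A : Set V) (y : V) :
    bd G U (insert y A) ⊆ insert y (bd G U A) := by
  rintro v ⟨h1 | h1, u, hu, hn, ha⟩
  · exact Or.inl h1
  · exact Or.inr ⟨h1, u, hu, fun h => hn (Or.inr h), ha⟩

/-- `A` can be built inside `U` one vertex at a time, keeping the boundary of size at most `w`. -/
inductive Good (G : SimpleGraph V) (U : Set V) (w : ℕ) : Set V → Prop
  | empty : Good G U w ∅
  | step (A : Set V) (y : V) : Good G U w A → y ∈ U → (bd G U (insert y A)).ncard ≤ w →
      Good G U w (insert y A)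

theorem Good.subset {G : SimpleGraph V} {U : Set V} {w : ℕ} {A : Set V} (h : Good G U w A) :
    A ⊆ U := by
  induction h with
  | empty => exact Set.empty_subset _
  | step A y _ hy _ ih => exact Set.insert_subset hy ih

theorem Good.card {G : SimpleGraph V} {U : Set V} {w : ℕ} {A : Set V} (h : Good G U w A) :
    (bd G U A).ncard ≤ w := by
  cases h with
  | empty =>
    have : bd G U ∅ = ∅ := by ext v; simp [bd]
    simp [this]
  | step A y _ hy h => exact h

/-- The first moment along a good chain at which `P` holds. -/
theorem Good.first {G : SimpleGraph V} {U : Set V} {w : ℕ} {A : Set V} (h : Good G U w A)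
    (P : Set V → Prop) (h0 : ¬ P ∅) (h1 : P A) :
    ∃ B y, Good G U w (insert y B) ∧ ¬ P B ∧ P (insert y B) := by
  induction h with
  | empty => exact absurd h1 h0
  | step A y hA hy hc ih =>
    by_cases hP : P A
    · exact ih hP
    · exact ⟨A, y, Good.step A y hA hy hc, hP, h1⟩

theorem Good.restrict [Finite V] {G : SimpleGraph V} {U : Set V} {w : ℕ} {A : Set V}
    (h : Good G U w A) {U' : Set V} (hU : U' ⊆ U) : Good G U' w (A ∩ U') := by
  induction h with
  | empty => rw [Set.empty_inter]; exact Good.empty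
  | step A y hA hy hc ih =>
    by_cases hyU : y ∈ U'
    · rw [Set.insert_inter_of_mem hyU]
      refine Good.step _ _ ih hyU (le_trans ?_ hc)
      apply Set.ncard_le_ncard _ (Set.toFinite _)
      rintro v ⟨h1, u, hu, hn, ha⟩
      refine ⟨?_, u, hU hu, ?_, ha⟩
      · rcases h1 with h1 | h1
        · exact Or.inl h1
        · exact Or.inr h1.1
      · rintro (h | h)
        · exact hn (Or.inl h)
        · exact hn (Or.inr ⟨h, hu⟩)
    · rwa [Set.insert_inter_of_notMem hyU]

/-- Goodness passes to subsets that minimise the boundary. -/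
theorem Good.transfer [Finite V] {G : SimpleGraph V} {U : Set V} {w : ℕ} {A B : Set V}
    (h : Good G U w B) (hAB : A ⊆ B)
    (hmin : ∀ C, A ⊆ C → C ⊆ B → (bd G U A).ncard ≤ (bd G U C).ncard) : Good G U w A := by
  have key : ∀ B', Good G U w B' → B' ⊆ B → Good G U w (A ∩ B') := by
    intro B' h'
    induction h' with
    | empty => intro _; rw [Set.inter_empty]; exact Good.empty
    | step C y hC hy hc ih =>
      intro hCB
      have ihC := ih ((Set.subset_insert _ _).trans hCB)
      by_cases hyA : y ∈ A
      · rw [Set.inter_insert_of_mem hyA]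
        refine Good.step _ _ ihC hy (le_trans ?_ hc)
        rw [← Set.inter_insert_of_mem hyA]
        have h1 := bd_submod G U A (insert y C)
        have h2 := hmin (A ∪ insert y C) Set.subset_union_left (Set.union_subset hAB hCB)
        omega
      · rwa [Set.inter_insert_of_notMem hyA]
  have := key B h subset_rfl
  rwa [Set.inter_eq_left.2 hAB] at this

/-- Appending a good chain of a part that is not joined to `A₀`. -/
theorem Good.append [Finite V] {G : SimpleGraph V} {U : Set V} {w : ℕ} {A₀ : Set V}
    (h : Good G U w A₀) (hb : bd G U A₀ = ∅) {C : Set V} (hC : Good G (U \ A₀) w C) :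
    Good G U w (A₀ ∪ C) := by
  induction hC with
  | empty => rwa [Set.union_empty]
  | step C y _ hy hc ih =>
    rw [Set.union_insert]
    refine Good.step _ _ ih hy.1 (le_trans ?_ hc)
    apply Set.ncard_le_ncard _ (Set.toFinite _)
    rintro v ⟨h1, u, hu, hn, ha⟩
    have hu' : u ∈ U \ A₀ := ⟨hu, fun h => hn (Or.inr (Or.inl h))⟩
    have hn' : u ∉ insert y C := by
      rintro (h | h)
      · exact hn (Or.inl h)
      · exact hn (Or.inr (Or.inr h))
    rcases h1 with h1 | h1 | h1
    · exact ⟨Or.inl h1, u, hu', hn', ha⟩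
    · exfalso
      have : v ∈ bd G U A₀ := ⟨h1, u, hu, hu'.2, ha⟩
      rw [hb] at this
      exact this
    · exact ⟨Or.inr h1, u, hu', hn', ha⟩

/-- A connected set avoiding the boundary of `A` is inside or outside of `A`. -/
theorem conn_avoid {G : SimpleGraph V} {U A S : Set V} (hS : Conn G S) (hSU : S ⊆ U)
    (hb : Disjoint S (bd G U A)) : S ⊆ A ∨ Disjoint S A := by
  by_cases h : (S ∩ A).Nonempty
  · left
    have := hS.2 (S ∩ A) Set.inter_subset_left h ?_
    · exact this.trans Set.inter_subset_right
    · rintro a ⟨haS, haA⟩ b hb' hab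
      refine ⟨hb', ?_⟩
      by_contra hbA
      exact Set.disjoint_left.1 hb haS ⟨haA, b, hSU hb', hbA, hab⟩
  · right
    exact Set.disjoint_iff_inter_eq_empty.2 (Set.not_nonempty_iff_eq_empty.1 h)

/-- Disjoint connected sets linking the boundary of `A` to the boundary of `B`. -/
def Linked (G : SimpleGraph V) (U A B : Set V) : Prop :=
  ∃ P : V → Set V, (∀ x ∈ bd G U A, x ∈ P x ∧ P x ⊆ insert x (B \ A) ∧ Conn G (P x) ∧
      ∃ z ∈ P x, z ∈ bd G U B) ∧
    ∀ x ∈ bd G U A, ∀ x' ∈ bd G U A, x ≠ x' → Disjoint (P x) (P x')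

theorem Linked.trans {G : SimpleGraph V} {U A C B : Set V} (hAC : A ⊆ C) (hCB : C ⊆ B)
    (h1 : Linked G U A C) (h2 : Linked G U C B) : Linked G U A B := by
  classical
  obtain ⟨P, hP, hPd⟩ := h1
  obtain ⟨Q, hQ, hQd⟩ := h2
  have : ∀ x, ∃ z, x ∈ bd G U A → z ∈ P x ∧ z ∈ bd G U C := by
    intro x
    by_cases hx : x ∈ bd G U A
    · obtain ⟨z, hz⟩ := (hP x hx).2.2.2
      exact ⟨z, fun _ => hz⟩
    · exact ⟨x, fun h => absurd h hx⟩
  choose e he using this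
  have hPC : ∀ x ∈ bd G U A, P x ⊆ C := by
    intro x hx y hy
    rcases (hP x hx).2.1 hy with rfl | h
    · exact hAC hx.1
    · exact h.1
  have hPQ : ∀ x ∈ bd G U A, ∀ x' ∈ bd G U A, x ≠ x' → Disjoint (P x) (Q (e x')) := by
    intro x hx x' hx' hne
    rw [Set.disjoint_left]
    intro y hy hy'
    rcases (hQ _ (he x' hx').2).2.1 hy' with rfl | h
    · exact Set.disjoint_left.1 (hPd x hx x' hx' hne) hy (he x' hx').1
    · exact h.2 (hPC x hx hy)
  refine ⟨fun x => P x ∪ Q (e x), ?_, ?_⟩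
  · intro x hx
    obtain ⟨p1, p2, p3, -⟩ := hP x hx
    obtain ⟨q1, q2, q3, z, hz⟩ := hQ _ (he x hx).2
    refine ⟨Or.inl p1, ?_, conn_union p3 q3 (he x hx).1 q1, z, Or.inr hz.1, hz.2⟩
    rintro y (hy | hy)
    · rcases p2 hy with h | h
      · exact Or.inl h
      · exact Or.inr ⟨hCB h.1, h.2⟩
    · rcases q2 hy with rfl | h
      · rcases p2 (he x hx).1 with h | h
        · exact Or.inl h
        · exact Or.inr ⟨hCB h.1, h.2⟩
      · exact Or.inr ⟨h.1, fun h' => h.2 (hAC h')⟩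
  · intro x hx x' hx' hne
    refine Set.disjoint_union_left.2 ⟨Set.disjoint_union_right.2 ⟨hPd x hx x' hx' hne,
      hPQ x hx x' hx' hne⟩, Set.disjoint_union_right.2 ⟨(hPQ x' hx' x hx hne.symm).symm, ?_⟩⟩
    refine hQd _ (he x hx).2 _ (he x' hx').2 ?_
    intro h
    exact Set.disjoint_left.1 (hPd x hx x' hx' hne) (he x hx).1 (h ▸ (he x' hx').1)

/-- Menger's theorem in boundary form. -/
theorem menger [Finite V] : ∀ (n : ℕ) (G : SimpleGraph V) (U A B : Set V),
    G.edgeSet.ncard + (B \ A).ncard = n → A ⊆ B →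
    (∀ C, A ⊆ C → C ⊆ B → (bd G U A).ncard ≤ (bd G U C).ncard) → Linked G U A B := by
  classical
  intro n
  induction n using Nat.strong_induction_on with
  | _ n ih =>
  intro G U A B hn hAB hmin
  by_cases hmid : ∃ C, A ⊆ C ∧ C ⊆ B ∧ C ≠ A ∧ C ≠ B ∧ (bd G U C).ncard ≤ (bd G U A).ncard
  · obtain ⟨C, hAC, hCB, hCA, hCB', hle⟩ := hmid
    have hlt1 : (C \ A).ncard < (B \ A).ncard := by
      apply Set.ncard_lt_ncard _ (Set.toFinite _)
      refine ⟨Set.sdiff_subset_sdiff_left hCB, fun h => hCB' (hCB.antisymm ?_)⟩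
      intro x hx
      by_cases hxA : x ∈ A
      · exact hAC hxA
      · exact (h ⟨hx, hxA⟩).1
    have hlt2 : (B \ C).ncard < (B \ A).ncard := by
      apply Set.ncard_lt_ncard _ (Set.toFinite _)
      refine ⟨Set.sdiff_subset_sdiff_right hAC, fun h => hCA (Set.Subset.antisymm ?_ hAC)⟩
      intro x hx
      by_contra hxA
      exact (h ⟨hCB hx, hxA⟩).2 hx
    exact Linked.trans hAC hCB
      (ih _ (by omega) G U A C rfl hAC fun D h1 h2 => hmin D h1 (h2.trans hCB))
      (ih _ (by omega) G U C B rfl hCB fun D h1 h2 => hle.trans (hmin D (hAC.trans h1) h2))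
  by_cases hsub : bd G U A ⊆ bd G U B
  · refine ⟨fun x => {x}, ?_, ?_⟩
    · intro x hx
      exact ⟨rfl, by simp, conn_singleton G x, x, rfl, hsub hx⟩
    · intro x _ x' _ hne
      simpa using hne
  obtain ⟨x, hxA, hxB⟩ := Set.not_subset.1 hsub
  obtain ⟨hx, y, hyU, hyA, hxy⟩ := id hxA
  have hyB : y ∈ B := by
    by_contra h
    exact hxB ⟨hAB hx, y, hyU, h, hxy⟩
  have hxney : x ≠ y := hxy.ne
  by_cases h2 : ∃ y' ∈ U, y' ∉ A ∧ G.Adj x y' ∧ y' ≠ y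
  · obtain ⟨y', hy'U, hy'A, hxy', hyy'⟩ := h2
    let G' := G.deleteEdges {s(x, y)}
    have hG' : ∀ a b, G'.Adj a b ↔ G.Adj a b ∧ s(a, b) ≠ s(x, y) := by
      intro a b
      simp [G', deleteEdges_adj]
    have hle : G' ≤ G := deleteEdges_le _
    have hE : G'.edgeSet.ncard < G.edgeSet.ncard := by
      apply Set.ncard_lt_ncard _ (Set.toFinite _)
      refine ⟨edgeSet_mono hle, fun h => ?_⟩
      have : s(x, y) ∈ G'.edgeSet := h hxy
      rw [mem_edgeSet, hG'] at this
      exact this.2 rfl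
    have hsub' : ∀ C, bd G' U C ⊆ bd G U C := by
      rintro C v ⟨h1, u, hu, hn, ha⟩
      exact ⟨h1, u, hu, hn, hle ha⟩
    have hA' : bd G' U A = bd G U A := by
      apply (hsub' A).antisymm
      rintro v ⟨h1, u, hu, hn, ha⟩
      by_cases hvx : v = x
      · subst hvx
        refine ⟨h1, y', hy'U, hy'A, (hG' _ _).2 ⟨hxy', ?_⟩⟩
        intro h
        rcases Sym2.eq_iff.1 h with h | h
        · exact hyy' h.2
        · exact hxney h.1
      · refine ⟨h1, u, hu, hn, (hG' _ _).2 ⟨ha, ?_⟩⟩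
        intro h
        rcases Sym2.eq_iff.1 h with h | h
        · exact hvx h.1
        · exact hyA (h.1 ▸ h1)
    have hC' : ∀ C, A ⊆ C → bd G U C ⊆ insert x (bd G' U C) := by
      rintro C hAC v ⟨h1, u, hu, hn, ha⟩
      by_cases hvx : v = x
      · exact Or.inl hvx
      · refine Or.inr ⟨h1, u, hu, hn, (hG' _ _).2 ⟨ha, ?_⟩⟩
        intro h
        rcases Sym2.eq_iff.1 h with h | h
        · exact hvx h.1
        · exact hn (hAC (h.2 ▸ hx))
    have hB' : bd G U B ⊆ bd G' U B := by
      intro v hv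
      rcases hC' B hAB hv with rfl | h
      · exact absurd hv hxB
      · exact h
    obtain ⟨P, hP, hPd⟩ := ih _ (by omega : G'.edgeSet.ncard + (B \ A).ncard < n) G' U A B rfl hAB (by
      intro C hAC hCB
      rw [hA']
      by_cases hCA : C = A
      · rw [hCA, hA']
      by_cases hCB' : C = B
      · rw [hCB']
        exact (hmin B hAB subset_rfl).trans (Set.ncard_le_ncard hB' (Set.toFinite _))
      have h1 : ¬ (bd G U C).ncard ≤ (bd G U A).ncard := fun h =>
        hmid ⟨C, hAC, hCB, hCA, hCB', h⟩
      have h2 := Set.ncard_le_ncard (hC' C hAC) (Set.toFinite _)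
      have h3 := Set.ncard_insert_le x (bd G' U C)
      omega)
    rw [hA'] at hP hPd
    refine ⟨P, fun z hz => ?_, hPd⟩
    obtain ⟨p1, p2, p3, t, ht, ht'⟩ := hP z hz
    exact ⟨p1, p2, conn_mono hle p3, t, ht, hsub' B ht'⟩
  · have honly : ∀ u ∈ U, u ∉ A → G.Adj x u → u = y := by
      intro u hu huA hxu
      by_contra h
      exact h2 ⟨u, hu, huA, hxu, h⟩
    have hsubC : bd G U (insert y A) ⊆ insert y (bd G U A \ {x}) := by
      intro v hv
      rcases bd_insert_subset G U A y hv with h | h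
      · exact Or.inl h
      · refine Or.inr ⟨h, ?_⟩
        rintro rfl
        obtain ⟨_, u, hu, hn, ha⟩ := hv
        exact hn (Or.inl (honly u hu (fun h => hn (Or.inr h)) ha))
    have hcard : (insert y (bd G U A \ {x})).ncard ≤ (bd G U A).ncard := by
      have h1 := Set.ncard_insert_le y (bd G U A \ {x})
      have h2 := Set.ncard_sdiff_singleton_add_one hxA (Set.toFinite _)
      omega
    have hyB' : insert y A ⊆ B := Set.insert_subset hyB hAB
    have hB : insert y A = B := by
      by_contra hne
      refine hmid ⟨insert y A, Set.subset_insert _ _, hyB', ?_, hne, ?_⟩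
      · intro h
        exact hyA (h ▸ Set.mem_insert _ _)
      · exact (Set.ncard_le_ncard hsubC (Set.toFinite _)).trans hcard
    have heq : bd G U B = insert y (bd G U A \ {x}) := by
      rw [hB] at hsubC
      exact Set.eq_of_subset_of_ncard_le hsubC (hcard.trans (hmin B hAB subset_rfl))
        (Set.toFinite _)
    refine ⟨fun z => if z = x then {x, y} else {z}, ?_, ?_⟩
    · intro z hz
      by_cases hzx : z = x
      · subst hzx
        simp only [if_true]
        refine ⟨by simp, ?_, conn_pair hxy, y, by simp, by rw [heq]; simp⟩
        rintro t (rfl | rfl)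
        · exact Or.inl rfl
        · exact Or.inr ⟨hyB, hyA⟩
      · simp only [hzx, if_false]
        exact ⟨rfl, by simp, conn_singleton G z, z, rfl, by rw [heq]; exact Or.inr ⟨hz, hzx⟩⟩
    · intro z hz z' hz' hne
      have hzy : z ≠ y := fun h => hyA (h ▸ hz.1)
      have hzy' : z' ≠ y := fun h => hyA (h ▸ hz'.1)
      by_cases hzx : z = x
      · subst hzx
        simp only [if_true, hne.symm, if_false]
        simp [hne.symm, hzy']
      · by_cases hzx' : z' = x
        · subst hzx'
          simp only [if_true, hne, if_false]
          simp [hne, hzy]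
        · simp only [hzx, hzx', if_false]
          simpa using hne

/-- Stage of Diestel's proof: a partial model on `D`, rooted at the boundary of a maximal
good set. -/
def Stage (G : SimpleGraph V) (H : SimpleGraph W) (U : Set V) (w : ℕ) (D : Set W) : Prop :=
  ∃ A, Good G U w A ∧ (bd G U A).ncard = D.ncard ∧
    (∀ A', Good G U w A' → A ⊆ A' → (bd G U A').ncard ≤ D.ncard → A' = A) ∧
    ∃ (f : W → Set V) (b : W → V),
      (∀ u ∈ D, f u ⊆ A ∧ Conn G (f u) ∧ b u ∈ f u ∧ b u ∈ bd G U A) ∧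
      (∀ u ∈ D, ∀ u' ∈ D, u ≠ u' → Disjoint (f u) (f u')) ∧
      (∀ u ∈ D, ∀ u' ∈ D, H.Adj u u' → ∃ a ∈ f u, ∃ b ∈ f u', G.Adj a b)

/-- A maximal good set above a given one. -/
theorem exists_max_good [Finite V] {G : SimpleGraph V} {U : Set V} {w m : ℕ} {A : Set V}
    (hA : Good G U w A) (hc : (bd G U A).ncard ≤ m) :
    ∃ B, A ⊆ B ∧ Good G U w B ∧ (bd G U B).ncard ≤ m ∧
      ∀ A', Good G U w A' → B ⊆ A' → (bd G U A').ncard ≤ m → A' = B := by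
  obtain ⟨B, hAB, hB⟩ := (Set.toFinite {B | Good G U w B ∧ (bd G U B).ncard ≤ m}).exists_le_maximal
    (show A ∈ {B | Good G U w B ∧ (bd G U B).ncard ≤ m} from ⟨hA, hc⟩)
  refine ⟨B, hAB, hB.1.1, hB.1.2, fun A' h1 h2 h3 => ?_⟩
  exact (hB.2 ⟨h1, h3⟩ h2).antisymm h2

theorem stage_step [Finite V] [Finite W] {G : SimpleGraph V} {H : SimpleGraph W} {U : Set V} {w : ℕ}
    (hU : ¬ Good G U w U) {D : Set W} {v : W} (hv : v ∉ D) (hw : D.ncard + 1 ≤ w)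
    (hleaf : ∀ a ∈ D, ∀ b ∈ D, H.Adj v a → H.Adj v b → a = b)
    (h : Stage G H U w D) : Stage G H U w (insert v D) := by
  classical
  obtain ⟨A, hA, hcard, hmax, f, b, h1, h2, h3⟩ := h
  have hAU : A ≠ U := fun h => hU (h ▸ hA)
  have hDc : (insert v D).ncard = D.ncard + 1 := Set.ncard_insert_of_notMem hv (Set.toFinite _)
  -- choose the new vertex
  have hy : ∃ y ∈ U, y ∉ A ∧ ∀ u ∈ D, H.Adj v u → G.Adj (b u) y := by
    by_cases hn : ∃ u ∈ D, H.Adj v u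
    · obtain ⟨u, hu, hvu⟩ := hn
      obtain ⟨_, _, _, _, y, hyU, hyA, hby⟩ := h1 u hu
      refine ⟨y, hyU, hyA, fun u' hu' hvu' => ?_⟩
      rw [hleaf u' hu' u hu hvu' hvu]
      exact hby
    · have : ∃ y ∈ U, y ∉ A := by
        by_contra hcon
        push Not at hcon
        exact hAU (hA.subset.antisymm hcon)
      obtain ⟨y, hyU, hyA⟩ := this
      exact ⟨y, hyU, hyA, fun u hu hvu => absurd ⟨u, hu, hvu⟩ hn⟩
  obtain ⟨y, hyU, hyA, hyb⟩ := hy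
  have hle1 : (bd G U (insert y A)).ncard ≤ D.ncard + 1 := by
    have h1 := Set.ncard_le_ncard (bd_insert_subset G U A y) (Set.toFinite _)
    have h2 := Set.ncard_insert_le y (bd G U A)
    omega
  have hA1 : Good G U w (insert y A) := Good.step A y hA hyU (hle1.trans hw)
  have hneA : ∀ C, insert y A ⊆ C → C ≠ A := by
    rintro C hC rfl
    exact hyA (hC (Set.mem_insert _ _))
  obtain ⟨A', hAA', hA', hA'c, hA'max⟩ := exists_max_good hA1 hle1
  -- every set in between has a large boundary
  have hbet : ∀ C, insert y A ⊆ C → C ⊆ A' → D.ncard + 1 ≤ (bd G U C).ncard := by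
    intro C hC1 hC2
    obtain ⟨M, hM, hMmin⟩ := Set.exists_min_image {C | insert y A ⊆ C ∧ C ⊆ A'}
      (fun C => (bd G U C).ncard) (Set.toFinite _) ⟨C, hC1, hC2⟩
    refine le_trans ?_ (hMmin C ⟨hC1, hC2⟩)
    by_contra hlt
    have hMg : Good G U w M := hA'.transfer hM.2 fun C' hC1' hC2' =>
      hMmin C' ⟨hM.1.trans hC1', hC2'⟩
    exact hneA M hM.1 (hmax M hMg ((Set.subset_insert _ _).trans hM.1) (by omega))
  have hbd1 : bd G U (insert y A) = insert y (bd G U A) := by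
    apply Set.eq_of_subset_of_ncard_le (bd_insert_subset G U A y) _ (Set.toFinite _)
    have h1 := hbet _ subset_rfl hAA'
    have h2 := Set.ncard_insert_le y (bd G U A)
    omega
  obtain ⟨P, hP, hPd⟩ := menger _ G U (insert y A) A' rfl hAA'
    (fun C hC1 hC2 => hle1.trans (hbet C hC1 hC2))
  rw [hbd1] at hP hPd
  have hPy := hP y (Set.mem_insert _ _)
  have hPb : ∀ u ∈ D, _ := fun u hu => hP (b u) (Or.inr (h1 u hu).2.2.2)
  have hbne : ∀ u ∈ D, b u ≠ y := fun u hu h => hyA (h ▸ (h1 u hu).2.2.2.1)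
  have hbinj : ∀ u ∈ D, ∀ u' ∈ D, u ≠ u' → b u ≠ b u' := by
    intro u hu u' hu' hne h
    exact Set.disjoint_left.1 (h2 u hu u' hu' hne) (h1 u hu).2.2.1 (h ▸ (h1 u' hu').2.2.1)
  have hfP : ∀ u ∈ D, ∀ x ∈ insert y (bd G U A), x ∉ f u → Disjoint (f u) (P x) := by
    intro u hu x hx hxu
    rw [Set.disjoint_left]
    intro z hz hz'
    rcases (hP x hx).2.1 hz' with rfl | h
    · exact hxu hz
    · exact h.2 (Or.inr ((h1 u hu).1 hz))
  have hfy : ∀ u ∈ D, Disjoint (f u) (P y) := fun u hu =>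
    hfP u hu y (Set.mem_insert _ _) fun h => hyA ((h1 u hu).1 h)
  have hfb : ∀ u ∈ D, ∀ u' ∈ D, u ≠ u' → Disjoint (f u) (P (b u')) := by
    intro u hu u' hu' hne
    exact hfP u hu _ (Or.inr (h1 u' hu').2.2.2) fun h =>
      Set.disjoint_left.1 (h2 u hu u' hu' hne) h (h1 u' hu').2.2.1
  have hb' : ∀ u, ∃ z, (u ∈ D → z ∈ P (b u) ∧ z ∈ bd G U A') ∧
      (u = v → z ∈ P y ∧ z ∈ bd G U A') := by
    intro u
    by_cases hu : u ∈ D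
    · obtain ⟨z, hz⟩ := (hPb u hu).2.2.2
      exact ⟨z, fun _ => hz, fun h => absurd (h ▸ hu) hv⟩
    · obtain ⟨z, hz⟩ := hPy.2.2.2
      exact ⟨z, fun h => absurd h hu, fun _ => hz⟩
  choose b' hb'D hb'v using hb'
  have hPA : ∀ x ∈ insert y (bd G U A), P x ⊆ A' := by
    intro x hx z hz
    rcases (hP x hx).2.1 hz with rfl | h
    · rcases hx with rfl | hx
      · exact hAA' (Set.mem_insert _ _)
      · exact hAA' (Or.inr hx.1)
    · exact h.1
  have hvD : ∀ u ∈ D, u ≠ v := fun u hu h => hv (h ▸ hu)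
  refine ⟨A', hA', ?_, ?_, fun u => if u = v then P y else f u ∪ P (b u), b', ?_, ?_, ?_⟩
  · rw [hDc]
    exact le_antisymm hA'c (hbet A' hAA' subset_rfl)
  · rw [hDc]
    exact hA'max
  · intro u hu
    by_cases huv : u = v
    · simp only [huv, if_true]
      exact ⟨hPA y (Set.mem_insert _ _), hPy.2.2.1, hb'v v rfl⟩
    · have huD : u ∈ D := hu.resolve_left huv
      simp only [huv, if_false]
      obtain ⟨g1, g2, g3, g4⟩ := h1 u huD
      refine ⟨Set.union_subset (g1.trans ((Set.subset_insert _ _).trans hAA'))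
        (hPA _ (Or.inr g4)), conn_union g2 (hPb u huD).2.2.1 g3 (hPb u huD).1,
        Or.inr (hb'D u huD).1, (hb'D u huD).2⟩
  · have hsym : ∀ u ∈ D, Disjoint (f u ∪ P (b u)) (P y) := by
      intro u hu
      exact Set.disjoint_union_left.2 ⟨hfy u hu,
        hPd _ (Or.inr (h1 u hu).2.2.2) _ (Set.mem_insert _ _) (hbne u hu)⟩
    intro u hu u' hu' hne
    by_cases huv : u = v
    · have hu'v : u' ≠ v := fun h => hne (huv.trans h.symm)
      simp only [huv, if_true, hu'v, if_false]
      exact (hsym u' (hu'.resolve_left hu'v)).symm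
    · by_cases hu'v : u' = v
      · simp only [huv, if_false, hu'v, if_true]
        exact hsym u (hu.resolve_left huv)
      · have hu := hu.resolve_left huv
        have hu' := hu'.resolve_left hu'v
        simp only [huv, if_false, hu'v]
        exact Set.disjoint_union_left.2 ⟨Set.disjoint_union_right.2 ⟨h2 u hu u' hu' hne,
          hfb u hu u' hu' hne⟩, Set.disjoint_union_right.2 ⟨(hfb u' hu' u hu hne.symm).symm,
          hPd _ (Or.inr (h1 u hu).2.2.2) _ (Or.inr (h1 u' hu').2.2.2) (hbinj u hu u' hu' hne)⟩⟩
  · intro u hu u' hu' hadj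
    by_cases huv : u = v
    · subst huv
      have hu'v : u' ≠ u := hadj.ne'
      have hu' := hu'.resolve_left hu'v
      simp only [if_true, hu'v, if_false]
      exact ⟨y, hPy.1, b u', Or.inl (h1 u' hu').2.2.1, (hyb u' hu' hadj).symm⟩
    · have huD : u ∈ D := hu.resolve_left huv
      by_cases hu'v : u' = v
      · subst hu'v
        simp only [if_true, huv, if_false]
        exact ⟨b u, Or.inl (h1 u huD).2.2.1, y, hPy.1, hyb u huD hadj.symm⟩
      · have hu' := hu'.resolve_left hu'v
        simp only [huv, if_false, hu'v]
        obtain ⟨p, hp, q, hq, hpq⟩ := h3 u huD u' hu' hadj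
        exact ⟨p, Or.inl hp, q, Or.inl hq, hpq⟩

theorem stage_all [Finite V] [Finite W] {G : SimpleGraph V} {H : SimpleGraph W}
    (hH : H.IsAcyclic) {U : Set V} {w : ℕ} (hU : ¬ Good G U w U) :
    ∀ (n : ℕ) (D : Set W), D.ncard = n → n ≤ w → Stage G H U w D := by
  intro n
  induction n with
  | zero =>
    intro D hD _
    have hD' : D = ∅ := (Set.ncard_eq_zero (Set.toFinite _)).1 hD
    subst hD'
    have h0 : (bd G U ∅).ncard ≤ 0 := by
      have : bd G U ∅ = ∅ := by ext v; simp [bd]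
      simp [this]
    obtain ⟨B, -, hB, hBc, hmax⟩ := exists_max_good (w := w) Good.empty h0
    have hBc' : (bd G U B).ncard = (∅ : Set W).ncard := by simpa using hBc
    refine ⟨B, hB, hBc', fun A' h1 h2 h3 => hmax A' h1 h2 (by simpa using h3), fun _ => ∅, ?_⟩
    have : Nonempty V := by
      by_contra hcon
      rw [not_nonempty_iff] at hcon
      apply hU
      rw [Set.eq_empty_of_isEmpty U]
      exact Good.empty
    exact ⟨fun _ => this.some, by simp, by simp, by simp⟩
  | succ n ih =>
    intro D hD hn
    have hne : D.Nonempty := by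
      rw [← Set.ncard_pos (Set.toFinite _)]
      omega
    obtain ⟨v, hv, hleaf⟩ := exists_leaf H hH D hne
    have hc := Set.ncard_sdiff_singleton_add_one hv (Set.toFinite _)
    have hins : insert v (D \ {v}) = D := by
      rw [Set.insert_sdiff_singleton, Set.insert_eq_of_mem hv]
    rw [← hins]
    refine stage_step hU (by simp) (by omega) ?_ (ih _ (by omega) (by omega))
    intro a ha b hb
    exact hleaf a ha.1 b hb.1

/-- Path-width theorem: either `U` has a good chain, or a good subset has an `H`-model. -/
theorem exists_good_model [Finite V] [Finite W] {G : SimpleGraph V} {H : SimpleGraph W}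
    (hH : H.IsAcyclic) {U : Set V} (hU : ¬ Good G U (Nat.card W) U) :
    ∃ A, Good G U (Nat.card W) A ∧ ModelOn G H Set.univ A := by
  obtain ⟨A, hA, _, _, f, b, h1, h2, h3⟩ := stage_all (H := H) hH hU _ Set.univ rfl
    (by rw [Set.ncard_univ])
  exact ⟨A, hA, f, fun w hw => ⟨(h1 w hw).1, (h1 w hw).2.1⟩, h2, h3⟩

/-- `n` pairwise disjoint subsets of `U` satisfying `Q`. -/
def Packs (Q : Set V → Prop) (U : Set V) (n : ℕ) : Prop :=
  ∃ S : Fin n → Set V, (Pairwise fun a b => Disjoint (S a) (S b)) ∧ ∀ a, S a ⊆ U ∧ Q (S a)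

theorem Packs.zero (Q : Set V → Prop) (U : Set V) : Packs Q U 0 :=
  ⟨fun _ => ∅, fun a => a.elim0, fun a => a.elim0⟩

theorem Packs.succ {Q : Set V → Prop} {U A : Set V} {n : ℕ} (hA : A ⊆ U) (hQ : Q A)
    (h : Packs Q (U \ A) n) : Packs Q U (n + 1) := by
  obtain ⟨S, hd, hS⟩ := h
  refine ⟨Fin.cons A S, ?_, ?_⟩
  · intro a b
    refine Fin.cases ?_ (fun a => ?_) a <;> refine Fin.cases ?_ (fun b => ?_) b
    · intro h; exact absurd rfl h
    · intro _
      simp only [Fin.cons_zero, Fin.cons_succ]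
      exact Set.disjoint_left.2 fun x hx hx' => ((hS b).1 hx').2 hx
    · intro _
      simp only [Fin.cons_zero, Fin.cons_succ]
      exact Set.disjoint_left.2 fun x hx' hx => ((hS a).1 hx').2 hx
    · intro hne
      simp only [Fin.cons_succ]
      exact hd fun h => hne (by rw [h])
  · intro a
    refine Fin.cases ?_ (fun a => ?_) a
    · simpa using ⟨hA, hQ⟩
    · simp only [Fin.cons_succ]
      exact ⟨(hS a).1.trans Set.sdiff_subset, (hS a).2⟩

/-- First phase: pack forests or delete few vertices to get bounded path-width. -/
theorem phase_one [Finite V] [Finite W] {G : SimpleGraph V} {H : SimpleGraph W}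
    (hH : H.IsAcyclic) (k : ℕ) : ∀ U : Set V, Packs (ModelOn G H Set.univ) U k ∨
      ∃ X : Set V, X.ncard ≤ Nat.card W * k ∧ Good G (U \ X) (Nat.card W) (U \ X) := by
  induction k with
  | zero => exact fun U => Or.inl (Packs.zero _ _)
  | succ k ih =>
    intro U
    by_cases hU : Good G U (Nat.card W) U
    · exact Or.inr ⟨∅, by simp, by simpa using hU⟩
    obtain ⟨A, hA, hM⟩ := exists_good_model hH hU
    rcases ih (U \ A) with h | ⟨X, hX, hXg⟩
    · exact Or.inl (Packs.succ hA.subset hM h)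
    · right
      refine ⟨X ∩ (U \ A) ∪ bd G U A, ?_, ?_⟩
      · have h1 := Set.ncard_union_le (X ∩ (U \ A)) (bd G U A)
        have h2 := Set.ncard_le_ncard (Set.inter_subset_left : X ∩ (U \ A) ⊆ X) (Set.toFinite _)
        have h3 := hA.card
        rw [Nat.mul_succ]
        omega
      · set U' := U \ (X ∩ (U \ A) ∪ bd G U A) with hU'
        have hr := hA.restrict (U' := U') Set.sdiff_subset
        have hb : bd G U' (A ∩ U') = ∅ := by
          rw [Set.eq_empty_iff_forall_notMem]
          rintro v ⟨⟨hvA, hvU⟩, u, hu, hn, ha⟩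
          exact hvU.2 (Or.inr ⟨hvA, u, hu.1, fun h => hn ⟨h, hu⟩, ha⟩)
        have he : U' \ (A ∩ U') = (U \ A) \ X := by
          ext z
          have hz : z ∈ bd G U A → z ∈ A := fun h => h.1
          simp only [hU', Set.mem_sdiff, Set.mem_inter_iff, Set.mem_union]
          tauto
        have hap := hr.append hb (C := (U \ A) \ X) (by rw [he]; exact hXg)
        rw [← he] at hap
        rwa [Set.union_sdiff_cancel Set.inter_subset_right] at hap

theorem Packs.mono {Q : Set V → Prop} {U : Set V} {m n : ℕ} (h : Packs Q U n) (hmn : m ≤ n) :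
    Packs Q U m := by
  obtain ⟨S, hd, hS⟩ := h
  exact ⟨fun a => S (Fin.castLE hmn a), fun a b hab => hd fun h => hab (Fin.castLE_injective hmn h),
    fun a => hS _⟩

/-- Packing versus covering for a connected monotone property along a good chain. -/
theorem greedy [Finite V] {G : SimpleGraph V} {w : ℕ} {Q : Set V → Prop}
    (hmono : ∀ S S', S ⊆ S' → Q S → Q S')
    (hconn : ∀ S, Q S → ∃ S' ⊆ S, Conn G S' ∧ Q S') (k : ℕ) :
    ∀ U, Good G U w U → Packs Q U k ∨ ∃ X : Set V, X.ncard ≤ (w + 1) * k ∧ ¬ Q (U \ X) := by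
  induction k with
  | zero => exact fun U _ => Or.inl (Packs.zero _ _)
  | succ k ih =>
    intro U hU
    by_cases hQ : Q U
    swap
    · exact Or.inr ⟨∅, by simp, by simpa using hQ⟩
    have h0 : ¬ Q ∅ := by
      intro h
      obtain ⟨S', hS', hc, _⟩ := hconn _ h
      obtain ⟨x, hx⟩ := hc.1
      exact hS' hx
    obtain ⟨B, y, hB, hnB, hyB⟩ := hU.first Q h0 hQ
    have hres := hU.restrict (U' := U \ insert y B) Set.sdiff_subset
    rw [Set.inter_eq_right.2 Set.sdiff_subset] at hres
    rcases ih _ hres with h | ⟨X, hX, hXQ⟩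
    · exact Or.inl (Packs.succ hB.subset hyB h)
    · right
      refine ⟨X ∪ insert y (bd G U (insert y B)), ?_, ?_⟩
      · have h1 := Set.ncard_union_le X (insert y (bd G U (insert y B)))
        have h2 := Set.ncard_insert_le y (bd G U (insert y B))
        have h3 := hB.card
        rw [Nat.mul_succ]
        omega
      · intro hcon
        obtain ⟨S, hS, hSc, hSQ⟩ := hconn _ hcon
        have hSU : S ⊆ U := hS.trans Set.sdiff_subset
        have hdis : Disjoint S (bd G U (insert y B)) :=
          Set.disjoint_left.2 fun x hx hx' => (hS hx).2 (Or.inr (Or.inr hx'))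
        rcases conn_avoid hSc hSU hdis with h | h
        · apply hnB
          refine hmono S B ?_ hSQ
          intro x hx
          rcases h hx with rfl | h
          · exact absurd (Or.inr (Or.inl rfl)) (hS hx).2
          · exact h
        · apply hXQ
          refine hmono S _ ?_ hSQ
          intro x hx
          exact ⟨⟨hSU hx, fun h' => Set.disjoint_left.1 h hx h'⟩, fun h' => (hS hx).2 (Or.inl h')⟩

/-- A family of at least `N` disjoint connected subsets of `U` with property `Q`. -/
def IsCFam (G : SimpleGraph V) (Q : Set V → Prop) (U : Set V) (N : ℕ) (T : Finset (Set V)) : Prop :=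
  N ≤ T.card ∧ (∀ S ∈ T, ∀ S' ∈ T, S ≠ S' → Disjoint S S') ∧ ∀ S ∈ T, S ⊆ U ∧ Q S ∧ Conn G S

theorem Packs.cfam {G : SimpleGraph V} {Q : Set V → Prop}
    (hconn : ∀ S, Q S → ∃ S' ⊆ S, Conn G S' ∧ Q S') {U : Set V} {N : ℕ} (h : Packs Q U N) :
    ∃ T, IsCFam G Q U N T := by
  classical
  obtain ⟨S, hd, hS⟩ := h
  have : ∀ a, ∃ S' ⊆ S a, Conn G S' ∧ Q S' := fun a => hconn _ (hS a).2
  choose S' h1 h2 h3 using this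
  have hinj : Function.Injective S' := by
    intro a b hab
    by_contra hne
    obtain ⟨x, hx⟩ := (h2 a).1
    exact Set.disjoint_left.1 (hd hne) (h1 a hx) (h1 b (hab ▸ hx))
  refine ⟨Finset.univ.image S', ?_, ?_, ?_⟩
  · rw [Finset.card_image_of_injective _ hinj]; simp
  · intro A hA B hB hne
    simp only [Finset.mem_image, Finset.mem_univ, true_and] at hA hB
    obtain ⟨a, rfl⟩ := hA
    obtain ⟨b, rfl⟩ := hB
    exact (hd fun h => hne (by rw [h])).mono (h1 a) (h1 b)
  · intro A hA
    simp only [Finset.mem_image, Finset.mem_univ, true_and] at hA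
    obtain ⟨a, rfl⟩ := hA
    exact ⟨(h1 a).trans (hS a).1, h3 a, h2 a⟩

open Classical in
/-- Few disjoint sets can meet a small set. -/
theorem card_meet_le [Finite V] (T : Finset (Set V))
    (hT : ∀ S ∈ T, ∀ S' ∈ T, S ≠ S' → Disjoint S S') (Z : Set V) :
    (T.filter fun S => (S ∩ Z).Nonempty).card ≤ Z.ncard := by
  have hex : ∀ S : Set V, ∃ z : Option V, (S ∩ Z).Nonempty → ∃ x, z = some x ∧ x ∈ S ∩ Z := by
    intro S
    by_cases h : (S ∩ Z).Nonempty
    · obtain ⟨x, hx⟩ := h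
      exact ⟨some x, fun _ => ⟨x, rfl, hx⟩⟩
    · exact ⟨none, fun h' => absurd h' h⟩
  choose e he using hex
  have hZ : (some '' Z).ncard = Z.ncard := Set.ncard_image_of_injective _ (Option.some_injective _)
  rw [← hZ, ← Set.ncard_coe_finset]
  apply Set.ncard_le_ncard_of_injOn e _ _ (Set.toFinite _)
  · intro S hS
    simp only [Finset.coe_filter, Set.mem_ofPred_eq] at hS
    obtain ⟨x, hx, hxS⟩ := he S hS.2
    exact ⟨x, hxS.2, hx.symm⟩
  · intro S hS S' hS' heq
    simp only [Finset.coe_filter, Set.mem_ofPred_eq] at hS hS'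
    by_contra hne
    obtain ⟨x, hx, hxS⟩ := he S hS.2
    obtain ⟨x', hx', hxS'⟩ := he S' hS'.2
    have : x = x' := by
      have := hx.symm.trans (heq.trans hx')
      simpa using this
    subst this
    exact Set.disjoint_left.1 (hT S hS.1 S' hS'.1 hne) hxS.1 hxS'.1

/-- Many disjoint models of each type give mutually disjoint families. -/
theorem abundant [Finite V] {G : SimpleGraph V} {κ : Type} (Q : κ → Set V → Prop) (w n : ℕ)
    (hn : 1 ≤ n) : ∀ (m : ℕ) (D : Finset κ), D.card = m → ∀ U, Good G U w U →
      (∀ c ∈ D, ∃ T, IsCFam G (Q c) U (m * (n + w)) T) →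
      ∃ T : κ → Finset (Set V), (∀ c ∈ D, IsCFam G (Q c) U n (T c)) ∧
        ∀ c ∈ D, ∀ c' ∈ D, c ≠ c' → ∀ S ∈ T c, ∀ S' ∈ T c', Disjoint S S' := by
  classical
  intro m
  induction m with
  | zero =>
    intro D hD U _ _
    rw [Finset.card_eq_zero] at hD
    subst hD
    exact ⟨fun _ => ∅, by simp, by simp⟩
  | succ m ih =>
    intro D hD U hU hT
    have : ∀ c, ∃ T, c ∈ D → IsCFam G (Q c) U ((m + 1) * (n + w)) T := by
      intro c
      by_cases hc : c ∈ D
      · obtain ⟨T, h⟩ := hT c hc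
        exact ⟨T, fun _ => h⟩
      · exact ⟨∅, fun h => absurd h hc⟩
    choose T hT using this
    have hmul : (m + 1) * (n + w) = m * (n + w) + (n + w) := by ring
    obtain ⟨B, y, hB, hnB, c, hcD, hc⟩ := hU.first
      (fun A => ∃ c ∈ D, n ≤ ((T c).filter fun S => S ⊆ A).card) (by
        rintro ⟨c, hc, hle⟩
        have hpos : 0 < ((T c).filter fun S => S ⊆ ∅).card := by omega
        obtain ⟨S, hS⟩ := Finset.card_pos.1 hpos
        rw [Finset.mem_filter] at hS
        obtain ⟨x, hx⟩ := ((hT c hc).2.2 S hS.1).2.2.1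
        exact hS.2 hx) (by
        have hpos : 0 < D.card := by omega
        obtain ⟨c, hc⟩ := Finset.card_pos.1 hpos
        refine ⟨c, hc, ?_⟩
        rw [Finset.filter_true_of_mem fun S hS => ((hT c hc).2.2 S hS).1]
        have := (hT c hc).1
        omega)
    have hnB' : ∀ c ∈ D, ((T c).filter fun S => S ⊆ B).card < n := by
      intro c hc
      by_contra h
      exact hnB ⟨c, hc, not_lt.1 h⟩
    have hres := hU.restrict (U' := U \ insert y B) Set.sdiff_subset
    rw [Set.inter_eq_right.2 Set.sdiff_subset] at hres
    obtain ⟨T', hT', hdis⟩ := ih (D.erase c) (by rw [Finset.card_erase_of_mem hcD]; omega)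
      (U \ insert y B) hres (by
        intro c' hc'
        have hc'D := Finset.mem_of_mem_erase hc'
        obtain ⟨g1, g2, g3⟩ := hT c' hc'D
        refine ⟨(T c').filter fun S => S ⊆ U \ insert y B, ?_, ?_, ?_⟩
        · have hcov : T c' ⊆ ((T c').filter fun S => S ⊆ U \ insert y B) ∪
              (((T c').filter fun S => S ⊆ B) ∪
              ((T c').filter fun S => (S ∩ insert y (bd G U (insert y B))).Nonempty)) := by
            intro S hS
            obtain ⟨hSU, -, hSc⟩ := g3 S hS
            simp only [Finset.mem_union, Finset.mem_filter, hS, true_and]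
            by_cases hmeet : (S ∩ insert y (bd G U (insert y B))).Nonempty
            · exact Or.inr (Or.inr hmeet)
            have hno : ∀ x ∈ S, x ∉ insert y (bd G U (insert y B)) := fun x hx hx' =>
              hmeet ⟨x, hx, hx'⟩
            rcases conn_avoid hSc hSU
              (Set.disjoint_left.2 fun x hx hx' => hno x hx (Or.inr hx')) with h | h
            · refine Or.inr (Or.inl fun x hx => ?_)
              rcases h hx with rfl | h
              · exact absurd (Or.inl rfl) (hno x hx)
              · exact h
            · exact Or.inl fun x hx => ⟨hSU hx, Set.disjoint_left.1 h hx⟩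
          have k1 := (Finset.card_le_card hcov).trans (Finset.card_union_le _ _)
          have k2 := Finset.card_union_le ((T c').filter fun S => S ⊆ B)
              ((T c').filter fun S => (S ∩ insert y (bd G U (insert y B))).Nonempty)
          have k3 := card_meet_le (T c') g2 (insert y (bd G U (insert y B)))
          have k4 := Set.ncard_insert_le y (bd G U (insert y B))
          have k5 := hB.card
          have k6 := hnB' c' hc'D
          omega
        · intro S hS S' hS'
          exact g2 S (Finset.mem_filter.1 hS).1 S' (Finset.mem_filter.1 hS').1
        · intro S hS
          rw [Finset.mem_filter] at hS
          exact ⟨hS.2, (g3 S hS.1).2⟩)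
    have hne : ∀ c' ∈ D, c' ≠ c → c' ∈ D.erase c := fun c' h1 h2 => Finset.mem_erase.2 ⟨h2, h1⟩
    have hcross : ∀ c' ∈ D, c' ≠ c → ∀ S ∈ (T c).filter (fun S => S ⊆ insert y B), ∀ S' ∈ T' c',
        Disjoint S S' := by
      intro c' hc' hcc' S hS S' hS'
      have h1 := (Finset.mem_filter.1 hS).2
      have h2 := ((hT' c' (hne c' hc' hcc')).2.2 S' hS').1
      exact Set.disjoint_left.2 fun x hx hx' => (h2 hx').2 (h1 hx)
    refine ⟨fun c' => if c' = c then (T c).filter (fun S => S ⊆ insert y B) else T' c', ?_, ?_⟩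
    · intro c' hc'
      by_cases hcc' : c' = c
      · subst hcc'
        simp only [if_true]
        obtain ⟨g1, g2, g3⟩ := hT c' hc'
        refine ⟨hc, ?_, ?_⟩
        · intro S hS S' hS'
          exact g2 S (Finset.mem_filter.1 hS).1 S' (Finset.mem_filter.1 hS').1
        · intro S hS
          exact g3 S (Finset.mem_filter.1 hS).1
      · simp only [hcc', if_false]
        obtain ⟨g1, g2, g3⟩ := hT' c' (hne c' hc' hcc')
        exact ⟨g1, g2, fun S hS => ⟨(g3 S hS).1.trans Set.sdiff_subset, (g3 S hS).2⟩⟩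
    · intro c₁ h₁ c₂ h₂ h12 S hS S' hS'
      by_cases e₁ : c₁ = c
      · have e₂ : c₂ ≠ c := fun h => h12 (e₁.trans h.symm)
        simp only [e₁, if_true] at hS
        simp only [e₂, if_false] at hS'
        exact hcross c₂ h₂ e₂ S hS S' hS'
      · simp only [e₁, if_false] at hS
        by_cases e₂ : c₂ = c
        · simp only [e₂, if_true] at hS'
          exact (hcross c₁ h₁ e₁ S' hS' S hS).symm
        · simp only [e₂, if_false] at hS'
          exact hdis c₁ (hne c₁ h₁ e₁) c₂ (hne c₂ h₂ e₂) h12 S hS S' hS'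

/-- Second phase: linear Erdős–Pósa along a good chain, for families with several components. -/
theorem phase_two [Finite V] {G : SimpleGraph V} {κ ι : Type} [Fintype κ] (Q : κ → Set V → Prop)
    (M : ι → Set V → Prop) (comp : ι → Set κ)
    (hmono : ∀ c S S', S ⊆ S' → Q c S → Q c S')
    (hconn : ∀ c S, Q c S → ∃ S' ⊆ S, Conn G S' ∧ Q c S')
    (hsplit : ∀ i, ∀ c ∈ comp i, ∀ S, M i S → Q c S)
    (hglue : ∀ i (g : κ → Set V), (∀ c ∈ comp i, ∀ c' ∈ comp i, c ≠ c' → Disjoint (g c) (g c')) →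
      (∀ c ∈ comp i, Q c (g c)) → M i (⋃ c ∈ comp i, g c))
    (w k : ℕ) (hk : 1 ≤ k) : ∀ (m : ℕ) (D : Finset κ), D.card = m → ∀ U, Good G U w U →
      (∀ c, c ∉ D → ¬ Q c U) →
      Packs (fun S => ∃ i, M i S) U k ∨
        ∃ X : Set V, X.ncard ≤ m * ((w + 1) * (Fintype.card κ * (k + w))) ∧
          ∀ i, ¬ M i (U \ X) := by
  classical
  intro m
  induction m with
  | zero =>
    intro D hD U _ hQ
    rw [Finset.card_eq_zero] at hD
    subst hD
    by_cases h : ∃ i, M i U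
    · obtain ⟨i, hi⟩ := h
      left
      have hemp : comp i = ∅ := by
        rw [Set.eq_empty_iff_forall_notMem]
        intro c hc
        exact hQ c (by simp) (hsplit i c hc _ hi)
      have h0 : M i ∅ := by
        have := hglue i (fun _ => ∅) (by simp [hemp]) (by simp [hemp])
        simpa [hemp] using this
      exact ⟨fun _ => ∅, fun _ _ _ => by simp, fun _ => ⟨Set.empty_subset _, i, h0⟩⟩
    · push Not at h
      exact Or.inr ⟨∅, by simp, by simpa using h⟩
  | succ m ih =>
    intro D hD U hU hQ
    by_cases hrare : ∃ c ∈ D, ¬ Packs (Q c) U (Fintype.card κ * (k + w))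
    · obtain ⟨c, hc, hnp⟩ := hrare
      obtain ⟨X, hX, hXQ⟩ := (greedy (hmono c) (hconn c) _ U hU).resolve_left hnp
      have hres := hU.restrict (U' := U \ X) Set.sdiff_subset
      rw [Set.inter_eq_right.2 Set.sdiff_subset] at hres
      rcases ih (D.erase c) (by rw [Finset.card_erase_of_mem hc]; omega) (U \ X) hres (by
        intro c' hc' hQ'
        by_cases hcc : c' = c
        · subst hcc
          exact hXQ hQ'
        · refine hQ c' (fun h => hc' (Finset.mem_erase.2 ⟨hcc, h⟩)) ?_
          exact hmono c' _ _ Set.sdiff_subset hQ') with h | ⟨Y, hY, hYM⟩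
      · left
        obtain ⟨S, h1, h2⟩ := h
        exact ⟨S, h1, fun a => ⟨(h2 a).1.trans Set.sdiff_subset, (h2 a).2⟩⟩
      · right
        refine ⟨X ∪ Y, ?_, ?_⟩
        · have := Set.ncard_union_le X Y
          rw [Nat.succ_mul]
          omega
        · intro i
          rw [← Set.sdiff_sdiff]
          exact hYM i
    · push Not at hrare
      by_cases hi : ∃ i, comp i ⊆ (D : Set κ)
      · obtain ⟨i, hi⟩ := hi
        left
        have hDK : m + 1 ≤ Fintype.card κ := hD ▸ Finset.card_le_univ D
        obtain ⟨T, hT, hTd⟩ := abundant (G := G) Q w k hk (m + 1) D hD U hU (fun c hc =>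
          ((hrare c hc).mono (Nat.mul_le_mul_right _ hDK)).cfam (hconn c))
        have : ∀ c, ∃ e : Fin k → Set V, c ∈ D → Function.Injective e ∧ ∀ a, e a ∈ T c := by
          intro c
          by_cases hc : c ∈ D
          · have hle := (hT c hc).1
            refine ⟨fun a => ((T c).equivFin.symm (Fin.castLE hle a)).1, fun _ => ⟨?_, ?_⟩⟩
            · intro a b hab
              exact Fin.castLE_injective hle ((T c).equivFin.symm.injective (Subtype.ext hab))
            · intro a
              exact ((T c).equivFin.symm (Fin.castLE hle a)).2
          · exact ⟨fun _ => ∅, fun h => absurd h hc⟩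
        choose e he using this
        refine ⟨fun a => ⋃ c ∈ comp i, e c a, ?_, ?_⟩
        · intro a b hab
          simp only [Set.disjoint_iUnion_left, Set.disjoint_iUnion_right]
          intro c hc c' hc'
          by_cases hcc : c = c'
          · subst hcc
            exact (hT c (hi hc)).2.1 _ ((he c (hi hc)).2 a) _ ((he c (hi hc)).2 b)
              fun h => hab ((he c (hi hc)).1 h)
          · first
            | exact hTd c (hi hc) c' (hi hc') hcc _ ((he c (hi hc)).2 _) _ ((he c' (hi hc')).2 _)
            | exact (hTd c (hi hc) c' (hi hc') hcc _ ((he c (hi hc)).2 _) _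
                ((he c' (hi hc')).2 _)).symm
        · intro a
          refine ⟨Set.iUnion₂_subset fun c hc =>
            ((hT c (hi hc)).2.2 _ ((he c (hi hc)).2 a)).1, i, hglue i (fun c => e c a) ?_ ?_⟩
          · intro c hc c' hc' hcc
            exact hTd c (hi hc) c' (hi hc') hcc _ ((he c (hi hc)).2 a) _ ((he c' (hi hc')).2 a)
          · intro c hc
            exact ((hT c (hi hc)).2.2 _ ((he c (hi hc)).2 a)).2.1
      · right
        refine ⟨∅, by simp, fun i hM => hi ⟨i, fun c hc => ?_⟩⟩
        by_contra hcD
        rw [Set.sdiff_empty] at hM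
        exact hQ c hcD (hsplit i c hc U hM)

end EP

/-- Main theorem: if the finite family `F` contains a forest, then there is a constant `c`
(depending only on `F`) with `τ_F(G) ≤ c · ν_F(G)` for every graph `G`. -/
theorem erdos_posa_linear_for_forests {ι : Type} [Fintype ι] {W : ι → Type}
    [∀ i, Fintype (W i)] (F : ∀ i, SimpleGraph (W i)) (i₀ : ι)
    (hforest : (F i₀).IsAcyclic) :
    ∃ c : ℕ, ∀ (V : Type) [Fintype V] (G : SimpleGraph V), tauF G F ≤ c * nuF G F := by
  classical
  by_cases hW : ∃ i, IsEmpty (W i)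
  · obtain ⟨i, hi⟩ := hW
    refine ⟨0, fun V _ G => ?_⟩
    have : {n | ∃ X : Set V, X.ncard = n ∧ ∀ i, ¬ HasMinor (G.induce Xᶜ) (F i)} = ∅ := by
      rw [Set.eq_empty_iff_forall_notMem]
      rintro n ⟨X, -, hX⟩
      exact hX i ⟨fun w => isEmptyElim w, fun w => isEmptyElim w, fun w => isEmptyElim w,
        fun w => isEmptyElim w⟩
    simp [tauF, this]
  push Not at hW
  let κ : Type := Σ i, (F i).ConnectedComponent
  have : ∀ i, Finite (F i).ConnectedComponent := fun i => Quot.finite _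
  have : Finite κ := inferInstance
  have : Fintype κ := Fintype.ofFinite κ
  obtain ⟨N, hN⟩ : ∃ N, N = Fintype.card κ := ⟨_, rfl⟩
  obtain ⟨w, hw⟩ : ∃ w, w = Nat.card (W i₀) := ⟨_, rfl⟩
  refine ⟨2 * (w + N * ((w + 1) * (N * (1 + w)))), fun V _ G => ?_⟩
  -- the packing number is attained and bounds all packings
  have hbdd : BddAbove {k | ∃ S : Fin k → Set V, IsFPacking G F k S} := by
    refine ⟨Fintype.card V, ?_⟩
    rintro k ⟨S, hd, hS⟩
    have hne : ∀ a, ∃ v, v ∈ S a := by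
      intro a
      obtain ⟨i, f, hf, -⟩ := hS a
      obtain ⟨x⟩ := hW i
      obtain ⟨y, -⟩ := (hf x).nonempty.some
      exact ⟨y.1, y.2⟩
    choose g hg using hne
    have hinj : Function.Injective g := by
      intro a b hab
      by_contra hne
      exact Set.disjoint_left.1 (hd hne) (hg a) (hab ▸ hg b)
    simpa using Fintype.card_le_of_injective g hinj
  have hno : ¬ EP.Packs (fun S => ∃ i, EP.ModelOn G (F i) Set.univ S) Set.univ (nuF G F + 1) := by
    rintro ⟨S, h1, h2⟩
    have : nuF G F + 1 ≤ nuF G F := le_csSup hbdd ⟨S, h1, fun a => by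
      obtain ⟨i, hi⟩ := (h2 a).2
      exact ⟨i, (EP.hasMinor_iff G (F i) (S a)).2 hi⟩⟩
    omega
  have htau : ∀ X : Set V, (∀ i, ¬ EP.ModelOn G (F i) Set.univ Xᶜ) → tauF G F ≤ X.ncard := by
    intro X hX
    exact Nat.sInf_le ⟨X, rfl, fun i hi => hX i ((EP.hasMinor_iff G (F i) _).1 hi)⟩
  obtain ⟨k, hk⟩ : ∃ k, k = nuF G F := ⟨_, rfl⟩
  rw [← hk] at hno ⊢
  by_cases hk0 : k = 0
  · have := htau ∅ (by
      intro i hi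
      apply hno
      subst hk0
      exact ⟨fun _ => Set.univ, fun a b hab => absurd (Subsingleton.elim (α := Fin 1) a b) hab,
        fun _ => ⟨subset_rfl, i, by simpa using hi⟩⟩)
    simp at this
    omega
  obtain ⟨X, hX, hXg⟩ := (EP.phase_one (G := G) hforest (k + 1) Set.univ).resolve_left (by
    rintro ⟨S, h1, h2⟩
    exact hno ⟨S, h1, fun a => ⟨(h2 a).1, i₀, (h2 a).2⟩⟩)
  rw [← hw] at hX hXg
  obtain ⟨Y, hY, hYM⟩ := (EP.phase_two (G := G) (κ := κ) (ι := ι)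
    (fun c S => EP.ModelOn G (F c.1) c.2.supp S) (fun i S => EP.ModelOn G (F i) Set.univ S)
    (fun i => {c | c.1 = i})
    (fun c S S' hSS h => h.mono subset_rfl hSS)
    (fun c S h => h.exists_conn)
    (by
      rintro i c rfl S h
      exact h.mono (Set.subset_univ _) subset_rfl)
    (by
      intro i g hg hQ
      have := EP.ModelOn.glue (G := G) (H := F i) (fun c => g ⟨i, c⟩)
        (fun c c' hcc => hg ⟨i, c⟩ rfl ⟨i, c'⟩ rfl (by
          intro h
          exact hcc (eq_of_heq (Sigma.mk.inj h).2)))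
        (fun c => hQ ⟨i, c⟩ rfl)
      refine this.mono subset_rfl (Set.iUnion_subset fun c => ?_)
      exact Set.subset_biUnion_of_mem (u := g) (show (⟨i, c⟩ : κ) ∈ {c : κ | c.1 = i} from rfl))
    w (k + 1) (by omega) _ Finset.univ rfl (Set.univ \ X) hXg
    (fun c hc => absurd (Finset.mem_univ c) hc)).resolve_left (by
    rintro ⟨S, h1, h2⟩
    exact hno ⟨S, h1, fun a => ⟨Set.subset_univ _, (h2 a).2⟩⟩)
  have hfin := htau (X ∪ Y) (by
    intro i hi
    apply hYM i
    rw [Set.sdiff_sdiff, ← Set.compl_eq_univ_sdiff]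
    exact hi)
  have hun := Set.ncard_union_le X Y
  rw [Finset.card_univ, ← hN] at hY
  have h1 : k + 1 ≤ 2 * k := by omega
  have h2 : k + 1 + w ≤ 2 * k * (1 + w) := by nlinarith
  have h3 : N * ((w + 1) * (N * (k + 1 + w))) ≤ N * ((w + 1) * (N * (2 * k * (1 + w)))) := by
    gcongr
  have h4 : w * (k + 1) ≤ w * (2 * k) := by gcongr
  calc tauF G F ≤ w * (2 * k) + N * ((w + 1) * (N * (2 * k * (1 + w)))) := by omega
    _ = 2 * (w + N * ((w + 1) * (N * (1 + w)))) * k := by ring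
end

section
/- For every t ∈ ℕ there exists a constant c = c(t) such that for every graph G and every k ∈ ℕ, either G contains k vertex-disjoint subgraphs each with pathwidth at least t+1, or G has a vertex subset X of size at most c·k such that G − X has pathwidth at most t. -/
open SimpleGraph Set

namespace PWPack

/-- inner boundary of `X` w.r.t. a relation -/
def bd {V : Type*} (R : V → V → Prop) (X : Set V) : Set V := {v | v ∈ X ∧ ∃ w, w ∉ X ∧ R v w}

/-- cut-based connectivity of a vertex set -/
def Conn {V : Type*} (G : SimpleGraph V) (S : Set V) : Prop :=
  S.Nonempty ∧ ∀ A : Set V, (∃ a ∈ S, a ∈ A) → (∃ b ∈ S, b ∉ A) →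
    ∃ a ∈ S, ∃ b ∈ S, a ∈ A ∧ b ∉ A ∧ G.Adj a b

theorem Conn.singleton {V : Type*} (G : SimpleGraph V) (v : V) : Conn G {v} := by
  refine ⟨⟨v, rfl⟩, ?_⟩
  rintro A ⟨a, rfl, ha⟩ ⟨b, rfl, hb⟩
  exact absurd ha hb

theorem Conn.union {V : Type*} {G : SimpleGraph V} {S T : Set V} (hS : Conn G S) (hT : Conn G T)
    {s u : V} (hs : s ∈ S) (hu : u ∈ T) (h : s = u ∨ G.Adj s u) : Conn G (S ∪ T) := by
  refine ⟨⟨s, Or.inl hs⟩, ?_⟩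
  intro A hA hB
  by_cases h1 : (∃ a ∈ S, a ∈ A) ∧ (∃ b ∈ S, b ∉ A)
  · obtain ⟨a, ha, b, hb, h⟩ := hS.2 A h1.1 h1.2
    exact ⟨a, Or.inl ha, b, Or.inl hb, h⟩
  by_cases h2 : (∃ a ∈ T, a ∈ A) ∧ (∃ b ∈ T, b ∉ A)
  · obtain ⟨a, ha, b, hb, h⟩ := hT.2 A h2.1 h2.2
    exact ⟨a, Or.inr ha, b, Or.inr hb, h⟩
  obtain ⟨a, ha, haA⟩ := hA
  obtain ⟨b, hb, hbA⟩ := hB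
  by_cases hsA : s ∈ A <;> by_cases huA : u ∈ A
  · exfalso
    rcases hb with hb | hb
    · exact h1 ⟨⟨s, hs, hsA⟩, b, hb, hbA⟩
    · exact h2 ⟨⟨u, hu, huA⟩, b, hb, hbA⟩
  · rcases h with rfl | h
    · exact absurd hsA huA
    · exact ⟨s, Or.inl hs, u, Or.inr hu, hsA, huA, h⟩
  · rcases h with rfl | h
    · exact absurd huA hsA
    · exact ⟨u, Or.inr hu, s, Or.inl hs, huA, hsA, h.symm⟩
  · exfalso
    rcases ha with ha | ha
    · exact h1 ⟨⟨a, ha, haA⟩, s, hs, hsA⟩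
    · exact h2 ⟨⟨a, ha, haA⟩, u, hu, huA⟩

theorem bd_submod {V : Type*} [Finite V] (R : V → V → Prop) (A B : Set V) :
    (bd R (A ∩ B)).ncard + (bd R (A ∪ B)).ncard ≤ (bd R A).ncard + (bd R B).ncard := by
  rw [← Set.ncard_union_add_ncard_inter (bd R (A ∩ B)), ← Set.ncard_union_add_ncard_inter (bd R A)]
  apply Nat.add_le_add
  · apply Set.ncard_le_ncard _ (Set.toFinite _)
    rintro v (⟨⟨h1, h2⟩, w, hw, hR⟩ | ⟨h1, w, hw, hR⟩)
    · by_cases hwA : w ∈ A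
      · exact Or.inr ⟨h2, w, fun h => hw ⟨hwA, h⟩, hR⟩
      · exact Or.inl ⟨h1, w, hwA, hR⟩
    · rcases h1 with h1 | h1
      · exact Or.inl ⟨h1, w, fun h => hw (Or.inl h), hR⟩
      · exact Or.inr ⟨h1, w, fun h => hw (Or.inr h), hR⟩
  · apply Set.ncard_le_ncard _ (Set.toFinite _)
    rintro v ⟨⟨⟨h1, h2⟩, _⟩, ⟨_, w, hw, hR⟩⟩
    exact ⟨⟨h1, w, fun h => hw (Or.inl h), hR⟩, ⟨h2, w, fun h => hw (Or.inr h), hR⟩⟩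

/-- Menger's theorem with connected sets. -/
theorem menger {V : Type*} [Finite V] (G : SimpleGraph V) (n : ℕ) :
    ∀ (R : V → V → Prop) (_ : ∀ a b, R a b → G.Adj a b) (X Y : Set V) (_ : X ⊆ Y)
      (_ : (Y \ X).ncard ≤ n)
      (_ : ∀ Z, X ⊆ Z → Z ⊆ Y → (bd R X).ncard ≤ (bd R Z).ncard),
      ∃ P : V → Set V,
        (∀ v ∈ bd R X, v ∈ P v ∧ Conn G (P v) ∧ P v ⊆ insert v (Y \ X) ∧ ∃ w ∈ P v, w ∈ bd R Y) ∧
        (∀ v ∈ bd R X, ∀ u ∈ bd R X, v ≠ u → Disjoint (P v) (P u)) := by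
  induction n with
  | zero =>
    intro R hR X Y hXY hn hZ
    have : Y \ X = ∅ := by
      rw [← Set.ncard_eq_zero (Set.toFinite _)]; omega
    have hYX : X = Y := Set.Subset.antisymm hXY (Set.sdiff_eq_empty.mp this)
    subst hYX
    refine ⟨fun v => {v}, ?_, ?_⟩
    · intro v hv
      exact ⟨rfl, Conn.singleton G v, by simp, v, rfl, hv⟩
    · intro v _ u _ h
      simpa using h
  | succ n ih =>
    intro R hR X Y hXY hn hZ
    by_cases hA : bd R X ⊆ bd R Y
    · refine ⟨fun v => {v}, ?_, ?_⟩
      · intro v hv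
        exact ⟨rfl, Conn.singleton G v, by simp, v, rfl, hA hv⟩
      · intro v _ u _ h
        simpa using h
    obtain ⟨v, hvX, hvY⟩ := Set.not_subset.mp hA
    obtain ⟨hvX', w, hwX, hvw⟩ := hvX
    have hwY : w ∈ Y := by
      by_contra hw
      exact hvY ⟨hXY hvX', w, hw, hvw⟩
    have hvX : v ∈ bd R X := ⟨hvX', w, hwX, hvw⟩
    by_cases hB : ∃ Z, X ⊂ Z ∧ Z ⊂ Y ∧ (bd R Z).ncard ≤ (bd R X).ncard
    · obtain ⟨Z, hXZ, hZY, hle⟩ := hB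
      have c1 : (Z \ X).ncard < (Y \ X).ncard := by
        apply Set.ncard_lt_ncard _ (Set.toFinite _)
        refine ⟨Set.sdiff_subset_sdiff_left hZY.1, fun h => hZY.2 fun y hy => ?_⟩
        by_cases hyX : y ∈ X
        · exact hXZ.1 hyX
        · exact (h ⟨hy, hyX⟩).1
      have c2 : (Y \ Z).ncard < (Y \ X).ncard := by
        apply Set.ncard_lt_ncard _ (Set.toFinite _)
        refine ⟨Set.sdiff_subset_sdiff_right hXZ.1, fun h => hXZ.2 fun y hy => ?_⟩
        by_contra hyX
        exact (h ⟨hZY.1 hy, hyX⟩).2 hy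
      obtain ⟨P, hP, hPd⟩ := ih R hR X Z hXZ.1 (by omega)
        (fun W h1 h2 => hZ W h1 (h2.trans hZY.1))
      obtain ⟨Q, hQ, hQd⟩ := ih R hR Z Y hZY.1 (by omega)
        (fun W h1 h2 => hle.trans (hZ W (hXZ.1.trans h1) h2))
      have hg : ∀ u, ∃ g, u ∈ bd R X → g ∈ P u ∧ g ∈ bd R Z := by
        intro u
        by_cases hu : u ∈ bd R X
        · obtain ⟨g, h1, h2⟩ := (hP u hu).2.2.2
          exact ⟨g, fun _ => ⟨h1, h2⟩⟩
        · exact ⟨u, fun h => absurd h hu⟩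
      choose g hg using hg
      have hPZ : ∀ u ∈ bd R X, P u ⊆ Z := by
        intro u hu y hy
        rcases (hP u hu).2.2.1 hy with rfl | h
        · exact hXZ.1 hu.1
        · exact h.1
      have key : ∀ a ∈ bd R X, ∀ b ∈ bd R X, a ≠ b → Disjoint (P a) (Q (g b)) := by
        intro a ha b hb hab
        rw [Set.disjoint_left]
        intro y hy1 hy2
        rcases (hQ _ (hg b hb).2).2.2.1 hy2 with h | h
        · subst h
          exact Set.disjoint_left.mp (hPd a ha b hb hab) hy1 (hg b hb).1
        · exact h.2 (hPZ a ha hy1)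
      refine ⟨fun u => P u ∪ Q (g u), ?_, ?_⟩
      · intro u hu
        obtain ⟨p1, p2, p3, -⟩ := hP u hu
        obtain ⟨q1, q2, q3, y, q4, q5⟩ := hQ _ (hg u hu).2
        refine ⟨Or.inl p1, p2.union q2 (hg u hu).1 q1 (Or.inl rfl), ?_, y, Or.inr q4, q5⟩
        rintro z (hz | hz)
        · rcases p3 hz with h | h
          · exact Or.inl h
          · exact Or.inr ⟨hZY.1 h.1, h.2⟩
        · rcases q3 hz with h | h
          · subst h
            rcases p3 (hg u hu).1 with h | h
            · exact Or.inl h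
            · exact Or.inr ⟨hZY.1 h.1, h.2⟩
          · exact Or.inr ⟨h.1, fun h' => h.2 (hXZ.1 h')⟩
      · intro a ha b hb hab
        have d1 := hPd a ha b hb hab
        have d2 : g a ≠ g b := by
          intro h
          exact Set.disjoint_left.mp d1 (hg a ha).1 (h ▸ (hg b hb).1)
        have d3 := hQd _ (hg a ha).2 _ (hg b hb).2 d2
        have d4 := key a ha b hb hab
        have d5 := key b hb a ha hab.symm
        simp only [Set.disjoint_union_left, Set.disjoint_union_right]
        exact ⟨⟨d1, d5.symm⟩, d4, d3⟩
    · push Not at hB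
      let R' : V → V → Prop := fun a b => R a b ∧ a ≠ v
      have hbd : ∀ Z, bd R' Z = bd R Z \ {v} := by
        intro Z
        ext y
        constructor
        · rintro ⟨h1, z, h2, h3, h4⟩
          exact ⟨⟨h1, z, h2, h3⟩, h4⟩
        · rintro ⟨⟨h1, z, h2, h3⟩, h4⟩
          exact ⟨h1, z, h2, h3, h4⟩
      have hsub : bd R' (insert w X) ⊆ insert w (bd R X \ {v}) := by
        rw [hbd]
        rintro y ⟨⟨h1, z, h2, h3⟩, h4⟩
        rcases h1 with h1 | h1
        · exact Or.inl h1
        · exact Or.inr ⟨⟨h1, z, fun h => h2 (Or.inr h), h3⟩, h4⟩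
      have hcard : (insert w (bd R X \ {v})).ncard = (bd R X).ncard := by
        rw [Set.ncard_insert_of_notMem (fun h => hwX h.1.1) (Set.toFinite _)]
        exact Set.ncard_sdiff_singleton_add_one hvX (Set.toFinite _)
      have hge : ∀ Z, insert w X ⊆ Z → Z ⊆ Y → (bd R X).ncard ≤ (bd R' Z).ncard := by
        intro Z h1 h2
        rw [hbd]
        have hXZ : X ⊆ Z := (Set.subset_insert _ _).trans h1
        by_cases hZY : Z = Y
        · subst hZY
          rw [Set.sdiff_singleton_eq_self hvY]
          exact hZ _ hXY subset_rfl
        · have h3 := hB Z ⟨hXZ, fun h => hwX (h (h1 (Or.inl rfl)))⟩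
            ⟨h2, fun h => hZY (h2.antisymm h)⟩
          have h4 := Set.le_ncard_sdiff {v} (bd R Z) (Set.toFinite _)
          rw [Set.ncard_singleton] at h4
          omega
      have hins : insert w X ⊆ Y := Set.insert_subset hwY hXY
      have heq : bd R' (insert w X) = insert w (bd R X \ {v}) := by
        apply Set.eq_of_subset_of_ncard_le hsub _ (Set.toFinite _)
        rw [hcard]
        exact hge _ subset_rfl hins
      have c1 : (Y \ insert w X).ncard < (Y \ X).ncard := by
        apply Set.ncard_lt_ncard _ (Set.toFinite _)
        refine ⟨Set.sdiff_subset_sdiff_right (Set.subset_insert _ _), fun h => ?_⟩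
        exact (h ⟨hwY, hwX⟩).2 (Or.inl rfl)
      obtain ⟨P, hP, hPd⟩ := ih R' (fun a b h => hR a b h.1) (insert w X) Y hins (by omega)
        (fun Z h1 h2 => by rw [heq, hcard]; exact hge Z h1 h2)
      have hw' : w ∈ bd R' (insert w X) := by rw [heq]; exact Or.inl rfl
      have hu' : ∀ u ∈ bd R X, u ≠ v → u ∈ bd R' (insert w X) := by
        intro u hu huv; rw [heq]; exact Or.inr ⟨hu, huv⟩
      have hsubY : bd R' Y ⊆ bd R Y := by rw [hbd]; exact Set.sdiff_subset
      have hvP : ∀ u ∈ bd R' (insert w X), v ∉ P u := by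
        intro u hu hv
        rcases (hP u hu).2.2.1 hv with h | h
        · subst h
          rw [hbd] at hu
          exact hu.2 rfl
        · exact h.2 (Or.inr hvX')
      have key : ∀ u ∈ bd R X, u ≠ v → Disjoint (insert v (P w)) (P u) := by
        intro u hu huv
        rw [Set.disjoint_insert_left]
        refine ⟨hvP u (hu' u hu huv), hPd w hw' u (hu' u hu huv) ?_⟩
        rintro rfl
        exact hwX hu.1
      classical
      refine ⟨fun u => if u = v then insert v (P w) else P u, ?_, ?_⟩
      · intro u hu
        by_cases huv : u = v
        · subst huv
          obtain ⟨p1, p2, p3, y, p4, p5⟩ := hP w hw'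
          simp only [if_true]
          refine ⟨Or.inl rfl, ?_, ?_, y, Or.inr p4, hsubY p5⟩
          · exact (Conn.singleton G u).union p2 rfl p1 (Or.inr (hR _ _ hvw))
          · apply Set.insert_subset_insert
            refine p3.trans (Set.insert_subset ⟨hwY, hwX⟩ ?_)
            exact Set.sdiff_subset_sdiff_right (Set.subset_insert _ _)
        · obtain ⟨p1, p2, p3, y, p4, p5⟩ := hP u (hu' u hu huv)
          simp only [huv, if_false]
          refine ⟨p1, p2, p3.trans (Set.insert_subset_insert
            (Set.sdiff_subset_sdiff_right (Set.subset_insert _ _))), y, p4, hsubY p5⟩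
      · intro a ha b hb hab
        by_cases hav : a = v
        · have hbv : b ≠ v := fun h => hab (hav.trans h.symm)
          simp only [hav, hbv, if_true, if_false]
          exact key b hb hbv
        · by_cases hbv : b = v
          · simp only [hav, hbv, if_true, if_false]
            exact (key a ha hav).symm
          · simp only [hav, hbv, if_false]
            exact hPd _ (hu' a ha hav) _ (hu' b hb hbv) hab

/-- sets reachable by adding vertices one at a time while keeping the boundary small -/
inductive Good {V : Type*} (G : SimpleGraph V) (N : ℕ) : Set V → Prop
  | empty : Good G N ∅
  | step (A : Set V) (v : V) : Good G N A → (bd G.Adj (insert v A)).ncard ≤ N →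
      Good G N (insert v A)

theorem good_inter {V : Type*} [Finite V] {G : SimpleGraph V} {N : ℕ} {Y Z : Set V}
    (hmin : ∀ W, Z ⊆ W → W ⊆ Y → (bd G.Adj Z).ncard ≤ (bd G.Adj W).ncard) (hZY : Z ⊆ Y)
    {A : Set V} (hA : Good G N A) : A ⊆ Y → Good G N (A ∩ Z) := by
  induction hA with
  | empty => intro _; simpa using Good.empty
  | step A v hA hc ih =>
    intro hsub
    have h1 := ih ((Set.subset_insert _ _).trans hsub)
    by_cases hv : v ∈ Z
    · have h2 := bd_submod G.Adj (insert v A) Z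
      have h3 := hmin (insert v A ∪ Z) Set.subset_union_right (Set.union_subset hsub hZY)
      rw [Set.insert_inter_of_mem hv] at h2 ⊢
      exact Good.step _ _ h1 (by omega)
    · rw [Set.insert_inter_of_notMem hv]
      exact h1

theorem good_extract {V : Type*} {G : SimpleGraph V} {N : ℕ} (P : Set V → Prop) (h0 : P ∅)
    {X : Set V} (hX : Good G N X) : ¬ P X →
    ∃ A v, (bd G.Adj (insert v A)).ncard ≤ N ∧ P A ∧ ¬ P (insert v A) := by
  induction hX with
  | empty => intro h; exact absurd h0 h
  | step A v hA hc ih =>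
    intro h
    by_cases hP : P A
    · exact ⟨A, v, hc, hP, h⟩
    · exact ih hP

/-- model of the first `i` vertices of the ternary heap-ordered tree inside `X` -/
def Model {V : Type*} (G : SimpleGraph V) (X : Set V) (i : ℕ) (f : ℕ → Set V) : Prop :=
  (∀ j < i, f j ⊆ X ∧ Conn G (f j)) ∧
  (∀ j < i, ∀ l < i, j ≠ l → Disjoint (f j) (f l)) ∧
  (∀ j, 0 < j → j < i → ∃ a ∈ f j, ∃ c ∈ f ((j - 1) / 3), G.Adj a c)

def State {V : Type*} (G : SimpleGraph V) (N i : ℕ) : Prop :=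
  ∃ (X : Set V) (f : ℕ → Set V) (b : ℕ → V), Good G N X ∧
    (∀ Z, Good G N Z → X ⊆ Z → (bd G.Adj Z).ncard ≤ i → Z ⊆ X) ∧
    (bd G.Adj X).ncard = i ∧ Model G X i f ∧ ∀ j < i, b j ∈ bd G.Adj X ∧ b j ∈ f j

theorem exists_max {V : Type*} [Finite V] (G : SimpleGraph V) (N i : ℕ) {X : Set V}
    (hX : Good G N X) (hc : (bd G.Adj X).ncard ≤ i) :
    ∃ Y, X ⊆ Y ∧ Good G N Y ∧ (bd G.Adj Y).ncard ≤ i ∧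
      ∀ Z, Good G N Z → Y ⊆ Z → (bd G.Adj Z).ncard ≤ i → Z ⊆ Y := by
  obtain ⟨Y, h1, h2⟩ := (Set.toFinite {Z | Good G N Z ∧ (bd G.Adj Z).ncard ≤ i}).exists_le_maximal
    (show X ∈ _ from ⟨hX, hc⟩)
  exact ⟨Y, h1, h2.1.1, h2.1.2, fun Z hZ hYZ hcZ => h2.2 ⟨hZ, hcZ⟩ hYZ⟩

theorem state_zero {V : Type*} [Finite V] [Nonempty V] (G : SimpleGraph V) (N : ℕ) :
    State G N 0 := by
  obtain ⟨Y, -, h1, h2, h3⟩ := exists_max G N 0 (X := ∅) Good.empty (by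
    have : bd G.Adj (∅ : Set V) = ∅ := by
      ext; simp [bd]
    rw [this]; simp)
  refine ⟨Y, fun _ => ∅, fun _ => Classical.arbitrary V, h1, h3, by omega, ⟨?_, ?_, ?_⟩, ?_⟩ <;>
    intros <;> omega

theorem state_succ {V : Type*} [Finite V] (G : SimpleGraph V) (N i : ℕ) (hi : i < N)
    (hu : ¬ Good G N Set.univ) (h : State G N i) : State G N (i + 1) := by
  obtain ⟨X, f, b, hX, hmax, hcard, ⟨hf, hdis, hedge⟩, hb⟩ := h
  have hx : ∃ x, x ∉ X ∧ (0 < i → G.Adj (b ((i - 1) / 3)) x) := by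
    rcases Nat.eq_zero_or_pos i with h0 | h0
    · have : X ≠ Set.univ := fun h => hu (h ▸ hX)
      obtain ⟨x, hx⟩ := (Set.ne_univ_iff_exists_notMem X).mp this
      exact ⟨x, hx, fun h => by omega⟩
    · obtain ⟨_, x, hx, hadj⟩ := (hb ((i - 1) / 3) (by omega)).1
      exact ⟨x, hx, fun _ => hadj⟩
  obtain ⟨x, hxX, hxadj⟩ := hx
  have hsub : bd G.Adj (insert x X) ⊆ insert x (bd G.Adj X) := by
    rintro y ⟨h1, z, h2, h3⟩
    rcases h1 with h1 | h1
    · exact Or.inl h1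
    · exact Or.inr ⟨h1, z, fun h => h2 (Or.inr h), h3⟩
  have hcins : (insert x (bd G.Adj X)).ncard = i + 1 := by
    rw [Set.ncard_insert_of_notMem (fun h => hxX h.1) (Set.toFinite _), hcard]
  have hle : (bd G.Adj (insert x X)).ncard ≤ i + 1 := by
    rw [← hcins]
    exact Set.ncard_le_ncard hsub (Set.toFinite _)
  have hgood : Good G N (insert x X) := Good.step _ _ hX (by omega)
  have hbig : ∀ Z, Good G N Z → insert x X ⊆ Z → i + 1 ≤ (bd G.Adj Z).ncard := by
    intro Z hZ hXZ
    by_contra hlt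
    exact hxX (hmax Z hZ ((Set.subset_insert _ _).trans hXZ) (by omega) (hXZ (Or.inl rfl)))
  have heq : bd G.Adj (insert x X) = insert x (bd G.Adj X) := by
    apply Set.eq_of_subset_of_ncard_le hsub _ (Set.toFinite _)
    rw [hcins]
    exact hbig _ hgood subset_rfl
  obtain ⟨Y, hXY, hY, hYc, hYmax⟩ := exists_max G N (i + 1) hgood hle
  have hmid : ∀ Z, insert x X ⊆ Z → Z ⊆ Y → i + 1 ≤ (bd G.Adj Z).ncard := by
    obtain ⟨Z0, ⟨hZ1, hZ2⟩, hZ3⟩ := Set.exists_min_image {Z | insert x X ⊆ Z ∧ Z ⊆ Y}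
      (fun Z => (bd G.Adj Z).ncard) (Set.toFinite _) ⟨Y, hXY, subset_rfl⟩
    have hg : Good G N (Y ∩ Z0) :=
      good_inter (fun W h1 h2 => hZ3 W ⟨hZ1.trans h1, h2⟩) hZ2 hY subset_rfl
    rw [Set.inter_eq_self_of_subset_right hZ2] at hg
    intro Z h1 h2
    exact (hbig Z0 hg hZ1).trans (hZ3 Z ⟨h1, h2⟩)
  obtain ⟨P, hP, hPd⟩ := menger G _ G.Adj (fun _ _ h => h) (insert x X) Y hXY le_rfl
    (fun Z h1 h2 => hle.trans (hmid Z h1 h2))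
  have hbX : ∀ j < i, b j ∈ bd G.Adj (insert x X) := by
    intro j hj; rw [heq]; exact Or.inr (hb j hj).1
  have hxb : x ∈ bd G.Adj (insert x X) := by rw [heq]; exact Or.inl rfl
  have hbne : ∀ j < i, ∀ l < i, j ≠ l → b j ≠ b l := by
    intro j hj l hl hjl h
    exact Set.disjoint_left.mp (hdis j hj l hl hjl) (hb j hj).2 (h ▸ (hb l hl).2)
  have hxne : ∀ j < i, b j ≠ x := by
    rintro j hj rfl
    exact hxX (hb j hj).1.1
  have hfP : ∀ j < i, ∀ u ∈ bd G.Adj (insert x X), u ∉ f j → Disjoint (f j) (P u) := by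
    intro j hj u hu huf
    rw [Set.disjoint_left]
    intro y h1 h2
    rcases (hP u hu).2.2.1 h2 with rfl | h
    · exact huf h1
    · exact h.2 (Or.inr ((hf j hj).1 h1))
  have hPY : ∀ u ∈ bd G.Adj (insert x X), P u ⊆ Y := by
    intro u hu y hy
    rcases (hP u hu).2.2.1 hy with rfl | h
    · exact hXY hu.1
    · exact h.1
  have hbf : ∀ j < i, ∀ l < i, j ≠ l → b l ∉ f j := by
    intro j hj l hl hjl h
    exact Set.disjoint_left.mp (hdis j hj l hl hjl) h (hb l hl).2
  have hxf : ∀ j < i, x ∉ f j := fun j hj h => hxX ((hf j hj).1 h)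
  classical
  let f' : ℕ → Set V := fun j => if j = i then P x else f j ∪ P (b j)
  have f'i : f' i = P x := if_pos rfl
  have f'j : ∀ j < i, f' j = f j ∪ P (b j) := fun j hj => if_neg (by omega)
  have hgw : ∀ j, ∃ w, j < i + 1 → w ∈ bd G.Adj Y ∧ w ∈ f' j := by
    intro j
    by_cases hj : j < i
    · obtain ⟨w, h1, h2⟩ := (hP _ (hbX j hj)).2.2.2
      exact ⟨w, fun _ => ⟨h2, by rw [f'j j hj]; exact Or.inr h1⟩⟩
    · by_cases hji : j = i
      · obtain ⟨w, h1, h2⟩ := (hP _ hxb).2.2.2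
        exact ⟨w, fun _ => ⟨h2, by rw [hji, f'i]; exact h1⟩⟩
      · exact ⟨x, fun h => by omega⟩
  choose b' hb' using hgw
  refine ⟨Y, f', b', hY, hYmax, ?_, ⟨?_, ?_, ?_⟩, hb'⟩
  · have := hbig Y hY hXY
    omega
  · intro j hj
    by_cases hji : j = i
    · rw [hji, f'i]
      exact ⟨hPY x hxb, (hP x hxb).2.1⟩
    · have hj' : j < i := by omega
      rw [f'j j hj']
      refine ⟨Set.union_subset ?_ (hPY _ (hbX j hj')), ?_⟩
      · exact (hf j hj').1.trans ((Set.subset_insert _ _).trans hXY)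
      · exact (hf j hj').2.union (hP _ (hbX j hj')).2.1 (hb j hj').2 (hP _ (hbX j hj')).1
          (Or.inl rfl)
  · have hlast : ∀ j < i, Disjoint (f' j) (f' i) := by
      intro j hj
      rw [f'i, f'j j hj, Set.disjoint_union_left]
      exact ⟨hfP j hj x hxb (hxf j hj), hPd _ (hbX j hj) _ hxb (hxne j hj)⟩
    intro j hj l hl hjl
    by_cases hji : j = i
    · rw [hji]
      exact (hlast l (by omega)).symm
    · by_cases hli : l = i
      · rw [hli]
        exact hlast j (by omega)
      · have hj' : j < i := by omega
        have hl' : l < i := by omega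
        rw [f'j j hj', f'j l hl']
        simp only [Set.disjoint_union_left, Set.disjoint_union_right]
        exact ⟨⟨hdis j hj' l hl' hjl, (hfP l hl' _ (hbX j hj') (hbf l hl' j hj' hjl.symm)).symm⟩,
          hfP j hj' _ (hbX l hl') (hbf j hj' l hl' hjl),
          hPd _ (hbX j hj') _ (hbX l hl') (hbne j hj' l hl' hjl)⟩
  · intro j h0 hj
    by_cases hji : j = i
    · subst hji
      have hp : (j - 1) / 3 < j := by omega
      refine ⟨x, by rw [f'i]; exact (hP x hxb).1, b ((j - 1) / 3), ?_, (hxadj h0).symm⟩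
      rw [f'j _ hp]
      exact Or.inl (hb _ hp).2
    · have hj' : j < i := by omega
      obtain ⟨a, ha, c, hc, h⟩ := hedge j h0 hj'
      refine ⟨a, by rw [f'j j hj']; exact Or.inl ha, c, ?_, h⟩
      rw [f'j _ (by omega)]
      exact Or.inl hc

/-- key dichotomy -/
theorem key {V : Type*} [Finite V] (G : SimpleGraph V) (N : ℕ) (P : Set V → Prop) (h0 : P ∅)
    (hmod : ∀ X f, Model G X N f → ¬ P X) :
    P Set.univ ∨ ∃ A v, (bd G.Adj (insert v A)).ncard ≤ N ∧ P A ∧ ¬ P (insert v A) := by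
  rcases isEmpty_or_nonempty V with hV | hV
  · left
    rwa [Set.univ_eq_empty_iff.mpr hV]
  by_cases hg : Good G N Set.univ
  · by_cases hP : P Set.univ
    · exact Or.inl hP
    · exact Or.inr (good_extract P h0 hg hP)
  · right
    have : ∀ i, i ≤ N → State G N i := by
      intro i
      induction i with
      | zero => intro _; exact state_zero G N
      | succ i ih => intro hi; exact state_succ G N i (by omega) hg (ih (by omega))
    obtain ⟨X, f, b, hX, -, -, hm, -⟩ := this N le_rfl
    exact good_extract P h0 hX (hmod X f hm)

/-- `G[U]` has a path decomposition of width at most `t`. -/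
def PW {V : Type*} (G : SimpleGraph V) (t : ℕ) (U : Set V) : Prop :=
  ∃ p, ∃ B : Fin p → Set V, IsPathDecompOn G U p B ∧ ∀ i, (B i).ncard ≤ t + 1

theorem PW.empty {V : Type*} (G : SimpleGraph V) (t : ℕ) : PW G t ∅ :=
  ⟨0, fun _ => ∅, ⟨fun i => i.elim0, fun v hv => absurd hv (by simp),
    fun u v _ hu => absurd hu (by simp), fun v i => i.elim0⟩, fun i => i.elim0⟩

theorem PW.mono {V : Type*} [Finite V] {G : SimpleGraph V} {t : ℕ} {U W : Set V} (h : PW G t U)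
    (hWU : W ⊆ U) : PW G t W := by
  obtain ⟨p, B, ⟨h1, h2, h3, h4⟩, h5⟩ := h
  refine ⟨p, fun i => B i ∩ W, ⟨fun i => Set.inter_subset_right, ?_, ?_, ?_⟩, ?_⟩
  · intro v hv
    obtain ⟨i, hi⟩ := h2 v (hWU hv)
    exact ⟨i, hi, hv⟩
  · intro u v huv hu hv
    obtain ⟨i, hi, hi'⟩ := h3 huv (hWU hu) (hWU hv)
    exact ⟨i, ⟨hi, hu⟩, hi', hv⟩
  · intro v i j l hij hjl hi hl
    exact ⟨h4 v i j l hij hjl hi.1 hl.1, hi.2⟩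
  · intro i
    exact (Set.ncard_le_ncard Set.inter_subset_left (Set.toFinite _)).trans (h5 i)

theorem PW.union {V : Type*} {G : SimpleGraph V} {t : ℕ} {U W : Set V} (h : PW G t U)
    (h' : PW G t W) (hd : Disjoint U W) (hno : ∀ u ∈ U, ∀ w ∈ W, ¬ G.Adj u w) :
    PW G t (U ∪ W) := by
  obtain ⟨p, B, ⟨h1, h2, h3, h4⟩, h5⟩ := h
  obtain ⟨q, C, ⟨k1, k2, k3, k4⟩, k5⟩ := h'
  refine ⟨p + q, Fin.append B C, ⟨?_, ?_, ?_, ?_⟩, ?_⟩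
  · intro i
    refine Fin.addCases (fun i => ?_) (fun i => ?_) i
    · rw [Fin.append_left]; exact (h1 i).trans Set.subset_union_left
    · rw [Fin.append_right]; exact (k1 i).trans Set.subset_union_right
  · rintro v (hv | hv)
    · obtain ⟨i, hi⟩ := h2 v hv
      exact ⟨Fin.castAdd q i, by rwa [Fin.append_left]⟩
    · obtain ⟨i, hi⟩ := k2 v hv
      exact ⟨Fin.natAdd p i, by rwa [Fin.append_right]⟩
  · rintro u v huv (hu | hu) (hv | hv)
    · obtain ⟨i, hi⟩ := h3 huv hu hv
      exact ⟨Fin.castAdd q i, by rwa [Fin.append_left]⟩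
    · exact absurd huv (hno u hu v hv)
    · exact absurd huv.symm (hno v hv u hu)
    · obtain ⟨i, hi⟩ := k3 huv hu hv
      exact ⟨Fin.natAdd p i, by rwa [Fin.append_right]⟩
  · intro v i j l
    have hdd := Set.disjoint_left.mp hd
    refine Fin.addCases (fun i => ?_) (fun i => ?_) i <;>
    refine Fin.addCases (fun j => ?_) (fun j => ?_) j <;>
    refine Fin.addCases (fun l => ?_) (fun l => ?_) l <;>
    simp only [Fin.append_left, Fin.append_right, Fin.le_def, Fin.val_castAdd, Fin.val_natAdd] <;>
    intro hij hjl hi hl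
    · exact h4 v i j l hij hjl hi hl
    · exact absurd (k1 _ hl) (hdd (h1 _ hi))
    · omega
    · exact absurd (k1 _ hl) (hdd (h1 _ hi))
    · omega
    · omega
    · omega
    · exact k4 v i j l (by rw [Fin.le_def]; omega) (by rw [Fin.le_def]; omega) hi hl
  · intro i
    refine Fin.addCases (fun i => ?_) (fun i => ?_) i
    · rw [Fin.append_left]; exact h5 i
    · rw [Fin.append_right]; exact k5 i

theorem PW_image {V W : Type*} {G : SimpleGraph V} {H : SimpleGraph W} (f : G ↪g H)
    {t : ℕ} {U : Set V} : PW H t (f '' U) ↔ PW G t U := by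
  constructor
  · rintro ⟨p, B, ⟨h1, h2, h3, h4⟩, h5⟩
    refine ⟨p, fun i => f ⁻¹' B i, ⟨?_, ?_, ?_, ?_⟩, ?_⟩
    · intro i v hv
      obtain ⟨u, hu, he⟩ := h1 i hv
      rwa [← f.injective he]
    · intro v hv
      exact h2 _ ⟨v, hv, rfl⟩
    · intro u v huv hu hv
      exact h3 (f.map_adj_iff.mpr huv) ⟨u, hu, rfl⟩ ⟨v, hv, rfl⟩
    · intro v i j l hij hjl hi hl
      exact h4 _ i j l hij hjl hi hl
    · intro i
      have hr : B i ⊆ Set.range f := (h1 i).trans (Set.image_subset_range _ _)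
      have : f '' (f ⁻¹' B i) = B i := Set.image_preimage_eq_of_subset hr
      rw [← Set.ncard_image_of_injective _ f.injective, this]
      exact h5 i
  · rintro ⟨p, B, ⟨h1, h2, h3, h4⟩, h5⟩
    refine ⟨p, fun i => f '' B i, ⟨?_, ?_, ?_, ?_⟩, ?_⟩
    · intro i
      exact Set.image_mono (h1 i)
    · rintro _ ⟨v, hv, rfl⟩
      obtain ⟨i, hi⟩ := h2 v hv
      exact ⟨i, v, hi, rfl⟩
    · rintro _ _ huv ⟨u, hu, rfl⟩ ⟨v, hv, rfl⟩
      obtain ⟨i, hi, hi'⟩ := h3 (f.map_adj_iff.mp huv) hu hv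
      exact ⟨i, ⟨u, hi, rfl⟩, v, hi', rfl⟩
    · rintro _ i j l hij hjl ⟨v, hi, rfl⟩ ⟨v', hl, he⟩
      rw [f.injective he] at hl
      exact ⟨v, h4 _ i j l hij hjl hi hl, rfl⟩
    · intro i
      rw [Set.ncard_image_of_injective _ f.injective]
      exact h5 i

theorem pathwidth_le_iff {V : Type*} [Finite V] (G : SimpleGraph V) (t : ℕ) (U : Set V) :
    pathwidth (G.induce U) ≤ t ↔ PW G t U := by
  have e : PW G t U ↔ PW (G.induce U) t Set.univ := by
    rw [← PW_image (SimpleGraph.Embedding.induce U : G.induce U ↪g G)]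
    have : (SimpleGraph.Embedding.induce U : G.induce U ↪g G) '' Set.univ = U := by
      ext y; simp
    rw [this]
  rw [e]
  constructor
  · intro h
    have hne : {t | ∃ p, ∃ B : Fin p → Set U, IsPathDecompOn (G.induce U) Set.univ p B ∧
        ∀ i, (B i).ncard ≤ t + 1}.Nonempty := by
      refine ⟨(Set.univ : Set U).ncard, 1, fun _ => Set.univ, ⟨?_, ?_, ?_, ?_⟩, ?_⟩
      · intro _; exact subset_rfl
      · intro v _; exact ⟨0, trivial⟩
      · intro u v _ _ _; exact ⟨0, trivial, trivial⟩
      · intros; trivial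
      · intro i; exact Nat.le_succ _
    obtain ⟨p, B, hB, hc⟩ := Nat.sInf_mem hne
    exact ⟨p, B, hB, fun i => (hc i).trans (Nat.succ_le_succ h)⟩
  · intro h
    exact Nat.sInf_le h

/-! ### Lower bound -/

theorem conn_bag {V : Type*} {G : SimpleGraph V} {A S : Set V} {p : ℕ} {B : Fin p → Set V}
    (hB : IsPathDecompOn G A p B) (hS : Conn G S) (hSA : S ⊆ A) {i j l : Fin p} (hij : i ≤ j)
    (hjl : j ≤ l) (hi : ∃ a ∈ S, a ∈ B i) (hl : ∃ a ∈ S, a ∈ B l) : ∃ a ∈ S, a ∈ B j := by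
  by_contra hno
  push Not at hno
  obtain ⟨-, -, h3, h4⟩ := hB
  obtain ⟨a, ha, hai⟩ := hi
  obtain ⟨c, hc, hcl⟩ := hl
  have hij' : i < j := lt_of_le_of_ne hij (by rintro rfl; exact hno a ha hai)
  obtain ⟨x, hx, y, hy, hxA, hyA, hadj⟩ := hS.2 {v | ∃ q < j, v ∈ B q} ⟨a, ha, i, hij', hai⟩
    ⟨c, hc, by
      rintro ⟨q, hq, hcq⟩
      exact hno c hc (h4 c q j l hq.le hjl hcq hcl)⟩
  obtain ⟨q, hq, hxq⟩ := hxA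
  obtain ⟨r, hxr, hyr⟩ := h3 hadj (hSA hx) (hSA hy)
  rcases lt_or_ge r j with h | h
  · exact hyA ⟨r, h, hyr⟩
  · exact hno x hx (h4 x q j r hq.le h hxq hxr)

theorem mid_bag {V : Type*} [Finite V] {G : SimpleGraph V} {A S Sb C : Set V} {p s : ℕ}
    {B : Fin p → Set V}
    (hB : IsPathDecompOn G A p B) (hSA : S ⊆ A) (hC : Conn G C) (hCS : C ⊆ S) (hSb : Sb ⊆ S)
    (hd : Disjoint C Sb) {i j l : Fin p} (hij : i ≤ j) (hjl : j ≤ l)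
    (hi : ∃ a ∈ C, a ∈ B i) (hl : ∃ a ∈ C, a ∈ B l) (hj : s + 1 ≤ (B j ∩ Sb).ncard) :
    s + 2 ≤ (B j ∩ S).ncard := by
  obtain ⟨a, ha, haj⟩ := conn_bag hB hC (hCS.trans hSA) hij hjl hi hl
  have h1 : a ∉ B j ∩ Sb := fun h => Set.disjoint_left.mp hd ha h.2
  have h2 : insert a (B j ∩ Sb) ⊆ B j ∩ S :=
    Set.insert_subset ⟨haj, hCS ha⟩ (Set.inter_subset_inter_right _ hSb)
  have h3 := Set.ncard_le_ncard h2 (Set.toFinite _)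
  rw [Set.ncard_insert_of_notMem h1 (Set.toFinite _)] at h3
  omega

/-- indices of the subtree of height `s` at `j` -/
def D : ℕ → ℕ → Set ℕ
  | 0, j => {j}
  | s + 1, j => {j} ∪ (D s (3 * j + 1) ∪ (D s (3 * j + 2) ∪ D s (3 * j + 3)))

def par (x : ℕ) : ℕ := (x - 1) / 3

theorem D_lt (s : ℕ) : ∀ j x, x ∈ D s j → x < 4 ^ s * (j + 1) := by
  induction s with
  | zero => intro j x hx; simp only [D, Set.mem_singleton_iff] at hx; omega
  | succ s ih =>
    intro j x hx
    have hp : 0 < 4 ^ s := by positivity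
    rw [pow_succ]
    rcases hx with hx | hx | hx | hx
    · simp only [Set.mem_singleton_iff] at hx
      nlinarith
    all_goals
      have := ih _ _ hx
      nlinarith

theorem D_par (s : ℕ) : ∀ j x, x ∈ D s j → ∃ d, par^[d] x = j := by
  induction s with
  | zero => intro j x hx; exact ⟨0, hx⟩
  | succ s ih =>
    intro j x hx
    rcases hx with hx | hx | hx | hx
    · exact ⟨0, hx⟩
    all_goals
      obtain ⟨d, hd⟩ := ih _ _ hx
      refine ⟨d + 1, ?_⟩
      rw [Function.iterate_succ_apply', hd]
      unfold par
      omega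

theorem par_iter_le (n x : ℕ) : par^[n] x ≤ x := by
  induction n with
  | zero => simp
  | succ n ih =>
    rw [Function.iterate_succ_apply']
    have : par (par^[n] x) ≤ par^[n] x := by unfold par; omega
    omega

theorem D_disj (s a b j : ℕ) (ha : par a = j) (hb : par b = j) (hja : j < a) (hjb : j < b)
    (hab : a ≠ b) : Disjoint (D s a) (D s b) := by
  rw [Set.disjoint_left]
  intro x hxa hxb
  obtain ⟨d, hd⟩ := D_par s a x hxa
  obtain ⟨e, he⟩ := D_par s b x hxb
  rcases lt_trichotomy d e with h | h | h
  · obtain ⟨n, rfl⟩ := Nat.exists_eq_add_of_lt h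
    rw [show d + n + 1 = (n + 1) + d by ring, Function.iterate_add_apply, hd,
      Function.iterate_succ_apply, ha] at he
    have := par_iter_le n j
    omega
  · subst h
    exact hab (hd.symm.trans he)
  · obtain ⟨n, rfl⟩ := Nat.exists_eq_add_of_lt h
    rw [show e + n + 1 = (n + 1) + e by ring, Function.iterate_add_apply, he,
      Function.iterate_succ_apply, hb] at hd
    have := par_iter_le n j
    omega

theorem D_gt (s : ℕ) : ∀ j x, x ∈ D s j → j ≤ x := by
  intro j x hx
  obtain ⟨d, hd⟩ := D_par s j x hx
  have := par_iter_le d x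
  omega

theorem D_self (s j : ℕ) : j ∈ D s j := by
  cases s with
  | zero => exact rfl
  | succ s => exact Or.inl rfl

/-- union of the branch sets in a subtree -/
def T {V : Type*} (f : ℕ → Set V) (s j : ℕ) : Set V := {v | ∃ x ∈ D s j, v ∈ f x}

theorem T_succ {V : Type*} (f : ℕ → Set V) (s j : ℕ) : T f (s + 1) j =
    f j ∪ (T f s (3 * j + 1) ∪ (T f s (3 * j + 2) ∪ T f s (3 * j + 3))) := by
  ext v
  simp only [T, D, Set.mem_setOf_eq, Set.mem_union, Set.mem_singleton_iff]
  constructor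
  · rintro ⟨x, rfl | h | h | h, hv⟩
    · exact Or.inl hv
    · exact Or.inr (Or.inl ⟨x, h, hv⟩)
    · exact Or.inr (Or.inr (Or.inl ⟨x, h, hv⟩))
    · exact Or.inr (Or.inr (Or.inr ⟨x, h, hv⟩))
  · rintro (h | ⟨x, h, hv⟩ | ⟨x, h, hv⟩ | ⟨x, h, hv⟩)
    · exact ⟨j, Or.inl rfl, h⟩
    · exact ⟨x, Or.inr (Or.inl h), hv⟩
    · exact ⟨x, Or.inr (Or.inr (Or.inl h)), hv⟩
    · exact ⟨x, Or.inr (Or.inr (Or.inr h)), hv⟩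

theorem T_main {V : Type*} [Finite V] {G : SimpleGraph V} {A : Set V} {m : ℕ} {f : ℕ → Set V}
    (hM : Model G A m f) {p : ℕ} {B : Fin p → Set V} (hB : IsPathDecompOn G A p B) (s : ℕ) :
    ∀ j, 4 ^ s * (j + 1) ≤ m → Conn G (T f s j) ∧ T f s j ⊆ A ∧
      ∃ i, s + 1 ≤ (B i ∩ T f s j).ncard := by
  obtain ⟨hf, hdis, hedge⟩ := hM
  induction s with
  | zero =>
    intro j hj
    have hT : T f 0 j = f j := by ext v; simp [T, D]
    have hjm : j < m := by omega
    rw [hT]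
    refine ⟨(hf j hjm).2, (hf j hjm).1, ?_⟩
    obtain ⟨v, hv⟩ := (hf j hjm).2.1
    obtain ⟨i, hi⟩ := hB.2.1 v ((hf j hjm).1 hv)
    refine ⟨i, ?_⟩
    have : 0 < (B i ∩ f j).ncard := (Set.ncard_pos (Set.toFinite _)).mpr ⟨v, hi, hv⟩
    omega
  | succ s ih =>
    intro j hj
    have hp : 0 < 4 ^ s := by positivity
    rw [pow_succ] at hj
    have hjm : j < m := by nlinarith
    have ch : ∀ c, 3 * j + 1 ≤ c → c ≤ 3 * j + 3 → 4 ^ s * (c + 1) ≤ m := by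
      intro c _ h2
      have : 4 ^ s * (c + 1) ≤ 4 ^ s * (3 * j + 3 + 1) := Nat.mul_le_mul_left _ (by omega)
      nlinarith
    have link : ∀ c, 3 * j + 1 ≤ c → c ≤ 3 * j + 3 → ∃ a ∈ T f s c, ∃ b ∈ f j, G.Adj a b := by
      intro c h1 h2
      have hc : c < m := by have := ch c h1 h2; nlinarith
      obtain ⟨a, ha, b, hb, h⟩ := hedge c (by omega) hc
      rw [show (c - 1) / 3 = j by omega] at hb
      exact ⟨a, ⟨c, D_self s c, ha⟩, b, hb, h⟩
    have disj : ∀ a b, 3 * j + 1 ≤ a → a ≤ 3 * j + 3 → 3 * j + 1 ≤ b → b ≤ 3 * j + 3 → a ≠ b →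
        Disjoint (T f s a) (T f s b) := by
      intro a b h1 h2 h3 h4 hab
      rw [Set.disjoint_left]
      rintro v ⟨x, hx, hvx⟩ ⟨y, hy, hvy⟩
      have hxm : x < m := (D_lt s a x hx).trans_le (ch a h1 h2)
      have hym : y < m := (D_lt s b y hy).trans_le (ch b h3 h4)
      have hxy : x ≠ y := by
        rintro rfl
        exact Set.disjoint_left.mp (D_disj s a b j (by unfold par; omega) (by unfold par; omega)
          (by omega) (by omega) hab) hx hy
      exact Set.disjoint_left.mp (hdis x hxm y hym hxy) hvx hvy
    have disj0 : ∀ a, 3 * j + 1 ≤ a → a ≤ 3 * j + 3 → Disjoint (f j) (T f s a) := by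
      intro a h1 h2
      rw [Set.disjoint_left]
      rintro v hv ⟨x, hx, hvx⟩
      have hxm : x < m := (D_lt s a x hx).trans_le (ch a h1 h2)
      have := D_gt s a x hx
      exact Set.disjoint_left.mp (hdis j hjm x hxm (by omega)) hv hvx
    have con1 : ∀ a, 3 * j + 1 ≤ a → a ≤ 3 * j + 3 → ∀ S, Conn G S → f j ⊆ S →
        Conn G (S ∪ T f s a) := by
      intro a h1 h2 S hS hjS
      obtain ⟨x, hx, b, hb, h⟩ := link a h1 h2
      exact hS.union (ih a (ch a h1 h2)).1 (hjS hb) hx (Or.inr h.symm)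
    have hall : T f (s + 1) j = ((f j ∪ T f s (3 * j + 1)) ∪ T f s (3 * j + 2))
        ∪ T f s (3 * j + 3) := by
      rw [T_succ]; simp only [Set.union_assoc]
    have hconn : Conn G (T f (s + 1) j) := by
      rw [hall]
      apply con1 _ (by omega) (by omega)
      · apply con1 _ (by omega) (by omega)
        · exact con1 _ (by omega) (by omega) _ (hf j hjm).2 subset_rfl
        · exact Set.subset_union_left
      · exact Set.subset_union_left.trans Set.subset_union_left
    have hsubc : ∀ a, 3 * j + 1 ≤ a → a ≤ 3 * j + 3 → T f s a ⊆ T f (s + 1) j := by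
      intro a h1 h2 v hv
      rw [T_succ]
      have : a = 3 * j + 1 ∨ a = 3 * j + 2 ∨ a = 3 * j + 3 := by omega
      rcases this with rfl | rfl | rfl
      · exact Or.inr (Or.inl hv)
      · exact Or.inr (Or.inr (Or.inl hv))
      · exact Or.inr (Or.inr (Or.inr hv))
    have hsub0 : f j ⊆ T f (s + 1) j := by rw [T_succ]; exact Set.subset_union_left
    have hA : T f (s + 1) j ⊆ A := by
      rw [T_succ]
      refine Set.union_subset (hf j hjm).1 (Set.union_subset ?_ (Set.union_subset ?_ ?_))
      all_goals exact (ih _ (ch _ (by omega) (by omega))).2.1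
    refine ⟨hconn, hA, ?_⟩
    have step : ∀ a b c, 3 * j + 1 ≤ a → a ≤ 3 * j + 3 → 3 * j + 1 ≤ b → b ≤ 3 * j + 3 →
        3 * j + 1 ≤ c → c ≤ 3 * j + 3 → a ≠ b → c ≠ b → ∀ i l q : Fin p, i ≤ l → l ≤ q →
        s + 1 ≤ (B i ∩ T f s a).ncard → s + 1 ≤ (B l ∩ T f s b).ncard →
        s + 1 ≤ (B q ∩ T f s c).ncard → ∃ i, s + 1 + 1 ≤ (B i ∩ T f (s + 1) j).ncard := by
      intro a b c a1 a2 b1 b2 c1 c2 hab hcb i l q hil hlq hi hl hq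
      refine ⟨l, ?_⟩
      obtain ⟨x, hx1, hx2⟩ := (Set.ncard_pos (Set.toFinite _)).mp (show 0 < (B i ∩ T f s a).ncard by omega)
      obtain ⟨y, hy1, hy2⟩ := (Set.ncard_pos (Set.toFinite _)).mp (show 0 < (B q ∩ T f s c).ncard by omega)
      refine mid_bag (C := (f j ∪ T f s a) ∪ T f s c) (Sb := T f s b) hB hA ?_ ?_ (hsubc b b1 b2) ?_
        hil hlq ⟨x, Or.inl (Or.inr hx2), hx1⟩ ⟨y, Or.inr hy2, hy1⟩ hl
      · exact con1 c c1 c2 _ (con1 a a1 a2 _ (hf j hjm).2 subset_rfl) Set.subset_union_left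
      · exact Set.union_subset (Set.union_subset hsub0 (hsubc a a1 a2)) (hsubc c c1 c2)
      · simp only [Set.disjoint_union_left]
        exact ⟨⟨disj0 b b1 b2, disj a b a1 a2 b1 b2 hab⟩, disj c b c1 c2 b1 b2 hcb⟩
    obtain ⟨-, -, i1, h1⟩ := ih (3 * j + 1) (ch _ (by omega) (by omega))
    obtain ⟨-, -, i2, h2⟩ := ih (3 * j + 2) (ch _ (by omega) (by omega))
    obtain ⟨-, -, i3, h3⟩ := ih (3 * j + 3) (ch _ (by omega) (by omega))
    rcases le_total i1 i2 with h12 | h12 <;> rcases le_total i2 i3 with h23 | h23 <;>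
      rcases le_total i1 i3 with h13 | h13
    · exact step _ _ _ (by omega) (by omega) (by omega) (by omega) (by omega) (by omega)
        (by omega) (by omega) i1 i2 i3 h12 h23 h1 h2 h3
    · exact step _ _ _ (by omega) (by omega) (by omega) (by omega) (by omega) (by omega)
        (by omega) (by omega) i1 i2 i3 h12 h23 h1 h2 h3
    · exact step _ _ _ (by omega) (by omega) (by omega) (by omega) (by omega) (by omega)
        (by omega) (by omega) i1 i3 i2 h13 h23 h1 h3 h2
    · exact step _ _ _ (by omega) (by omega) (by omega) (by omega) (by omega) (by omega)
        (by omega) (by omega) i3 i1 i2 h13 h12 h3 h1 h2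
    · exact step _ _ _ (by omega) (by omega) (by omega) (by omega) (by omega) (by omega)
        (by omega) (by omega) i2 i1 i3 h12 h13 h2 h1 h3
    · exact step _ _ _ (by omega) (by omega) (by omega) (by omega) (by omega) (by omega)
        (by omega) (by omega) i2 i3 i1 h23 h13 h2 h3 h1
    · exact step _ _ _ (by omega) (by omega) (by omega) (by omega) (by omega) (by omega)
        (by omega) (by omega) i3 i2 i1 h23 h12 h3 h2 h1
    · exact step _ _ _ (by omega) (by omega) (by omega) (by omega) (by omega) (by omega)
        (by omega) (by omega) i3 i2 i1 h23 h12 h3 h2 h1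

theorem model_not_PW {V : Type*} [Finite V] (G : SimpleGraph V) (t : ℕ) (X : Set V)
    (f : ℕ → Set V) (hM : Model G X (4 ^ (t + 1)) f) : ¬ PW G t X := by
  rintro ⟨p, B, hB, hc⟩
  obtain ⟨-, -, i, hi⟩ := T_main hM hB (t + 1) 0 (by simp)
  have h1 := hc i
  have h2 := Set.ncard_le_ncard (Set.inter_subset_left (s := B i) (t := T f (t + 1) 0))
    (Set.toFinite _)
  omega

theorem key_on {V : Type*} [Finite V] (G : SimpleGraph V) (t : ℕ) (U : Set V) (hU : ¬ PW G t U) :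
    ∃ X F : Set V, X ⊆ U ∧ F ⊆ X ∧ F.ncard ≤ 4 ^ (t + 1) + 1 ∧ ¬ PW G t X ∧ PW G t (X \ F) ∧
      ∀ u ∈ X \ F, ∀ w ∈ U \ X, ¬ G.Adj u w := by
  let e : G.induce U ↪g G := SimpleGraph.Embedding.induce U
  have heU : e '' Set.univ = U := by
    ext y; simp [e]
  have he : ∀ x, e x = (x : V) := fun _ => rfl
  rcases key (G.induce U) (4 ^ (t + 1)) (PW (G.induce U) t) (PW.empty _ _)
    (fun X f h => model_not_PW _ t X f h) with h | ⟨A, v, hc, hA, hnA⟩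
  · rw [← PW_image e, heU] at h
    exact absurd h hU
  refine ⟨e '' (insert v A), e '' (insert v (bd (G.induce U).Adj (insert v A))), ?_, ?_, ?_, ?_,
    ?_, ?_⟩
  · rintro _ ⟨x, -, rfl⟩
    exact x.2
  · apply Set.image_mono
    exact Set.insert_subset (Or.inl rfl) (fun x hx => hx.1)
  · rw [Set.ncard_image_of_injective _ e.injective]
    exact (Set.ncard_insert_le _ _).trans (by omega)
  · rwa [PW_image]
  · rw [← PW_image e] at hA
    apply hA.mono
    rw [← Set.image_diff e.injective]
    apply Set.image_mono
    rintro x ⟨rfl | hx, h2⟩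
    · exact absurd (Or.inl rfl) h2
    · exact hx
  · rw [← Set.image_diff e.injective]
    rintro _ ⟨x, ⟨hx1, hx2⟩, rfl⟩ w ⟨hwU, hw⟩ hadj
    apply hx2
    refine Or.inr ⟨hx1, ⟨w, hwU⟩, fun h => hw ⟨_, h, rfl⟩, ?_⟩
    exact hadj

theorem main_on {V : Type*} [Finite V] (G : SimpleGraph V) (t k : ℕ) : ∀ U : Set V,
    (∃ S : Fin k → Set V, (∀ a, S a ⊆ U) ∧ (Pairwise fun a b => Disjoint (S a) (S b)) ∧
        ∀ a, ¬ PW G t (S a)) ∨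
      (∃ X : Set V, X.ncard ≤ (4 ^ (t + 1) + 1) * k ∧ PW G t (U \ X)) := by
  induction k with
  | zero =>
    intro U
    exact Or.inl ⟨fun _ => ∅, fun a => a.elim0, fun a => a.elim0, fun a => a.elim0⟩
  | succ k ih =>
    intro U
    by_cases hU : PW G t U
    · right
      exact ⟨∅, by simp, by simpa using hU⟩
    obtain ⟨X, F, hXU, hFX, hFc, hX, hXF, hno⟩ := key_on G t U hU
    rcases ih (U \ X) with ⟨S, hS1, hS2, hS3⟩ | ⟨Z, hZc, hZ⟩
    · left
      have hd : ∀ a, Disjoint X (S a) := by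
        intro a
        rw [Set.disjoint_left]
        intro y h1 h2
        exact (hS1 a h2).2 h1
      refine ⟨Fin.cons X S, ?_, ?_, ?_⟩
      · intro a
        refine Fin.cases ?_ (fun a => ?_) a
        · exact hXU
        · exact (hS1 a).trans Set.sdiff_subset
      · intro a b
        refine Fin.cases ?_ (fun a => ?_) a <;> refine Fin.cases ?_ (fun b => ?_) b
        · intro h; exact absurd rfl h
        · intro _; simpa using hd b
        · intro _; simpa using (hd a).symm
        · intro h
          have : a ≠ b := fun h' => h (by rw [h'])
          simpa using hS2 this
      · intro a
        refine Fin.cases ?_ (fun a => ?_) a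
        · exact hX
        · exact hS3 a
    · right
      refine ⟨F ∪ Z, ?_, ?_⟩
      · have := Set.ncard_union_le F Z
        rw [Nat.mul_succ]
        omega
      · have h := PW.union hXF hZ (by
            rw [Set.disjoint_left]
            intro y h1 h2
            exact h2.1.2 h1.1) (fun u hu w hw => hno u hu w hw.1)
        apply h.mono
        rintro y ⟨hy1, hy2⟩
        by_cases hyX : y ∈ X
        · exact Or.inl ⟨hyX, fun h => hy2 (Or.inl h)⟩
        · exact Or.inr ⟨⟨hy1, hyX⟩, fun h => hy2 (Or.inr h)⟩

end PWPack

/-- For every `t` there is a constant `c = c(t)` such that every graph `G` either contains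
`k` vertex-disjoint subgraphs each of pathwidth at least `t + 1`, or has a vertex set `X`
of size at most `c·k` with `G - X` of pathwidth at most `t`. -/
theorem pathwidth_packing_or_transversal (t : ℕ) :
    ∃ c : ℕ, ∀ (V : Type) [Fintype V] (G : SimpleGraph V) (k : ℕ),
      (∃ S : Fin k → Set V, (Pairwise fun a b => Disjoint (S a) (S b)) ∧
        ∀ a, t + 1 ≤ pathwidth (G.induce (S a))) ∨
      (∃ X : Set V, X.ncard ≤ c * k ∧ pathwidth (G.induce Xᶜ) ≤ t) := by
  refine ⟨4 ^ (t + 1) + 1, ?_⟩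
  intro V _ G k
  rcases PWPack.main_on G t k Set.univ with ⟨S, -, h1, h2⟩ | ⟨X, h1, h2⟩
  · left
    refine ⟨S, h1, fun a => ?_⟩
    have := h2 a
    rw [← PWPack.pathwidth_le_iff] at this
    omega
  · right
    refine ⟨X, h1, ?_⟩
    rw [PWPack.pathwidth_le_iff, Set.compl_eq_univ_diff]
    exact h2
end

section
/- Let ℱ be a set of q ≥ 1 graphs, each with at most r connected components, and let t ≥ 1. Then for every graph G of pathwidth strictly less than t, the minimum size of an ℱ-transversal of G is at most 2qrt times the maximum size of an ℱ-packing in G. -/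
open SimpleGraph Set

/-- A model of `H` in `G` inside the vertex set `S`. -/
def IsModelIn {V W : Type*} (G : SimpleGraph V) (H : SimpleGraph W) (S : Set V)
    (f : W → Set V) : Prop :=
  (∀ w, f w ⊆ S) ∧ (∀ w, (G.induce (f w)).Connected) ∧
  (Pairwise fun w w' => Disjoint (f w) (f w')) ∧
    ∀ ⦃w w'⦄, H.Adj w w' → ∃ a ∈ f w, ∃ b ∈ f w', G.Adj a b

/-- Inducing twice is inducing once. -/
def induceInduceIso {V : Type*} (G : SimpleGraph V) (S : Set V) (T : Set S) :
    (G.induce S).induce T ≃g G.induce (Subtype.val '' T) where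
  toFun x := ⟨x.1.1, ⟨x.1, x.2, rfl⟩⟩
  invFun x := ⟨⟨x.1, by obtain ⟨y, hy, h⟩ := x.2; rw [← h]; exact y.2⟩,
    by obtain ⟨x, y, hy, rfl⟩ := x; exact hy⟩
  left_inv x := rfl
  right_inv x := rfl
  map_rel_iff' := Iff.rfl

theorem hasMinor_induce_iff {V W : Type*} (G : SimpleGraph V) (H : SimpleGraph W) (S : Set V) :
    HasMinor (G.induce S) H ↔ ∃ f, IsModelIn G H S f := by
  constructor
  · rintro ⟨f, h1, h2, h3⟩
    refine ⟨fun w => Subtype.val '' f w, ?_, ?_, ?_, ?_⟩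
    · rintro w _ ⟨y, _, rfl⟩
      exact y.2
    · intro w
      exact (induceInduceIso G S (f w)).connected_iff.1 (h1 w)
    · intro w w' hw
      exact (Set.disjoint_image_iff Subtype.val_injective).2 (h2 hw)
    · intro w w' hw
      obtain ⟨a, ha, b, hb, hab⟩ := h3 hw
      exact ⟨a, ⟨a, ha, rfl⟩, b, ⟨b, hb, rfl⟩, hab⟩
  · rintro ⟨f, h0, h1, h2, h3⟩
    refine ⟨fun w => Subtype.val ⁻¹' f w, ?_, ?_, ?_⟩
    · intro w
      rw [(induceInduceIso G S _).connected_iff, Subtype.image_preimage_coe,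
        Set.inter_eq_right.2 (h0 w)]
      exact h1 w
    · intro w w' hw
      exact Disjoint.preimage _ (h2 hw)
    · intro w w' hw
      obtain ⟨a, ha, b, hb, hab⟩ := h3 hw
      exact ⟨⟨a, h0 _ ha⟩, ha, ⟨b, h0 _ hb⟩, hb, hab⟩

/-- Greedy selection of pairwise disjoint intervals from several families, or a small set of points
hitting one of the families. -/
theorem interval_select {K : Type*} [DecidableEq K] (I : K → Set (ℕ × ℕ)) (n : ℕ) :
    ∀ (D : Finset K) (p : ℕ), D.card = n →
      (∃ x : K → ℕ × ℕ, (∀ d ∈ D, x d ∈ I d ∧ p ≤ (x d).1) ∧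
        ∀ d ∈ D, ∀ e ∈ D, d ≠ e → (x d).2 < (x e).1 ∨ (x e).2 < (x d).1) ∨
      (∃ d ∈ D, ∃ P : Finset ℕ, P.card < D.card ∧
        ∀ y ∈ I d, p ≤ y.1 → ∃ c ∈ P, y.1 ≤ c ∧ c ≤ y.2) := by
  induction n with
  | zero =>
    intro D p hD
    rw [Finset.card_eq_zero] at hD
    subst hD
    exact Or.inl ⟨fun _ => (0, 0), by simp, by simp⟩
  | succ n ih =>
    intro D p hD
    have hne : D.Nonempty := by
      rw [← Finset.card_pos]; omega
    by_cases hex : ∃ b, ∃ d ∈ D, ∃ a, p ≤ a ∧ (a, b) ∈ I d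
    · classical
      obtain ⟨d, hd, a, hpa, hab⟩ := Nat.find_spec hex
      have hmin : ∀ b', (∃ d ∈ D, ∃ a, p ≤ a ∧ (a, b') ∈ I d) → Nat.find hex ≤ b' :=
        fun b' h => Nat.find_min' hex h
      generalize Nat.find hex = b at hab hmin
      have hc : (D.erase d).card = n := by rw [Finset.card_erase_of_mem hd]; omega
      rcases ih (D.erase d) (max p (b + 1)) hc with ⟨x, hx1, hx2⟩ | ⟨e, he, P, hP, hh⟩
      · left
        refine ⟨Function.update x d (a, b), ?_, ?_⟩
        · intro e he
          by_cases hed : e = d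
          · subst hed; simpa using ⟨hab, hpa⟩
          · have := hx1 e (Finset.mem_erase.2 ⟨hed, he⟩)
            rw [Function.update_of_ne hed]
            exact ⟨this.1, le_trans (le_max_left _ _) this.2⟩
        · intro e he e' he' hne
          by_cases hed : e = d
          · subst hed
            have := (hx1 e' (Finset.mem_erase.2 ⟨hne.symm, he'⟩)).2
            rw [Function.update_self, Function.update_of_ne hne.symm]
            left
            have := le_trans (le_max_right _ _) this
            show b < _
            omega
          · by_cases hed' : e' = d
            · subst hed'
              have := (hx1 e (Finset.mem_erase.2 ⟨hed, he⟩)).2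
              rw [Function.update_self, Function.update_of_ne hed]
              right
              have := le_trans (le_max_right _ _) this
              show b < _
              omega
            · rw [Function.update_of_ne hed, Function.update_of_ne hed']
              exact hx2 e (Finset.mem_erase.2 ⟨hed, he⟩) e' (Finset.mem_erase.2 ⟨hed', he'⟩) hne
      · right
        refine ⟨e, Finset.mem_of_mem_erase he, insert b P, ?_, ?_⟩
        · have := Finset.card_insert_le b P
          omega
        · intro y hy hpy
          by_cases hyb : b + 1 ≤ y.1
          · obtain ⟨c, hc, h⟩ := hh y hy (max_le hpy hyb)
            exact ⟨c, Finset.mem_insert_of_mem hc, h⟩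
          · refine ⟨b, Finset.mem_insert_self _ _, by omega, ?_⟩
            exact hmin _ ⟨e, Finset.mem_of_mem_erase he, y.1, hpy, hy⟩
    · right
      obtain ⟨d, hd⟩ := hne
      refine ⟨d, hd, ∅, by simp [hD], ?_⟩
      intro y hy hpy
      exact absurd ⟨y.2, d, hd, y.1, hpy, hy⟩ hex

/-- A model of the component `c` of `H` in `G`. -/
def IsPartModel {V W : Type*} (G : SimpleGraph V) (H : SimpleGraph W)
    (c : H.ConnectedComponent) (f : W → Set V) : Prop :=
  (∀ w, H.connectedComponentMk w = c → (G.induce (f w)).Connected) ∧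
  (∀ w w', H.connectedComponentMk w = c → H.connectedComponentMk w' = c → w ≠ w' →
    Disjoint (f w) (f w')) ∧
  ∀ w w', H.connectedComponentMk w = c → H.Adj w w' → ∃ a ∈ f w, ∃ b ∈ f w', G.Adj a b

theorem reachable_prop {V : Type*} {G : SimpleGraph V} {Q : V → Prop}
    (h : ∀ u v, G.Adj u v → Q u → Q v) {u v : V} (hr : G.Reachable u v) (hu : Q u) : Q v := by
  obtain ⟨p⟩ := hr
  induction p with
  | nil => exact hu
  | cons hadj _ ih => exact ih (h _ _ hadj hu)

/-- The main step for a single graph `H`. -/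
theorem single_graph {V W : Type} [Fintype V] [Fintype W] (G : SimpleGraph V) (H : SimpleGraph W)
    (t p : ℕ) (B : Fin p → Set V) (hB : IsPathDecompOn G Set.univ p B)
    (hBt : ∀ i, (B i).ncard ≤ t) (k : ℕ) :
    (∃ S : Fin k → Set V, IsHPacking G H k S) ∨
    (∃ X : Set V, X.ncard ≤ Nat.card H.ConnectedComponent * k * t ∧
      ∀ f, ¬ IsModelIn G H Xᶜ f) := by
  classical
  obtain ⟨-, hcov, hedge, hint⟩ := hB
  have : Fintype H.ConnectedComponent := Fintype.ofFinite _
  let I : H.ConnectedComponent × Fin k → Set (ℕ × ℕ) := fun d =>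
    {y | ∃ f, IsPartModel G H d.1 f ∧ ∀ w, H.connectedComponentMk w = d.1 → ∀ v ∈ f w,
      ∀ i : Fin p, v ∈ B i → y.1 ≤ i ∧ (i : ℕ) ≤ y.2}
  rcases interval_select I _ Finset.univ 0 rfl with ⟨x, hx1, hx2⟩ | ⟨d, -, P, hP, hh⟩
  · left
    have hx : ∀ d, ∃ f, IsPartModel G H d.1 f ∧ ∀ w, H.connectedComponentMk w = d.1 → ∀ v ∈ f w,
      ∀ i : Fin p, v ∈ B i → (x d).1 ≤ i ∧ (i : ℕ) ≤ (x d).2 :=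
      fun d => (hx1 d (Finset.mem_univ _)).1
    choose f hf hfi using hx
    have key : ∀ d e w w' v, H.connectedComponentMk w = d.1 → H.connectedComponentMk w' = e.1 →
        v ∈ f d w → v ∈ f e w' → d = e := by
      intro d e w w' v hw hw' hv hv'
      by_contra hne
      obtain ⟨i, hi⟩ := hcov v (Set.mem_univ _)
      have h1 := hfi d w hw v hv i hi
      have h2 := hfi e w' hw' v hv' i hi
      have := hx2 d (Finset.mem_univ _) e (Finset.mem_univ _) hne
      omega
    refine ⟨fun m => ⋃ w, f (H.connectedComponentMk w, m) w, ?_, ?_⟩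
    · intro m m' hm
      rw [Set.disjoint_left]
      intro v hv hv'
      obtain ⟨w, hw⟩ := Set.mem_iUnion.1 hv
      obtain ⟨w', hw'⟩ := Set.mem_iUnion.1 hv'
      exact hm (congrArg Prod.snd (key _ _ w w' v rfl rfl hw hw'))
    · intro m
      rw [hasMinor_induce_iff]
      refine ⟨fun w => f (H.connectedComponentMk w, m) w, ?_, ?_, ?_, ?_⟩
      · intro w
        exact Set.subset_iUnion (fun w => f (H.connectedComponentMk w, m) w) w
      · intro w
        exact (hf (H.connectedComponentMk w, m)).1 w rfl
      · intro w w' hne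
        rw [Set.disjoint_left]
        intro v hv hv'
        have h := key _ _ w w' v rfl rfl hv hv'
        have h' : H.connectedComponentMk w = H.connectedComponentMk w' := congrArg Prod.fst h
        beta_reduce at hv hv'
        rw [← h] at hv'
        exact Set.disjoint_left.1 ((hf (H.connectedComponentMk w, m)).2.1 w w' rfl h'.symm hne)
          hv hv'
      · intro w w' hadj
        have h' : H.connectedComponentMk w = H.connectedComponentMk w' :=
          ConnectedComponent.sound hadj.reachable
        have := (hf (H.connectedComponentMk w, m)).2.2 w w' rfl hadj
        beta_reduce
        rw [← h']
        exact this
  · right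
    let C : ℕ → Set V := fun c => if h : c < p then B ⟨c, h⟩ else ∅
    have hC : ∀ c, (C c).ncard ≤ t := by
      intro c
      by_cases h : c < p
      · simp only [C, h, dif_pos]; exact hBt _
      · simp [C, h]
    refine ⟨⋃ c ∈ P, C c, ?_, ?_⟩
    · have h1 : (⋃ c ∈ P, C c).ncard ≤ ∑ c ∈ P, (C c).ncard := by
        exact Finset.set_ncard_biUnion_le P C
      have h2 : ∑ c ∈ P, (C c).ncard ≤ P.card * t := by
        simpa using Finset.sum_le_card_nsmul P _ t (fun c _ => hC c)
      refine h1.trans (h2.trans (Nat.mul_le_mul_right _ ?_))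
      rw [Finset.card_univ, Fintype.card_prod, Fintype.card_fin] at hP
      rw [Nat.card_eq_fintype_card]
      exact hP.le
    · rintro f ⟨f0, f1, f2, f3⟩
      have fX : ∀ w v, v ∈ f w → ∀ i : Fin p, (i : ℕ) ∈ P → v ∉ B i := by
        intro w v hv i hi hvi
        apply f0 w hv
        rw [Set.mem_iUnion₂]
        refine ⟨i, hi, ?_⟩
        simpa [C] using hvi
      have hpm : IsPartModel G H d.1 f :=
        ⟨fun w _ => f1 w, fun w w' _ _ h => f2 h, fun w w' _ h => f3 h⟩
      -- the bag indices met by the component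
      let Q : Finset (Fin p) := Finset.univ.filter fun i =>
        ∃ w, H.connectedComponentMk w = d.1 ∧ ∃ v ∈ f w, v ∈ B i
      have hQ : Q.Nonempty := by
        obtain ⟨w, hw⟩ := d.1.exists_rep
        obtain ⟨v⟩ := (f1 w).nonempty
        obtain ⟨i, hi⟩ := hcov v.1 (Set.mem_univ _)
        exact ⟨i, by simp only [Q, Finset.mem_filter, Finset.mem_univ, true_and]
                     exact ⟨w, hw, v, v.2, hi⟩⟩
      have hmem : (((Q.min' hQ : Fin p) : ℕ), ((Q.max' hQ : Fin p) : ℕ)) ∈ I d := by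
        refine ⟨f, hpm, ?_⟩
        intro w hw v hv i hi
        have hiQ : i ∈ Q := by
          simp only [Q, Finset.mem_filter, Finset.mem_univ, true_and]
          exact ⟨w, hw, v, hv, hi⟩
        exact ⟨Q.min'_le i hiQ, Q.le_max' i hiQ⟩
      obtain ⟨c, hcP, hc1, hc2⟩ := hh _ hmem (Nat.zero_le _)
      have hcp : c < p := lt_of_le_of_lt hc2 (Q.max' hQ).2
      have hmin := Q.min'_mem hQ
      have hmax := Q.max'_mem hQ
      generalize Q.min' hQ = i at hmin hc1
      generalize Q.max' hQ = j at hmax hc2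
      simp only [Q, Finset.mem_filter, Finset.mem_univ, true_and] at hmin hmax
      obtain ⟨w, hw, u, hu, hui⟩ := hmin
      obtain ⟨w', hw', v, hv, hvj⟩ := hmax
      let b : Fin p := ⟨c, hcp⟩
      have hb : ∀ w v, v ∈ f w → v ∉ B b := fun w v hv => fX w v hv b hcP
      -- being on the left side of `b`
      let L : V → Prop := fun v => ∃ i ≤ b, v ∈ B i
      have hL : ∀ u v, u ∉ B b → G.Adj u v → L u → L v := by
        rintro u v hu huv ⟨i, hib, hui⟩
        obtain ⟨l, hul, hvl⟩ := hedge huv (Set.mem_univ _) (Set.mem_univ _)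
        rcases le_total l b with h | h
        · exact ⟨l, h, hvl⟩
        · exact absurd (hint u i b l hib h hui hul) hu
      have hLw : ∀ w, ∀ u ∈ f w, ∀ v ∈ f w, L u → L v := by
        intro w u hu v hv h
        have hr := (f1 w).preconnected ⟨u, hu⟩ ⟨v, hv⟩
        exact reachable_prop (Q := fun z : f w => L z.1)
          (fun a a' haa h => hL a.1 a'.1 (hb w _ a.2) haa h) hr h
      have hr : H.Reachable w w' := ConnectedComponent.exact (hw.trans hw'.symm)
      have hall : ∀ z ∈ f w', L z := by
        refine reachable_prop (Q := fun w => ∀ z ∈ f w, L z) ?_ hr ?_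
        · intro w w' hadj h z hz
          obtain ⟨a, ha, a', ha', haa⟩ := f3 hadj
          exact hLw w' a' ha' z hz (hL a a' (hb w a ha) haa (h a ha))
        · intro z hz
          exact hLw w u hu z hz ⟨i, hc1, hui⟩
      obtain ⟨i', hi', hvi'⟩ := hall v hv
      exact hb w' v hv (hint v i' b j hi' hc2 hvi' hvj)

/-- If `F` is a set of `q ≥ 1` graphs each with at most `r` components, `t ≥ 1`, and `G`
has pathwidth strictly less than `t`, then `τ_F(G) ≤ 2qrt · ν_F(G)`. -/
theorem transversal_of_bounded_pathwidth {ι : Type} [Fintype ι] {W : ι → Type}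
    [∀ i, Fintype (W i)] (F : ∀ i, SimpleGraph (W i)) (q r t : ℕ)
    (hq : Fintype.card ι = q) (hq1 : 1 ≤ q)
    (hr : ∀ i, Nat.card (F i).ConnectedComponent ≤ r) (ht : 1 ≤ t)
    (V : Type) [Fintype V] (G : SimpleGraph V) (hpw : pathwidth G < t) :
    tauF G F ≤ 2 * q * r * t * nuF G F := by
  classical
  by_cases hW : ∃ i, IsEmpty (W i)
  · obtain ⟨i, hi⟩ := hW
    have : {n | ∃ X : Set V, X.ncard = n ∧ ∀ i, ¬ HasMinor (G.induce Xᶜ) (F i)} = ∅ := by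
      rw [Set.eq_empty_iff_forall_notMem]
      rintro n ⟨X, -, h⟩
      exact h i ⟨fun _ => ∅, fun w => isEmptyElim w, fun w => isEmptyElim w,
        fun w => isEmptyElim w⟩
    have h0 : tauF G F = 0 := by
      unfold tauF; rw [this]; exact Nat.sInf_empty
    rw [h0]; exact Nat.zero_le _
  have hW' : ∀ i, Nonempty (W i) := fun i => by
    by_contra h
    exact hW ⟨i, not_nonempty_iff.1 h⟩
  -- a path decomposition
  have hne : {t | ∃ p, ∃ B : Fin p → Set V, IsPathDecompOn G Set.univ p B ∧
      ∀ i, (B i).ncard ≤ t + 1}.Nonempty := by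
    refine ⟨(Set.univ : Set V).ncard, 1, fun _ => Set.univ, ⟨?_, ?_, ?_, ?_⟩, ?_⟩
    · intro i; exact le_rfl
    · intro v _; exact ⟨0, Set.mem_univ _⟩
    · intro u v _ _ _; exact ⟨0, Set.mem_univ _, Set.mem_univ _⟩
    · intros; exact Set.mem_univ _
    · intro i; exact Nat.le_succ _
  obtain ⟨p, B, hB, hBt'⟩ := Nat.sInf_mem hne
  have hBt : ∀ i, (B i).ncard ≤ t := fun i => by
    have h1 := hBt' i
    unfold pathwidth at hpw
    omega
  -- packings are bounded
  have hbdd : BddAbove {k | ∃ S : Fin k → Set V, IsFPacking G F k S} := by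
    refine ⟨Fintype.card V, ?_⟩
    rintro k ⟨S, hS1, hS2⟩
    have hS : ∀ a, ∃ v, v ∈ S a := by
      intro a
      obtain ⟨i, f, hf, -⟩ := hS2 a
      obtain ⟨w⟩ := hW' i
      obtain ⟨v⟩ := (hf w).nonempty
      exact ⟨v.1.1, v.1.2⟩
    choose g hg using hS
    have hinj : Function.Injective g := by
      intro a b hab
      by_contra hne
      exact Set.disjoint_left.1 (hS1 hne) (hg a) (hab ▸ hg b)
    simpa using Fintype.card_le_of_injective g hinj
  have hle : ∀ k, (∃ S : Fin k → Set V, IsFPacking G F k S) → k ≤ nuF G F :=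
    fun k h => le_csSup hbdd h
  have main : ∀ i, ∃ X : Set V, X.ncard ≤ 2 * r * t * nuF G F ∧
      ∀ f, ¬ IsModelIn G (F i) Xᶜ f := by
    intro i
    by_cases hm : ∃ f, IsModelIn G (F i) Set.univ f
    · have h1 : 1 ≤ nuF G F := by
        refine hle 1 ⟨fun _ => Set.univ, ?_, ?_⟩
        · intro a b hab; exact absurd (Subsingleton.elim a b) hab
        · intro a; exact ⟨i, (hasMinor_induce_iff _ _ _).2 hm⟩
      rcases single_graph G (F i) t p B hB hBt (nuF G F + 1) with ⟨S, hS1, hS2⟩ | ⟨X, hX, hXf⟩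
      · have := hle (nuF G F + 1) ⟨S, hS1, fun a => ⟨i, hS2 a⟩⟩
        omega
      · refine ⟨X, hX.trans ?_, hXf⟩
        calc Nat.card (F i).ConnectedComponent * (nuF G F + 1) * t
            ≤ r * (2 * nuF G F) * t := by
              gcongr
              · exact hr i
              · omega
          _ = 2 * r * t * nuF G F := by ring
    · refine ⟨∅, by simp, ?_⟩
      intro f hf
      rw [Set.compl_empty] at hf
      exact hm ⟨f, hf⟩
  choose X hX hXf using main
  have h1 : tauF G F ≤ (⋃ i ∈ (Finset.univ : Finset ι), X i).ncard := by
    refine Nat.sInf_le ⟨_, rfl, ?_⟩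
    intro i hm
    obtain ⟨f, hf0, hf⟩ := (hasMinor_induce_iff _ _ _).1 hm
    refine hXf i f ⟨fun w => (hf0 w).trans ?_, hf⟩
    apply Set.compl_subset_compl.2
    intro v hv
    exact Set.mem_iUnion₂.2 ⟨i, Finset.mem_univ _, hv⟩
  refine h1.trans ((Finset.set_ncard_biUnion_le _ _).trans ?_)
  have h2 := Finset.sum_le_card_nsmul Finset.univ (fun i => (X i).ncard) _ (fun i _ => hX i)
  rw [Finset.card_univ, hq, smul_eq_mul] at h2
  refine h2.trans (le_of_eq ?_)
  ring
end

section
/- If (T, v) is a rooted tree on t vertices and (G, w) is a connected graph with a root vertex w and pathwidth at least 2t − 2, then (G, w) contains (T, v) as a rooted minor, i.e., there is a model of T in G whose branch set for v contains w. -/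
open SimpleGraph Set

/-- Vertices of the complete binary tree of height `h`: binary strings of length at most `h`. -/
def cbtVert (h : ℕ) : Type := {l : List Bool // l.length ≤ h}

/-- The complete binary tree of height `h`, with a vertex adjacent to its two children
obtained by prepending a bit. -/
def completeBinaryTree (h : ℕ) : SimpleGraph (cbtVert h) :=
  SimpleGraph.fromRel fun a b => ∃ x : Bool, b.1 = x :: a.1

/-- The root (empty string) of the complete binary tree of height `h`. -/
def cbtRoot (h : ℕ) : cbtVert h := ⟨[], Nat.zero_le h⟩

/-- `(H, rH)` is a rooted minor of `(G, rG)`: a minor model of `H` in `G` whose branch set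
for the root `rH` contains the root `rG`. -/
def HasRootedMinor {V W : Type*} (G : SimpleGraph V) (rG : V) (H : SimpleGraph W) (rH : W) :
    Prop :=
  ∃ f : W → Set V, rG ∈ f rH ∧
    (∀ w, ((G.induce (f w)).Connected)) ∧
    (Pairwise fun w w' => Disjoint (f w) (f w')) ∧
    ∀ ⦃w w'⦄, H.Adj w w' → ∃ a ∈ f w, ∃ b ∈ f w', G.Adj a b

/-- Vertex boundary of `X`. -/
def bd {V : Type} (G : SimpleGraph V) (X : Set V) : Set V := {x | x ∈ X ∧ ∃ y, y ∉ X ∧ G.Adj x y}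

/-- `X` is linked to `Y`: disjoint connected sets starting at the vertices of `X`, inside `Y`,
meeting `X` only in their start; those that start on the boundary of `X` reach the boundary
of `Y`. -/
def Linked {V : Type} (G : SimpleGraph V) (X Y : Set V) : Prop :=
  ∃ P : V → Set V,
    (∀ x ∈ X, x ∈ P x ∧ P x ⊆ Y ∧ (G.induce (P x)).Connected ∧ ∀ z ∈ P x, z ∈ X → z = x) ∧
    (∀ x ∈ X, ∀ x' ∈ X, ∀ z, z ∈ P x → z ∈ P x' → x = x') ∧
    (∀ x ∈ bd G X, ∃ z ∈ P x, z ∈ bd G Y)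

lemma conn_singleton {V : Type} (G : SimpleGraph V) (x : V) : (G.induce {x}).Connected := by
  rw [induce_singleton_eq_top]
  exact connected_top

lemma linked_refl {V : Type} (G : SimpleGraph V) {X Y : Set V} (h : X ⊆ Y)
    (hb : bd G X ⊆ bd G Y) : Linked G X Y := by
  refine ⟨fun x => {x}, ?_, ?_, ?_⟩
  · intro x hx
    refine ⟨rfl, by simpa using h hx, conn_singleton G x, by simp⟩
  · intro x _ x' _ z hz hz'
    simp at hz hz'
    rw [← hz, hz']
  · intro x hx
    exact ⟨x, rfl, hb hx⟩

lemma linked_trans {V : Type} (G : SimpleGraph V) {X Z Y : Set V} (hXZ : X ⊆ Z) (hZY : Z ⊆ Y)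
    (h1 : Linked G X Z) (h2 : Linked G Z Y) : Linked G X Y := by
  classical
  obtain ⟨P, hP, hPd, hPb⟩ := h1
  obtain ⟨Q, hQ, hQd, hQb⟩ := h2
  have he : ∀ x, ∃ e, x ∈ X → (e ∈ P x ∧ (x ∈ bd G X → e ∈ bd G Z)) := by
    intro x
    by_cases hx : x ∈ bd G X
    · obtain ⟨z, hz, hz'⟩ := hPb x hx
      exact ⟨z, fun _ => ⟨hz, fun _ => hz'⟩⟩
    · exact ⟨x, fun h => ⟨(hP x h).1, fun h => absurd h hx⟩⟩
  choose e he using he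
  have heZ : ∀ x ∈ X, e x ∈ Z := fun x hx => (hP x hx).2.1 (he x hx).1
  refine ⟨fun x => P x ∪ Q (e x), ?_, ?_, ?_⟩
  · intro x hx
    refine ⟨Or.inl (hP x hx).1, ?_, ?_, ?_⟩
    · exact union_subset ((hP x hx).2.1.trans hZY) (hQ _ (heZ x hx)).2.1
    · exact induce_union_connected (hP x hx).2.2.1.preconnected
        (hQ _ (heZ x hx)).2.2.1.preconnected ⟨e x, (he x hx).1, (hQ _ (heZ x hx)).1⟩
    · rintro z (hz | hz) hzX
      · exact (hP x hx).2.2.2 z hz hzX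
      · have := (hQ _ (heZ x hx)).2.2.2 z hz (hXZ hzX)
        exact (hP x hx).2.2.2 z (this ▸ (he x hx).1) hzX
  · have key : ∀ x ∈ X, ∀ x' ∈ X, ∀ z, z ∈ P x → z ∈ Q (e x') → x = x' := by
      intro x hx x' hx' z hz hz'
      have h := (hQ _ (heZ x' hx')).2.2.2 z hz' ((hP x hx).2.1 hz)
      exact hPd x hx x' hx' z hz (h ▸ (he x' hx').1)
    rintro x hx x' hx' z (hz | hz) (hz' | hz')
    · exact hPd x hx x' hx' z hz hz'
    · exact key x hx x' hx' z hz hz'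
    · exact (key x' hx' x hx z hz' hz).symm
    · have h := hQd _ (heZ x hx) _ (heZ x' hx') z hz hz'
      exact hPd x hx x' hx' (e x) (he x hx).1 (h ▸ (he x' hx').1)
  · intro x hx
    obtain ⟨z, hz, hz'⟩ := hQb _ ((he x hx.1).2 hx)
    exact ⟨z, Or.inr hz, hz'⟩

lemma bd_insert_subset {V : Type} (G : SimpleGraph V) (X : Set V) (u : V) :
    bd G (insert u X) ⊆ insert u (bd G X) := by
  rintro x ⟨hx, y, hy, hxy⟩
  rcases hx with rfl | hx
  · exact Or.inl rfl
  · exact Or.inr ⟨hx, y, fun h => hy (Or.inr h), hxy⟩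

lemma menger {V : Type} [Fintype V] (k : ℕ) : ∀ (G : SimpleGraph V) (X Y : Set V), X ⊆ Y →
    G.edgeSet.ncard + (Y \ X).ncard ≤ k →
    (∀ Z, X ⊆ Z → Z ⊆ Y → (bd G X).ncard ≤ (bd G Z).ncard) → Linked G X Y := by
  classical
  induction k with
  | zero =>
    intro G X Y hXY hk _
    have h0 : (Y \ X).ncard = 0 := by omega
    rw [Set.ncard_eq_zero] at h0
    have : X = Y := hXY.antisymm (sdiff_eq_empty.1 h0)
    subst this
    exact linked_refl G hXY subset_rfl
  | succ k ih =>
    intro G X Y hXY hk hmin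
    by_cases hedge : ∃ a ∈ X, ∃ u ∈ Y, u ∉ X ∧ G.Adj a u
    swap
    · push Not at hedge
      apply linked_refl G hXY
      rintro x ⟨hx, y, hy, hxy⟩
      exact ⟨hXY hx, y, fun hyY => hedge x hx y hyY hy hxy, hxy⟩
    obtain ⟨a, ha, u, huY, huX, hau⟩ := hedge
    by_cases hZ : ∃ Z, X ⊂ Z ∧ Z ⊂ Y ∧ (bd G Z).ncard = (bd G X).ncard
    · obtain ⟨Z, hXZ, hZY, hc⟩ := hZ
      have c1 : (Z \ X).ncard < (Y \ X).ncard := by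
        apply Set.ncard_lt_ncard _ (Set.toFinite _)
        obtain ⟨y, hy, hyZ⟩ := exists_of_ssubset hZY
        exact ⟨sdiff_subset_sdiff_left hZY.1, fun h => hyZ (h ⟨hy, fun h => hyZ (hXZ.1 h)⟩).1⟩
      have c2 : (Y \ Z).ncard < (Y \ X).ncard := by
        apply Set.ncard_lt_ncard _ (Set.toFinite _)
        obtain ⟨y, hy, hyX⟩ := exists_of_ssubset hXZ
        exact ⟨sdiff_subset_sdiff_right hXZ.1, fun h => (h ⟨hZY.1 hy, hyX⟩).2 hy⟩
      apply linked_trans G hXZ.1 hZY.1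
      · exact ih G X Z hXZ.1 (by omega) fun W h1 h2 => hmin W h1 (h2.trans hZY.1)
      · exact ih G Z Y hZY.1 (by omega) fun W h1 h2 => hc ▸ hmin W (hXZ.1.trans h1) h2
    by_cases hoth : ∃ y, y ∉ X ∧ y ≠ u ∧ G.Adj a y
    · -- delete the edge `au`
      obtain ⟨y, hyX, hyu, hay⟩ := hoth
      set G' := G.deleteEdges {s(a, u)} with hG'
      have hle : G' ≤ G := G.deleteEdges_le _
      have hadj : ∀ p q, G'.Adj p q ↔ G.Adj p q ∧ ¬ (p = a ∧ q = u ∨ p = u ∧ q = a) := by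
        intro p q
        rw [hG', deleteEdges_adj]
        simp
      have hbX : bd G' X = bd G X := by
        ext x
        constructor
        · rintro ⟨hx, z, hz, hxz⟩
          exact ⟨hx, z, hz, hle hxz⟩
        · rintro ⟨hx, z, hz, hxz⟩
          by_cases hxa : x = a
          · subst hxa
            refine ⟨hx, y, hyX, (hadj _ _).2 ⟨hay, ?_⟩⟩
            rintro (⟨_, h⟩ | ⟨h, _⟩)
            · exact hyu h
            · exact huX (h ▸ hx)
          · refine ⟨hx, z, hz, (hadj _ _).2 ⟨hxz, ?_⟩⟩
            rintro (⟨h, _⟩ | ⟨h, _⟩)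
            · exact hxa h
            · exact huX (h ▸ hx)
      have hbY : bd G' Y = bd G Y := by
        ext x
        constructor
        · rintro ⟨hx, z, hz, hxz⟩
          exact ⟨hx, z, hz, hle hxz⟩
        · rintro ⟨hx, z, hz, hxz⟩
          refine ⟨hx, z, hz, (hadj _ _).2 ⟨hxz, ?_⟩⟩
          rintro (⟨_, h⟩ | ⟨_, h⟩)
          · exact hz (h ▸ huY)
          · exact hz (h ▸ hXY ha)
      have hbZ : ∀ Z, X ⊆ Z → bd G Z ⊆ insert a (bd G' Z) := by
        rintro Z hXZ x ⟨hx, z, hz, hxz⟩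
        by_cases hxa : x = a
        · exact Or.inl hxa
        · refine Or.inr ⟨hx, z, hz, (hadj _ _).2 ⟨hxz, ?_⟩⟩
          rintro (⟨h, _⟩ | ⟨_, h⟩)
          · exact hxa h
          · exact hz (h ▸ hXZ ha)
      have hcard : G'.edgeSet.ncard < G.edgeSet.ncard := by
        apply Set.ncard_lt_ncard _ (Set.toFinite _)
        refine ⟨edgeSet_mono hle, fun h => ?_⟩
        have : s(a, u) ∈ G'.edgeSet := h hau
        rw [mem_edgeSet, hadj] at this
        exact this.2 (Or.inl ⟨rfl, rfl⟩)
      obtain ⟨P, hP, hPd, hPb⟩ := ih G' X Y hXY (by omega) (by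
        intro Z h1 h2
        rw [hbX]
        by_cases hZX : Z = X
        · rw [hZX, hbX]
        by_cases hZY : Z = Y
        · rw [hZY, hbY]
          exact hmin Y hXY subset_rfl
        have h3 := hmin Z h1 h2
        have h4 : (bd G Z).ncard ≠ (bd G X).ncard := fun h =>
          hZ ⟨Z, h1.ssubset_of_ne (Ne.symm hZX), h2.ssubset_of_ne hZY, h⟩
        have h5 := Set.ncard_le_ncard (hbZ Z h1) (Set.toFinite _)
        have h6 := Set.ncard_insert_le a (bd G' Z)
        omega)
      rw [hbX, hbY] at hPb
      refine ⟨P, fun x hx => ?_, hPd, hPb⟩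
      obtain ⟨p1, p2, p3, p4⟩ := hP x hx
      exact ⟨p1, p2, p3.mono (fun _ _ h => hle h), p4⟩
    · push Not at hoth
      have hXu : X ⊆ insert u X := subset_insert _ _
      have huXY : insert u X ⊆ Y := insert_subset huY hXY
      have haX : a ∈ bd G X := ⟨ha, u, huX, hau⟩
      have hub : u ∉ bd G X \ {a} := fun h => huX h.1.1
      have hsub : bd G (insert u X) ⊆ insert u (bd G X \ {a}) := by
        intro x hx
        rcases bd_insert_subset G X u hx with h | h
        · exact Or.inl h
        · refine Or.inr ⟨h, ?_⟩
          rintro rfl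
          obtain ⟨_, y, hy, hxy⟩ := hx
          exact (fun h' => hy (Or.inl h')) (by_contra fun hne =>
            hoth y (fun h' => hy (Or.inr h')) hne hxy)
      have hcard : (insert u (bd G X \ {a})).ncard = (bd G X).ncard := by
        rw [Set.ncard_insert_of_notMem hub (Set.toFinite _),
          Set.ncard_sdiff_singleton_add_one haX (Set.toFinite _)]
      have heq : bd G (insert u X) = insert u (bd G X \ {a}) :=
        Set.eq_of_subset_of_ncard_le hsub (hcard ▸ hmin _ hXu huXY) (Set.toFinite _)
      have c2 : (Y \ insert u X).ncard < (Y \ X).ncard := by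
        apply Set.ncard_lt_ncard _ (Set.toFinite _)
        exact ⟨sdiff_subset_sdiff_right hXu, fun h => (h ⟨huY, huX⟩).2 (Or.inl rfl)⟩
      apply linked_trans G hXu huXY
      · refine ⟨fun x => if x = a then {a, u} else {x}, ?_, ?_, ?_⟩
        · intro x hx
          by_cases hxa : x = a
          · subst hxa
            beta_reduce
            rw [if_pos rfl]
            refine ⟨Or.inl rfl, ?_, induce_pair_connected_of_adj hau, ?_⟩
            · rintro z (rfl | rfl)
              · exact Or.inr hx
              · exact Or.inl rfl
            · rintro z (rfl | rfl) hz
              · rfl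
              · exact absurd hz huX
          · beta_reduce
            rw [if_neg hxa]
            refine ⟨rfl, ?_, conn_singleton G x, fun z hz _ => hz⟩
            rintro z rfl
            exact Or.inr hx
        · intro x hx x' hx' z hz hz'
          have : ∀ x ∈ X, z ∈ (if x = a then {a, u} else {x} : Set V) →
              z = x ∨ (z = u ∧ x = a) := by
            intro x hx hz
            split_ifs at hz with h
            · rcases hz with rfl | rfl
              · exact Or.inl h.symm
              · exact Or.inr ⟨rfl, h⟩
            · exact Or.inl hz
          rcases this x hx hz with h | h <;> rcases this x' hx' hz' with h' | h'
          · rw [← h, h']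
          · exact absurd (h'.1 ▸ h ▸ hx) huX
          · exact absurd (h.1 ▸ h' ▸ hx') huX
          · rw [h.2, h'.2]
        · intro x hx
          by_cases hxa : x = a
          · refine ⟨u, by simp [hxa], ?_⟩
            rw [heq]
            exact Or.inl rfl
          · refine ⟨x, by simp [hxa], ?_⟩
            rw [heq]
            exact Or.inr ⟨hx, hxa⟩
      · refine ih G _ Y huXY (by omega) fun W h1 h2 => ?_
        rw [heq, hcard]
        exact hmin W (hXu.trans h1) h2

/-- `G[X]` has a path decomposition with bags of size at most `N` whose last bag contains the
boundary of `X`. -/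
def Good {V : Type} (G : SimpleGraph V) (N : ℕ) (X : Set V) : Prop :=
  ∃ (p : ℕ) (B : ℕ → Set V),
    (∀ i ≤ p, B i ⊆ X) ∧
    (∀ v ∈ X, ∃ i ≤ p, v ∈ B i) ∧
    (∀ u v, G.Adj u v → u ∈ X → v ∈ X → ∃ i ≤ p, u ∈ B i ∧ v ∈ B i) ∧
    (∀ v i j l, i ≤ j → j ≤ l → l ≤ p → v ∈ B i → v ∈ B l → v ∈ B j) ∧
    (∀ i ≤ p, (B i).ncard ≤ N) ∧ bd G X ⊆ B p

lemma good_empty {V : Type} (G : SimpleGraph V) (N : ℕ) : Good G N ∅ := by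
  refine ⟨0, fun _ => ∅, ?_, ?_, ?_, ?_, ?_, ?_⟩ <;> simp [bd]

lemma good_insert {V : Type} [Fintype V] (G : SimpleGraph V) (N : ℕ) (X : Set V) (y : V)
    (hy : y ∉ X) (hX : Good G N X) (hN : (bd G X).ncard + 1 ≤ N) : Good G N (insert y X) := by
  obtain ⟨p, B, h1, h2, h3, h4, h5, h6⟩ := hX
  have hbX : bd G X ⊆ X := fun x hx => hx.1
  have hlt : ∀ i ≤ p, (if i ≤ p then B i else insert y (bd G X)) = B i := fun i hi => if_pos hi
  have hlast : (if p + 1 ≤ p then B (p + 1) else insert y (bd G X)) = insert y (bd G X) :=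
    if_neg (by omega)
  refine ⟨p + 1, fun i => if i ≤ p then B i else insert y (bd G X), ?_, ?_, ?_, ?_, ?_, ?_⟩
  · intro i _
    dsimp only
    split_ifs with h
    · exact (h1 i h).trans (subset_insert _ _)
    · exact insert_subset_insert hbX
  · rintro v (rfl | hv)
    · refine ⟨p + 1, le_rfl, ?_⟩
      dsimp only
      rw [hlast]
      exact Or.inl rfl
    · obtain ⟨i, hi, hvi⟩ := h2 v hv
      refine ⟨i, by omega, ?_⟩
      dsimp only
      rwa [hlt i hi]
  · have hly : ∀ v ∈ X, G.Adj v y → v ∈ insert y (bd G X) := fun v hv ha =>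
      Or.inr ⟨hv, y, hy, ha⟩
    rintro u v huv (rfl | hu) (rfl | hv)
    · exact absurd huv (G.irrefl)
    · refine ⟨p + 1, le_rfl, ?_⟩
      dsimp only
      rw [hlast]
      exact ⟨Or.inl rfl, hly v hv huv.symm⟩
    · refine ⟨p + 1, le_rfl, ?_⟩
      dsimp only
      rw [hlast]
      exact ⟨hly u hu huv, Or.inl rfl⟩
    · obtain ⟨i, hi, hvi⟩ := h3 u v huv hu hv
      refine ⟨i, by omega, ?_⟩
      dsimp only
      rwa [hlt i hi]
  · intro v i j l hij hjl hl hvi hvl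
    dsimp only at *
    by_cases hlp : l ≤ p
    · rw [hlt l hlp] at hvl
      rw [hlt i (by omega)] at hvi
      rw [hlt j (by omega)]
      exact h4 v i j l hij hjl hlp hvi hvl
    · rw [if_neg hlp] at hvl
      by_cases hjp : j ≤ p
      · rw [hlt i (by omega)] at hvi
        rw [hlt j hjp]
        have hvX : v ∈ X := h1 i (by omega) hvi
        rcases hvl with rfl | hvl
        · exact absurd hvX hy
        · exact h4 v i j p hij hjp le_rfl hvi (h6 hvl)
      · rw [if_neg hjp]
        exact hvl
  · intro i _
    dsimp only
    split_ifs with h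
    · exact h5 i h
    · exact (Set.ncard_insert_le _ _).trans hN
  · dsimp only
    rw [hlast]
    exact bd_insert_subset G X y

lemma conn_side {V : Type} (G : SimpleGraph V) (P : Set V) (hP : (G.induce P).Connected)
    (S : V → Prop) (hS : ∀ a ∈ P, ∀ b ∈ P, G.Adj a b → S a → S b) (a b : V) (ha : a ∈ P)
    (hb : b ∈ P) (h : S a) : S b := by
  obtain ⟨q⟩ := hP.preconnected ⟨a, ha⟩ ⟨b, hb⟩
  have : ∀ (x y : P) (_ : (G.induce P).Walk x y), S x → S y := by
    intro x y q
    induction q with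
    | nil => exact id
    | cons hadj _ ih => exact fun hx => ih (hS _ (Subtype.prop _) _ (Subtype.prop _) hadj hx)
  exact this _ _ q h

lemma good_of_linked {V : Type} [Fintype V] (G : SimpleGraph V) (N : ℕ) (X Y : Set V)
    (hXY : X ⊆ Y) (hY : Good G N Y) (hL : Linked G X Y) : Good G N X := by
  classical
  obtain ⟨p, B, h1, h2, h3, h4, h5, h6⟩ := hY
  obtain ⟨P, hP, hPd, hPb⟩ := hL
  have hin : ∀ i, ∀ v ∈ X, v ∈ B i → v ∈ {v | v ∈ X ∧ ∃ z ∈ P v, z ∈ B i} := fun i v hv hvi =>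
    ⟨hv, v, (hP v hv).1, hvi⟩
  refine ⟨p, fun i => {v | v ∈ X ∧ ∃ z ∈ P v, z ∈ B i}, ?_, ?_, ?_, ?_, ?_, ?_⟩
  · intro i _ v hv
    exact hv.1
  · intro v hv
    obtain ⟨i, hi, hvi⟩ := h2 v (hXY hv)
    exact ⟨i, hi, hin i v hv hvi⟩
  · intro u v huv hu hv
    obtain ⟨i, hi, hui, hvi⟩ := h3 u v huv (hXY hu) (hXY hv)
    exact ⟨i, hi, hin i u hu hui, hin i v hv hvi⟩
  · rintro v i j l hij hjl hl ⟨hv, a, ha, hai⟩ ⟨_, b, hb, hbl⟩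
    refine ⟨hv, ?_⟩
    by_contra hno
    push Not at hno
    have key := conn_side G (P v) (hP v hv).2.2.1 (fun x => ∀ k ≤ p, x ∈ B k → k < j) (by
      intro x hx y hy hxy hSx k hk hyk
      obtain ⟨m, hm, hxm, hym⟩ := h3 x y hxy ((hP v hv).2.1 hx) ((hP v hv).2.1 hy)
      have hmj := hSx m hm hxm
      by_contra hkj
      exact hno y hy (h4 y m j k hmj.le (by omega) hk hym hyk)) a b ha hb (by
      intro k hk hak
      by_contra hkj
      exact hno a ha (h4 a i j k hij (by omega) hk hai hak))
    have := key l hl hbl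
    omega
  · intro i hi
    refine le_trans ?_ (h5 i hi)
    have hg : ∀ v, ∃ z, (v ∈ X ∧ ∃ z ∈ P v, z ∈ B i) → (z ∈ P v ∧ z ∈ B i) := by
      intro v
      by_cases h : (v ∈ X ∧ ∃ z ∈ P v, z ∈ B i)
      · obtain ⟨z, hz⟩ := h.2
        exact ⟨z, fun _ => hz⟩
      · exact ⟨v, fun h' => absurd h' h⟩
    choose g hg using hg
    apply Set.ncard_le_ncard_of_injOn g (fun v hv => (hg v hv).2) _ (Set.toFinite _)
    intro v hv v' hv' hvv
    exact hPd v hv.1 v' hv'.1 (g v) (hg v hv).1 (hvv ▸ (hg v' hv').1)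
  · intro x hx
    obtain ⟨z, hz, hzb⟩ := hPb x hx
    exact ⟨hx.1, z, hz, h6 hzb⟩

lemma not_good_univ {V : Type} [Fintype V] [Nonempty V] (G : SimpleGraph V) (N : ℕ)
    (h : N ≤ pathwidth G) : ¬ Good G N univ := by
  rintro ⟨p, B, h1, h2, h3, h4, h5, h6⟩
  obtain ⟨w⟩ := ‹Nonempty V›
  obtain ⟨i, hi, hw⟩ := h2 w trivial
  have hpos : 0 < (B i).ncard := (Set.ncard_pos (Set.toFinite _)).2 ⟨w, hw⟩
  have hN := h5 i hi
  have : pathwidth G ≤ N - 1 := by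
    apply Nat.sInf_le
    refine ⟨p + 1, fun i => B i, ⟨fun i => subset_univ _, ?_, ?_, ?_⟩, ?_⟩
    · intro v hv
      obtain ⟨i, hi, hvi⟩ := h2 v hv
      exact ⟨⟨i, by omega⟩, hvi⟩
    · intro u v huv hu hv
      obtain ⟨i, hi, hvi⟩ := h3 u v huv hu hv
      exact ⟨⟨i, by omega⟩, hvi⟩
    · intro v i j l hij hjl hvi hvl
      exact h4 v i j l hij hjl (by omega) hvi hvl
    · intro i
      have := h5 i (by omega)
      change (B i).ncard ≤ _
      omega
  omega

/-- A partial model, defined on the vertices in `S`; `E u p` says that `p` is the parent of `u`. -/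
structure PreModel {U V : Type} (G : SimpleGraph V) (E : U → U → Prop) (S : Set U)
    (f : U → Set V) : Prop where
  closed : ∀ u ∈ S, ∀ p, E u p → p ∈ S
  conn : ∀ u ∈ S, (G.induce (f u)).Connected
  disj : ∀ u ∈ S, ∀ u' ∈ S, ∀ z, z ∈ f u → z ∈ f u' → u = u'
  edge : ∀ u ∈ S, ∀ p ∈ S, E u p → ∃ a ∈ f u, ∃ b ∈ f p, G.Adj a b

lemma premodel_extend {U V : Type} (G : SimpleGraph V) (E : U → U → Prop)
    (r : U → ℕ) (hr : ∀ u p, E u p → r p < r u) (huniq : ∀ u p p', E u p → E u p' → p = p')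
    (S : Set U) (f : U → Set V) (hM : PreModel G E S f) (X : Set V)
    (hfX : ∀ u ∈ S, f u ⊆ X) (hhit : ∀ u ∈ S, ∃ x ∈ f u, x ∈ bd G X)
    (hX : X ≠ univ) (hS : S ≠ univ) :
    ∃ u, u ∉ S ∧ ∃ y, y ∉ X ∧ ∃ f' : U → Set V, f' u = {y} ∧ (∀ q ∈ S, f' q = f q) ∧
      PreModel G E (insert u S) f' := by
  classical
  obtain ⟨u, huS, hmin⟩ : ∃ u, u ∉ S ∧ ∀ q, q ∉ S → r u ≤ r q := by
    have hne : (Sᶜ).Nonempty := nonempty_compl.2 hS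
    obtain ⟨u, hu, h⟩ := (measure r).wf.has_min Sᶜ hne
    exact ⟨u, hu, fun q hq => not_lt.1 (h q hq)⟩
  have hpar : ∀ p, E u p → p ∈ S := fun p hp => by
    by_contra h
    have := hmin p h
    have := hr u p hp
    omega
  obtain ⟨y, hyX, hy⟩ : ∃ y, y ∉ X ∧ ∀ p, E u p → ∃ b ∈ f p, G.Adj y b := by
    by_cases h : ∃ p, E u p
    · obtain ⟨p, hp⟩ := h
      obtain ⟨x, hx, _, y, hy, hxy⟩ := hhit p (hpar p hp)
      refine ⟨y, hy, fun p' hp' => ?_⟩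
      rw [huniq u p' p hp' hp]
      exact ⟨x, hx, hxy.symm⟩
    · obtain ⟨y, hy⟩ := (ne_univ_iff_exists_notMem X).1 hX
      exact ⟨y, hy, fun p hp => absurd ⟨p, hp⟩ h⟩
  have hfu : Function.update f u {y} u = {y} := Function.update_self ..
  have hfq : ∀ q ∈ S, Function.update f u {y} q = f q := fun q hq =>
    Function.update_of_ne (fun h : q = u => huS (h ▸ hq)) _ _
  refine ⟨u, huS, y, hyX, Function.update f u {y}, hfu, hfq, ?_, ?_, ?_, ?_⟩
  · rintro q (rfl | hq) p hp
    · exact Or.inr (hpar p hp)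
    · exact Or.inr (hM.closed q hq p hp)
  · rintro q (rfl | hq)
    · rw [hfu]
      exact conn_singleton G y
    · rw [hfq q hq]
      exact hM.conn q hq
  · rintro q (rfl | hq) q' (rfl | hq') z hz hz'
    · rfl
    · rw [hfu] at hz
      rw [hfq q' hq'] at hz'
      exact absurd (hfX q' hq' hz') (hz ▸ hyX)
    · rw [hfu] at hz'
      rw [hfq q hq] at hz
      exact absurd (hfX q hq hz) (hz' ▸ hyX)
    · rw [hfq q hq] at hz
      rw [hfq q' hq'] at hz'
      exact hM.disj q hq q' hq' z hz hz'
  · rintro q (rfl | hq) p hpS hp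
    · rw [hfu, hfq p (hpar p hp)]
      obtain ⟨b, hb, hyb⟩ := hy p hp
      exact ⟨y, rfl, b, hb, hyb⟩
    · have hpS := hM.closed q hq p hp
      rw [hfq q hq, hfq p hpS]
      exact hM.edge q hq p hpS hp

lemma conn_biUnion {V : Type} (G : SimpleGraph V) (A : Set V) (P : V → Set V)
    (hA : (G.induce A).Connected) (hP : ∀ x ∈ A, x ∈ P x ∧ (G.induce (P x)).Connected) :
    (G.induce (⋃ x ∈ A, P x)).Connected := by
  obtain ⟨⟨u, hu⟩⟩ := hA.nonempty
  have hsub : A ⊆ ⋃ x ∈ A, P x := fun x hx => mem_biUnion hx (hP x hx).1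
  apply induce_connected_of_patches u (hsub hu)
  intro v hv
  obtain ⟨x, hx, hvx⟩ := mem_iUnion₂.1 hv
  refine ⟨A ∪ P x, union_subset hsub (subset_biUnion_of_mem hx), Or.inl hu, Or.inr hvx, ?_⟩
  exact (induce_union_connected hA.preconnected (hP x hx).2.preconnected
    ⟨x, hx, (hP x hx).1⟩).preconnected _ _

lemma exists_max_good {V : Type} [Fintype V] (G : SimpleGraph V) (N m : ℕ) (X : Set V)
    (hX : Good G N X) (hm : (bd G X).ncard ≤ m) :
    ∃ Y, X ⊆ Y ∧ Good G N Y ∧ (bd G Y).ncard ≤ m ∧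
      ∀ Z, Y ⊆ Z → Good G N Z → (bd G Z).ncard ≤ m → Z = Y := by
  obtain ⟨Y, hXY, hY⟩ := Finite.exists_le_maximal
    (p := fun Z : Set V => Good G N Z ∧ (bd G Z).ncard ≤ m) ⟨hX, hm⟩
  exact ⟨Y, hXY, hY.prop.1, hY.prop.2, fun Z h1 h2 h3 => (hY.le_of_ge ⟨h2, h3⟩ h1).antisymm h1⟩

lemma tree_states {U V : Type} [Fintype U] [Fintype V] (G : SimpleGraph V) (E : U → U → Prop)
    (r : U → ℕ) (hr : ∀ u p, E u p → r p < r u) (huniq : ∀ u p p', E u p → E u p' → p = p')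
    (N : ℕ) (hng : ¬ Good G N univ) (m : ℕ) : m ≤ N → m ≤ Fintype.card U →
    ∃ (S : Set U) (X : Set V) (f : U → Set V), S.ncard = m ∧ PreModel G E S f ∧
      (∀ u ∈ S, f u ⊆ X) ∧ (∀ u ∈ S, ∃ x ∈ f u, x ∈ bd G X) ∧ Good G N X ∧
      (bd G X).ncard = m ∧
      ∀ Z, X ⊆ Z → Good G N Z → (bd G Z).ncard ≤ m → Z = X := by
  classical
  induction m with
  | zero =>
    intro _ _
    obtain ⟨Y, _, h2, h3, h4⟩ := exists_max_good G N 0 ∅ (good_empty G N) (by simp [bd])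
    refine ⟨∅, Y, fun _ => ∅, by simp, ⟨by simp, by simp, by simp, by simp⟩, by simp, by simp,
      h2, by omega, h4⟩
  | succ m ih =>
    intro hmN hmU
    obtain ⟨S, X, f, hSm, hM, hfX, hhit, hX, hXm, hmax⟩ := ih (by omega) (by omega)
    have hXu : X ≠ univ := fun h => hng (h ▸ hX)
    have hSu : S ≠ univ := by
      rintro rfl
      rw [Set.ncard_univ, Nat.card_eq_fintype_card] at hSm
      omega
    obtain ⟨u, huS, y, hyX, f', hfu, hfq, hM'⟩ :=
      premodel_extend G E r hr huniq S f hM X hfX hhit hXu hSu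
    have hX' : Good G N (insert y X) := good_insert G N X y hyX hX (by omega)
    have hbig : ∀ Z, insert y X ⊆ Z → Good G N Z → m + 1 ≤ (bd G Z).ncard := by
      intro Z hZ hZg
      by_contra hlt
      have := hmax Z ((subset_insert _ _).trans hZ) hZg (by omega)
      exact hyX (this ▸ hZ (Or.inl rfl))
    have hcard : (insert y (bd G X)).ncard ≤ m + 1 := hXm ▸ Set.ncard_insert_le _ _
    have hbd : bd G (insert y X) = insert y (bd G X) :=
      Set.eq_of_subset_of_ncard_le (bd_insert_subset G X y)
        (hcard.trans (hbig _ subset_rfl hX')) (Set.toFinite _)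
    obtain ⟨Y, hXY, hY, hYm, hYmax⟩ := exists_max_good G N (m + 1) _ hX' (hbd ▸ hcard)
    have hbetween : ∀ Z, insert y X ⊆ Z → Z ⊆ Y → m + 1 ≤ (bd G Z).ncard := by
      intro Z0 h1 h2
      obtain ⟨Z, ⟨hZ1, hZ2⟩, hZmin⟩ := Set.exists_min_image
        {Z : Set V | insert y X ⊆ Z ∧ Z ⊆ Y} (fun Z => (bd G Z).ncard) (Set.toFinite _)
        ⟨Z0, h1, h2⟩
      refine le_trans ?_ (hZmin Z0 ⟨h1, h2⟩)
      apply hbig Z hZ1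
      apply good_of_linked G N Z Y hZ2 hY
      exact menger _ G Z Y hZ2 le_rfl fun W h3 h4 => hZmin W ⟨hZ1.trans h3, h4⟩
    obtain ⟨P, hP, hPd, hPb⟩ := menger _ G (insert y X) Y hXY le_rfl
      fun W h3 h4 => (hbd ▸ hcard).trans (hbetween W h3 h4)
    have hf'X : ∀ q ∈ insert u S, f' q ⊆ insert y X := by
      rintro q (rfl | hq)
      · rw [hfu]
        exact singleton_subset_iff.2 (Or.inl rfl)
      · rw [hfq q hq]
        exact (hfX q hq).trans (subset_insert _ _)
    have hsub : ∀ q ∈ insert u S, f' q ⊆ ⋃ x ∈ f' q, P x := fun q hq x hx =>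
      mem_biUnion hx (hP x (hf'X q hq hx)).1
    refine ⟨insert u S, Y, fun q => ⋃ x ∈ f' q, P x, ?_, ⟨hM'.closed, ?_, ?_, ?_⟩, ?_, ?_, hY, ?_,
      hYmax⟩
    · rw [Set.ncard_insert_of_notMem huS (Set.toFinite _), hSm]
    · intro q hq
      exact conn_biUnion G _ P (hM'.conn q hq) fun x hx =>
        ⟨(hP x (hf'X q hq hx)).1, (hP x (hf'X q hq hx)).2.2.1⟩
    · intro q hq q' hq' z hz hz'
      obtain ⟨x, hx, hzx⟩ := mem_iUnion₂.1 hz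
      obtain ⟨x', hx', hzx'⟩ := mem_iUnion₂.1 hz'
      have := hPd x (hf'X q hq hx) x' (hf'X q' hq' hx') z hzx hzx'
      exact hM'.disj q hq q' hq' x hx (this ▸ hx')
    · intro q hq p hp hE
      obtain ⟨a, ha, b, hb, hab⟩ := hM'.edge q hq p hp hE
      exact ⟨a, hsub q hq ha, b, hsub p hp hb, hab⟩
    · intro q hq
      exact iUnion₂_subset fun x hx => (hP x (hf'X q hq hx)).2.1
    · have : ∀ q ∈ insert u S, ∃ x ∈ f' q, x ∈ bd G (insert y X) := by
        rw [hbd]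
        rintro q (rfl | hq)
        · rw [hfu]
          exact ⟨y, rfl, Or.inl rfl⟩
        · rw [hfq q hq]
          obtain ⟨x, hx, hx'⟩ := hhit q hq
          exact ⟨x, hx, Or.inr hx'⟩
      intro q hq
      obtain ⟨x, hx, hx'⟩ := this q hq
      obtain ⟨z, hz, hz'⟩ := hPb x hx'
      exact ⟨z, mem_biUnion hx hz, hz'⟩
    · exact le_antisymm hYm (hbig Y hXY hY)

/-- The path-width theorem, for a tree given by its parent relation. -/
lemma tree_model {U V : Type} [Fintype U] [Nonempty U] [Fintype V] (G : SimpleGraph V)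
    (E : U → U → Prop)
    (r : U → ℕ) (hr : ∀ u p, E u p → r p < r u) (huniq : ∀ u p p', E u p → E u p' → p = p')
    (N : ℕ) (hng : ¬ Good G N univ) (hcard : Fintype.card U ≤ N + 1) :
    ∃ f : U → Set V, PreModel G E univ f := by
  have hpos : 0 < Fintype.card U := Fintype.card_pos
  obtain ⟨S, X, f, hSm, hM, hfX, hhit, hX, hXm, hmax⟩ :=
    tree_states G E r hr huniq N hng (Fintype.card U - 1) (by omega) (by omega)
  have hXu : X ≠ univ := fun h => hng (h ▸ hX)
  have hSu : S ≠ univ := by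
    rintro rfl
    rw [Set.ncard_univ, Nat.card_eq_fintype_card] at hSm
    omega
  obtain ⟨u, huS, y, hyX, f', hfu, hfq, hM'⟩ :=
    premodel_extend G E r hr huniq S f hM X hfX hhit hXu hSu
  have : insert u S = univ := by
    apply Set.eq_of_subset_of_ncard_le (subset_univ _) _ (Set.toFinite _)
    rw [Set.ncard_univ, Set.ncard_insert_of_notMem huS (Set.toFinite _), hSm, Nat.card_eq_fintype_card]
    omega
  exact ⟨f', this ▸ hM'⟩

lemma conn_adj_union {V : Type} (G : SimpleGraph V) (A B : Set V)
    (hA : (G.induce A).Connected) (hB : (G.induce B).Connected) (a b : V) (ha : a ∈ A)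
    (hb : b ∈ B) (hab : G.Adj a b) : (G.induce (A ∪ B)).Connected := by
  have h1 : (G.induce (A ∪ {a, b})).Connected :=
    induce_union_connected hA.preconnected (induce_pair_connected_of_adj hab).preconnected
      ⟨a, ha, Or.inl rfl⟩
  have h2 := induce_union_connected h1.preconnected hB.preconnected
    ⟨b, Or.inr (Or.inr rfl), hb⟩
  have : A ∪ {a, b} ∪ B = A ∪ B := by
    ext x
    constructor
    · rintro ((h | rfl | rfl) | h)
      · exact Or.inl h
      · exact Or.inl ha
      · exact Or.inr hb
      · exact Or.inr h
    · rintro (h | h)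
      · exact Or.inl (Or.inl h)
      · exact Or.inr h
  rwa [this] at h2

/-- A connected set from `w` that meets `M` in a single vertex. -/
lemma exists_path_to {V : Type} (G : SimpleGraph V) (M : Set V) (w m : V) (q : G.Walk w m)
    (hm : m ∈ M) : ∃ P : Set V, w ∈ P ∧ (G.induce P).Connected ∧
      ∃ z ∈ M, z ∈ P ∧ ∀ x ∈ P, x ∈ M → x = z := by
  induction q with
  | nil => exact ⟨{_}, rfl, conn_singleton G _, _, hm, rfl, fun x hx _ => hx⟩
  | @cons w w' m hadj q ih =>
    by_cases hw : w ∈ M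
    · exact ⟨{w}, rfl, conn_singleton G _, w, hw, rfl, fun x hx _ => hx⟩
    · obtain ⟨P, hP1, hP2, z, hz, hzP, hz'⟩ := ih hm
      refine ⟨{w} ∪ P, Or.inl rfl, conn_adj_union G _ _ (conn_singleton G w) hP2 w w' rfl hP1 hadj,
        z, hz, Or.inr hzP, ?_⟩
      rintro x (rfl | hx) hxM
      · exact absurd hxM hw
      · exact hz' x hx hxM

lemma tree_parent_unique {W : Type} (T : SimpleGraph W) (hT : T.IsTree) (v x y y' : W)
    (h : T.Adj x y) (hd : T.dist v y < T.dist v x) (h' : T.Adj x y')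
    (hd' : T.dist v y' < T.dist v x) : y = y' := by
  have key : ∀ y, T.Adj x y → T.dist v y < T.dist v x →
      ∃ p : T.Walk v x, p.IsPath ∧ p.penultimate = y := by
    intro y h hd
    obtain ⟨p, hp⟩ := hT.connected.exists_walk_length_eq_dist v y
    have := hT.dist_eq_dist_add_one_of_adj v h
    refine ⟨p.concat h.symm, Walk.isPath_of_length_eq_dist _ ?_, Walk.penultimate_concat _ _⟩
    rw [Walk.length_concat]
    omega
  obtain ⟨p, hp, hpy⟩ := key y h hd
  obtain ⟨p', hp', hpy'⟩ := key y' h' hd'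
  have : (⟨p, hp⟩ : T.Path v x) = ⟨p', hp'⟩ := (hT.isAcyclic.subsingleton_path v x).elim _ _
  have : p = p' := congrArg Subtype.val this
  rw [← hpy, ← hpy', this]

lemma tree_parent_exists {W : Type} (T : SimpleGraph W) (hT : T.IsTree) (v x : W) (hx : x ≠ v) :
    ∃ y, T.Adj x y ∧ T.dist v y < T.dist v x := by
  obtain ⟨p, hp⟩ := hT.connected.exists_walk_length_eq_dist x v
  cases p with
  | nil => exact absurd rfl hx
  | @cons _ y _ h q =>
    refine ⟨y, h, ?_⟩
    rw [dist_comm, dist_comm (u := v), ← hp, Walk.length_cons]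
    exact Nat.lt_succ_of_le (dist_le q)

/-- If `(T, v)` is a rooted tree on `t` vertices and `(G, w)` is a connected rooted graph
with pathwidth at least `2t - 2`, then `(G, w)` contains `(T, v)` as a rooted minor. -/
theorem rooted_tree_minor_of_pathwidth {V W : Type} [Fintype V] [Fintype W]
    (T : SimpleGraph W) (hT : T.IsTree) (v : W) (t : ℕ) (ht : Fintype.card W = t)
    (G : SimpleGraph V) (w : V) (hG : G.Connected)
    (hpw : 2 * t - 2 ≤ pathwidth G) :
    HasRootedMinor G w T v := by
  classical
  have : Nonempty V := ⟨w⟩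
  have hng := not_good_univ G (2 * t - 2) hpw
  -- two copies of `T`, glued at the root `(v, true)`
  let U := {p : W × Bool // p ≠ (v, false)}
  let root : U := ⟨(v, true), by simp⟩
  have : Nonempty U := ⟨root⟩
  let E : U → U → Prop := fun p q =>
    T.Adj p.1.1 q.1.1 ∧ T.dist v q.1.1 < T.dist v p.1.1 ∧ (q.1.2 = p.1.2 ∨ q.1.1 = v)
  have hroot : ∀ q : U, q.1.1 = v → q = root := by
    rintro ⟨⟨x, b⟩, hq⟩ h
    change x = v at h
    subst h
    cases b
    · exact absurd rfl hq
    · rfl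
  have hcard : Fintype.card U ≤ 2 * t - 2 + 1 := by
    have h1 : Fintype.card U = Fintype.card (W × Bool) - 1 := by
      simp [U, Fintype.card_subtype_compl]
    rw [Fintype.card_prod, Fintype.card_bool, ht] at h1
    have : 0 < t := ht ▸ Fintype.card_pos_iff.2 ⟨v⟩
    omega
  obtain ⟨f, hf⟩ := tree_model G E (fun p => T.dist v p.1.1) (fun u p h => h.2.1) (by
    intro u p p' h h'
    have hx := tree_parent_unique T hT v _ _ _ h.1 h.2.1 h'.1 h'.2.1
    by_cases hv : p.1.1 = v
    · rw [hroot p hv, hroot p' (hx ▸ hv)]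
    · have hv' : p'.1.1 ≠ v := hx ▸ hv
      apply Subtype.ext
      apply Prod.ext hx
      rw [h.2.2.resolve_right hv, h'.2.2.resolve_right hv']) (2 * t - 2) hng hcard
  have hdisj : ∀ u u' z, z ∈ f u → z ∈ f u' → u = u' := fun u u' z =>
    hf.disj u trivial u' trivial z
  obtain ⟨⟨m, hm⟩⟩ := (hf.conn root trivial).nonempty
  obtain ⟨q⟩ := hG.preconnected w m
  obtain ⟨P, hwP, hPc, z, hzM, hzP, hz⟩ :=
    exists_path_to G (⋃ u, f u) w m q (mem_iUnion.2 ⟨root, hm⟩)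
  obtain ⟨u, hzu⟩ := mem_iUnion.1 hzM
  -- the copy that is absorbed into the branch set of the root
  let A : Set U := {p | p.1.2 = u.1.2 ∨ p.1.1 = v}
  let C : Set V := ⋃ p ∈ A, f p
  have hrootA : root ∈ A := Or.inr rfl
  have hpatch : ∀ n, ∀ p ∈ A, T.dist v p.1.1 = n → ∃ s ⊆ C, f root ⊆ s ∧ f p ⊆ s ∧
      (G.induce s).Connected := by
    intro n
    induction n using Nat.strong_induction_on with
    | _ n ih =>
      intro p hp hn
      by_cases hpv : p.1.1 = v
      · rw [hroot p hpv]
        exact ⟨f root, subset_biUnion_of_mem hrootA, subset_rfl, subset_rfl, hf.conn _ trivial⟩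
      · obtain ⟨y, hy, hyd⟩ := tree_parent_exists T hT v _ hpv
        obtain ⟨p', hp'A, hp'y, hE⟩ : ∃ p' ∈ A, p'.1.1 = y ∧ E p p' := by
          by_cases hyv : y = v
          · rw [hyv] at hy hyd
            exact ⟨root, hrootA, hyv.symm, hy, hyd, Or.inr rfl⟩
          · refine ⟨⟨(y, p.1.2), fun h => hyv (congrArg Prod.fst h)⟩, Or.inl ?_, rfl, hy, hyd,
              Or.inl rfl⟩
            exact hp.resolve_right hpv
        obtain ⟨s, hs1, hs2, hs3, hs4⟩ := ih (T.dist v y) (hn ▸ hyd) p' hp'A (by rw [hp'y])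
        obtain ⟨a, ha, b, hb, hab⟩ := hf.edge p trivial p' trivial hE
        exact ⟨s ∪ f p, union_subset hs1 (subset_biUnion_of_mem hp),
          hs2.trans subset_union_left, subset_union_right,
          conn_adj_union G _ _ hs4 (hf.conn p trivial) b a (hs3 hb) ha hab.symm⟩
  have hCc : (G.induce C).Connected := by
    apply induce_connected_of_patches m (mem_biUnion hrootA hm)
    intro x hx
    obtain ⟨p, hp, hxp⟩ := mem_iUnion₂.1 hx
    obtain ⟨s, hs1, hs2, hs3, hs4⟩ := hpatch _ p hp rfl
    exact ⟨s, hs1, hs2 hm, hs3 hxp, hs4.preconnected _ _⟩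
  have huA : u ∈ A := Or.inl rfl
  have hRc : (G.induce (P ∪ C)).Connected :=
    induce_union_connected hPc.preconnected hCc.preconnected ⟨z, hzP, mem_biUnion huA hzu⟩
  let other : ∀ x, x ≠ v → U := fun x hx => ⟨(x, !u.1.2), fun h => hx (congrArg Prod.fst h)⟩
  let F : W → Set V := fun x => if hx : x = v then P ∪ C else f (other x hx)
  have hFv : F v = P ∪ C := dif_pos rfl
  have hFx : ∀ x (hx : x ≠ v), F x = f (other x hx) := fun x hx => dif_neg hx
  have hotherA : ∀ x (hx : x ≠ v), other x hx ∉ A := by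
    rintro x hx (h | h)
    · change (!u.1.2) = u.1.2 at h
      simp at h
    · exact hx h
  have hdv : ∀ x (hx : x ≠ v) a, a ∈ P ∪ C → a ∈ f (other x hx) → False := by
    rintro x hx a (ha | ha) ha'
    · have := hz a ha (mem_iUnion.2 ⟨_, ha'⟩)
      subst this
      exact hotherA x hx (hdisj _ _ _ ha' hzu ▸ huA)
    · obtain ⟨p, hp, hap⟩ := mem_iUnion₂.1 ha
      exact hotherA x hx (hdisj _ _ _ ha' hap ▸ hp)
  have hedge : ∀ x y, T.Adj x y → T.dist v y < T.dist v x →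
      ∃ a ∈ F x, ∃ b ∈ F y, G.Adj a b := by
    intro x y hxy hd
    have hx : x ≠ v := by
      rintro rfl
      simp at hd
    rw [hFx x hx]
    by_cases hy : y = v
    · subst hy
      obtain ⟨a, ha, b, hb, hab⟩ := hf.edge (other x hx) trivial root trivial
        ⟨hxy, hd, Or.inr rfl⟩
      rw [hFv]
      exact ⟨a, ha, b, Or.inr (mem_biUnion hrootA hb), hab⟩
    · obtain ⟨a, ha, b, hb, hab⟩ := hf.edge (other x hx) trivial (other y hy) trivial
        ⟨hxy, hd, Or.inl rfl⟩
      rw [hFx y hy]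
      exact ⟨a, ha, b, hb, hab⟩
  refine ⟨F, ?_, ?_, ?_, ?_⟩
  · rw [hFv]
    exact Or.inl hwP
  · intro x
    by_cases hx : x = v
    · rw [hx, hFv]
      exact hRc
    · rw [hFx x hx]
      exact hf.conn _ trivial
  · intro x y hxy
    rw [Set.disjoint_left]
    intro a ha hb
    by_cases hx : x = v
    · have hy : y ≠ v := fun h => hxy (hx.trans h.symm)
      rw [hx, hFv] at ha
      rw [hFx y hy] at hb
      exact hdv y hy a ha hb
    · rw [hFx x hx] at ha
      by_cases hy : y = v
      · rw [hy, hFv] at hb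
        exact hdv x hx a hb ha
      · rw [hFx y hy] at hb
        have := hdisj _ _ a ha hb
        exact hxy (congrArg (fun p : U => p.1.1) this)
  · intro x y hxy
    rcases lt_or_gt_of_ne (hT.dist_ne_of_adj v hxy) with h | h
    · obtain ⟨a, ha, b, hb, hab⟩ := hedge y x hxy.symm h
      exact ⟨b, hb, a, ha, hab.symm⟩
    · exact hedge x y hxy h
end
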